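/- Let α, β be nonzero real numbers, 0 < s < 1, C ≥ 1 and c > 0. There exist a constant ε = ε(s) > 0 and an integer N = N(α, β, s, C, c) such that the following holds: for every bivariate real random variable (X, Y) that is jointly (s₁, s₂, C)-Frostman with range contained in [-c, c]², where 0 ≤ s₁, s₂ ≤ 1 and s₁ + s₂ ≥ 2s, one has max{ (Hₙ(X) + Hₙ(Y))/2, Hₙ(X + Y), Hₙ(αX² + βY²) } ≥ n(s + ε) for all integers n > N. -/

import Mathlib

open MeasureTheory ProbabilityTheory Real

/-- The dyadic discretization map `D_n(x) = 2^{-n} ⌊2^n x⌋`. -/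
noncomputable def Dn (n : ℕ) (x : ℝ) : ℝ := (⌊(2 : ℝ) ^ n * x⌋ : ℝ) / (2 : ℝ) ^ n

/-- Shannon entropy (base 2) of the discrete random variable `f` under `P`. -/
noncomputable def entOf {Ω : Type*} [MeasurableSpace Ω] {S : Type*}
    (P : Measure Ω) (f : Ω → S) : ℝ :=
  ∑' s : S, -((P (f ⁻¹' {s})).toReal * Real.logb 2 (P (f ⁻¹' {s})).toReal)

/-- `H_n(X)`: entropy of `D_n(X)`. -/
noncomputable def Hn {Ω : Type*} [MeasurableSpace Ω] (P : Measure Ω) (n : ℕ) (X : Ω → ℝ) : ℝ :=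
  entOf P (fun ω => Dn n (X ω))

/-- `H_n(X,Y)`: entropy of `(D_n(X), D_n(Y))`. -/
noncomputable def Hn2 {Ω : Type*} [MeasurableSpace Ω] (P : Measure Ω) (n : ℕ)
    (X Y : Ω → ℝ) : ℝ :=
  entOf P (fun ω => (Dn n (X ω), Dn n (Y ω)))

/-- `(X,Y)` is jointly `(s₁,s₂,C)`-Frostman. -/
def JointlyFrostman {Ω : Type*} [MeasurableSpace Ω] (P : Measure Ω) (X Y : Ω → ℝ)
    (s₁ s₂ C : ℝ) : Prop :=
  ∀ (x y r₁ r₂ : ℝ), 0 < r₁ → 0 < r₂ →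
    (P (X ⁻¹' Metric.ball x r₁ ∩ Y ⁻¹' Metric.ball y r₂)).toReal ≤ C * r₁ ^ s₁ * r₂ ^ s₂

namespace EntT
open Finset

structure IsPr {Ω : Type} [Fintype Ω] (p : Ω → ℝ) : Prop where
  nonneg : ∀ ω, 0 ≤ p ω
  sum_one : ∑ ω, p ω = 1

open Classical in
/-- probability that `f = v` -/
noncomputable def pr {Ω S : Type} [Fintype Ω] (p : Ω → ℝ) (f : Ω → S) (v : S) : ℝ :=
  ∑ ω, if f ω = v then p ω else 0

/-- base two Shannon entropy -/
noncomputable def H {Ω S : Type} [Fintype Ω] (p : Ω → ℝ) (f : Ω → S) : ℝ :=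
  ∑ ω, p ω * (-(Real.logb 2 (pr p f (f ω))))

section basic
variable {Ω S T R : Type} [Fintype Ω] {p : Ω → ℝ}

lemma pr_nonneg (hp : IsPr p) (f : Ω → S) (v : S) : 0 ≤ pr p f v := by
  unfold pr
  apply Finset.sum_nonneg
  intro ω _
  split_ifs
  · exact hp.nonneg ω
  · exact le_rfl

lemma pr_le_one (hp : IsPr p) (f : Ω → S) (v : S) : pr p f v ≤ 1 := by
  unfold pr
  rw [← hp.sum_one]
  apply Finset.sum_le_sum
  intro ω _
  split_ifs
  · exact le_rfl
  · exact hp.nonneg ω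

lemma le_pr (hp : IsPr p) (f : Ω → S) (ω : Ω) : p ω ≤ pr p f (f ω) := by
  classical
  unfold pr
  have := Finset.single_le_sum (f := fun ω' => if f ω' = f ω then p ω' else 0)
    (s := univ) (fun i _ => by split_ifs; exacts [hp.nonneg i, le_rfl]) (Finset.mem_univ ω)
  simpa using this

lemma pr_pos (hp : IsPr p) (f : Ω → S) {ω : Ω} (h : p ω ≠ 0) : 0 < pr p f (f ω) :=
  lt_of_lt_of_le (lt_of_le_of_ne (hp.nonneg ω) (Ne.symm h)) (le_pr hp f ω)

lemma H_nonneg (hp : IsPr p) (f : Ω → S) : 0 ≤ H p f := by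
  unfold H
  apply Finset.sum_nonneg
  intro ω _
  apply mul_nonneg (hp.nonneg ω)
  rw [neg_nonneg]
  exact Real.logb_nonpos (by norm_num) (pr_nonneg hp f _) (pr_le_one hp f _)

/-- Gibbs-type inequality. -/
lemma gibbs (hp : IsPr p) (r : Ω → ℝ) (hr : ∀ ω, p ω ≠ 0 → 0 < r ω)
    (hsum : ∑ ω, p ω * r ω ≤ 1) : ∑ ω, p ω * Real.logb 2 (r ω) ≤ 0 := by
  have h2 : (0:ℝ) < Real.log 2 := Real.log_pos (by norm_num)
  have : ∑ ω, p ω * Real.logb 2 (r ω) ≤ ∑ ω, (p ω * r ω - p ω) / Real.log 2 := by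
    apply Finset.sum_le_sum
    intro ω _
    by_cases h : p ω = 0
    · simp [h]
    · have := Real.log_le_sub_one_of_pos (hr ω h)
      rw [Real.logb, ← mul_div_assoc]
      apply div_le_div_of_nonneg_right _ h2.le
      nlinarith [hp.nonneg ω]
  refine this.trans ?_
  rw [← Finset.sum_div, Finset.sum_sub_distrib, hp.sum_one]
  apply div_nonpos_of_nonpos_of_nonneg _ h2.le
  linarith

open Classical in
/-- sum over the values taken by `f` on the support -/
lemma sum_div_pr [DecidableEq S] (hp : IsPr p) (f : Ω → S) (φ : S → ℝ) :
    ∑ ω, p ω * (φ (f ω) / pr p f (f ω)) =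
      ∑ v ∈ (univ.filter (fun ω => p ω ≠ 0)).image f, φ v := by
  have h1 : ∑ ω, p ω * (φ (f ω) / pr p f (f ω)) =
      ∑ ω ∈ univ.filter (fun ω => p ω ≠ 0), p ω * (φ (f ω) / pr p f (f ω)) := by
    rw [Finset.sum_filter]
    apply Finset.sum_congr rfl
    intro ω _
    by_cases h : p ω = 0 <;> simp [h]
  rw [h1, ← Finset.sum_fiberwise_of_maps_to
    (t := (univ.filter (fun ω => p ω ≠ 0)).image f) (g := f)
    (fun i hi => Finset.mem_image_of_mem f hi)]
  apply Finset.sum_congr rfl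
  intro v hv
  obtain ⟨ω0, hω0, rfl⟩ := Finset.mem_image.mp hv
  have hpos : 0 < pr p f (f ω0) := pr_pos hp f (by simpa using hω0)
  have : ∀ ω ∈ (univ.filter (fun ω => p ω ≠ 0)).filter (fun ω => f ω = f ω0),
      p ω * (φ (f ω) / pr p f (f ω)) = p ω * (φ (f ω0) / pr p f (f ω0)) := by
    intro ω hω
    rw [(Finset.mem_filter.mp hω).2]
  rw [Finset.sum_congr rfl this, ← Finset.sum_mul]
  have h2 : ∑ ω ∈ (univ.filter (fun ω => p ω ≠ 0)).filter (fun ω => f ω = f ω0), p ω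
      = pr p f (f ω0) := by
    unfold pr
    rw [Finset.sum_filter, Finset.sum_filter]
    apply Finset.sum_congr rfl
    intro ω _
    by_cases h : p ω = 0 <;> simp [h]
  rw [h2]
  field_simp

open Classical in
lemma sum_comp [DecidableEq S] (f : Ω → S) (A : Finset S) (hA : ∀ ω, p ω ≠ 0 → f ω ∈ A) (φ : S → ℝ) :
    ∑ ω, p ω * φ (f ω) = ∑ v ∈ A, pr p f v * φ v := by
  unfold pr
  simp_rw [Finset.sum_mul]
  rw [Finset.sum_comm]
  apply Finset.sum_congr rfl
  intro ω _
  by_cases h : p ω = 0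
  · simp [h]
  · simp only [ite_mul, zero_mul]
    rw [Finset.sum_ite_eq]
    simp [hA ω h]

open Classical in
/-- refined fibre counting -/
lemma fiber_refined [DecidableEq S] (hp : IsPr p) (f : Ω → S) (g : Ω → T) (N : T → ℝ)
    (hN : ∀ ω, p ω ≠ 0 →
      (((univ.filter (fun ω' => p ω' ≠ 0 ∧ g ω' = g ω)).image f).card : ℝ) ≤ N (g ω)) :
    H p (fun ω => (f ω, g ω)) ≤ H p g + ∑ ω, p ω * Real.logb 2 (N (g ω)) := by
  set k : Ω → S × T := fun ω => (f ω, g ω) with hk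
  have hN0 : ∀ ω, p ω ≠ 0 → 0 < N (g ω) := by
    intro ω h
    refine lt_of_lt_of_le ?_ (hN ω h)
    rw [Nat.cast_pos, Finset.card_pos]
    exact ⟨f ω, Finset.mem_image.mpr ⟨ω, by simp [h], rfl⟩⟩
  have key := gibbs hp (fun ω => (pr p g (g ω) / N (g ω)) / pr p k (k ω)) (by
      intro ω h
      have := pr_pos hp g h
      have := pr_pos hp k h
      have := hN0 ω h
      positivity) (by
      have := sum_div_pr hp k (fun v => pr p g v.2 / N v.2)
      refine (le_of_eq this).trans ?_
      set A := univ.filter (fun ω => p ω ≠ 0) with hA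
      have hmap : ∀ v ∈ A.image k, v.2 ∈ A.image g := by
        intro v hv
        obtain ⟨ω, hω, rfl⟩ := Finset.mem_image.mp hv
        exact Finset.mem_image_of_mem g hω
      rw [← Finset.sum_fiberwise_of_maps_to hmap]
      have h1 : ∑ b ∈ A.image g, pr p g b = 1 := by
        have := sum_comp (p := p) g (A.image g)
          (fun ω h => Finset.mem_image_of_mem g (by simp [hA, h])) (fun _ => 1)
        simp only [mul_one] at this
        rw [← this, hp.sum_one]
      rw [← h1]
      apply Finset.sum_le_sum
      intro b hb
      obtain ⟨ω, hω, rfl⟩ := Finset.mem_image.mp hb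
      have hω' : p ω ≠ 0 := by simpa [hA] using hω
      have h3 : ∀ v ∈ (A.image k).filter (fun v => v.2 = g ω),
          pr p g v.2 / N v.2 = pr p g (g ω) / N (g ω) := by
        intro v hv
        rw [(Finset.mem_filter.mp hv).2]
      rw [Finset.sum_congr rfl h3, Finset.sum_const, nsmul_eq_mul]
      have hcard : (((A.image k).filter (fun v => v.2 = g ω)).card : ℝ) ≤ N (g ω) := by
        refine le_trans ?_ (hN ω hω')
        norm_cast
        apply Finset.card_le_card_of_injOn (fun v => v.1)
        · intro v hv
          obtain ⟨hv1, hv2⟩ := Finset.mem_filter.mp hv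
          obtain ⟨ω', hω'', rfl⟩ := Finset.mem_image.mp hv1
          simp only [hk] at hv2
          simp only [hk, Finset.coe_image, Set.mem_image, Finset.mem_coe]
          exact ⟨ω', by simp [hv2]; simpa [hA] using hω'', rfl⟩
        · intro v hv w hw hvw
          have e1 := (Finset.mem_filter.mp hv).2
          have e2 := (Finset.mem_filter.mp hw).2
          exact Prod.ext hvw (by rw [e1, e2])
      have := hN0 ω hω'
      rw [mul_div_assoc', div_le_iff₀ this, mul_comm]
      exact mul_le_mul_of_nonneg_left hcard (pr_nonneg hp g _))
  have e : ∑ ω, p ω * Real.logb 2 ((pr p g (g ω) / N (g ω)) / pr p k (k ω)) =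
      H p k - H p g - ∑ ω, p ω * Real.logb 2 (N (g ω)) := by
    unfold H
    rw [← Finset.sum_sub_distrib, ← Finset.sum_sub_distrib]
    apply Finset.sum_congr rfl
    intro ω _
    by_cases h : p ω = 0
    · simp [h]
    · rw [Real.logb_div (div_ne_zero (pr_pos hp g h).ne' (hN0 ω h).ne') (pr_pos hp k h).ne',
        Real.logb_div (pr_pos hp g h).ne' (hN0 ω h).ne']
      ring
  rw [e] at key
  linarith

open Classical in
lemma submod (hp : IsPr p) (f : Ω → S) (g : Ω → T) (h : Ω → R)
    (hf : ∀ ω ω', f ω = f ω' → h ω = h ω') (hg : ∀ ω ω', g ω = g ω' → h ω = h ω') :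
    H p (fun ω => (f ω, g ω)) + H p h ≤ H p f + H p g := by
  set k : Ω → S × T := fun ω => (f ω, g ω) with hk
  let ψ : Ω → Ω → ℝ := fun ω1 ω2 => if h ω1 = h ω2 then p ω1 * p ω2 / pr p h (h ω2) else 0
  have hψ0 : ∀ ω1 ω2, 0 ≤ ψ ω1 ω2 := by
    intro a b
    dsimp only [ψ]
    split_ifs
    · exact div_nonneg (mul_nonneg (hp.nonneg _) (hp.nonneg _)) (pr_nonneg hp h _)
    · exact le_rfl
  let φ : S × T → ℝ := fun v => ∑ ω1, ∑ ω2, if (f ω1, g ω2) = v then ψ ω1 ω2 else 0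
  have hφ : ∀ ω, p ω ≠ 0 → φ (k ω) = pr p f (f ω) * pr p g (g ω) / pr p h (h ω) := by
    intro ω hω
    simp only [φ, hk]
    rw [show pr p f (f ω) * pr p g (g ω) / pr p h (h ω) =
      pr p f (f ω) * (pr p g (g ω) / pr p h (h ω)) by ring]
    conv_rhs => rw [pr, Finset.sum_mul]
    apply Finset.sum_congr rfl
    intro ω1 _
    rw [pr, Finset.sum_div, Finset.mul_sum]
    apply Finset.sum_congr rfl
    intro ω2 _
    by_cases h1 : f ω1 = f ω <;> by_cases h2 : g ω2 = g ω
    · have e1 := hf _ _ h1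
      have e2 := hg _ _ h2
      simp only [h1, h2, ψ, e1, e2, if_true]
      ring
    all_goals simp [h1, h2]
  have key := gibbs hp (fun ω => φ (k ω) / pr p k (k ω)) (by
      intro ω hω
      rw [hφ ω hω]
      have := pr_pos hp f hω
      have := pr_pos hp g hω
      have := pr_pos hp h hω
      have := pr_pos hp k hω
      positivity) (by
      rw [sum_div_pr hp k φ]
      simp only [φ]
      rw [Finset.sum_comm]
      have : ∀ ω1 : Ω, ∑ v ∈ (univ.filter (fun ω => p ω ≠ 0)).image k,
          ∑ ω2, (if (f ω1, g ω2) = v then ψ ω1 ω2 else 0) ≤ ∑ ω2, ψ ω1 ω2 := by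
        intro ω1
        rw [Finset.sum_comm]
        apply Finset.sum_le_sum
        intro ω2 _
        rw [Finset.sum_ite_eq]
        split_ifs
        · exact le_rfl
        · exact hψ0 _ _
      refine (Finset.sum_le_sum (fun ω1 _ => this ω1)).trans ?_
      rw [Finset.sum_comm, ← hp.sum_one]
      apply Finset.sum_le_sum
      intro ω2 _
      have e : ∑ ω1, ψ ω1 ω2 = pr p h (h ω2) * (p ω2 / pr p h (h ω2)) := by
        simp only [ψ]
        conv_rhs => lhs; rw [pr]
        rw [Finset.sum_mul]
        apply Finset.sum_congr rfl
        intro ω1 _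
        split_ifs
        · ring
        · ring
      rw [e]
      by_cases h0 : p ω2 = 0
      · simp [h0]
      · have := pr_pos hp h h0
        apply le_of_eq
        field_simp)
  have e : ∑ ω, p ω * Real.logb 2 (φ (k ω) / pr p k (k ω)) =
      H p k + H p h - H p f - H p g := by
    unfold H
    rw [← Finset.sum_add_distrib, ← Finset.sum_sub_distrib, ← Finset.sum_sub_distrib]
    apply Finset.sum_congr rfl
    intro ω _
    by_cases h0 : p ω = 0
    · simp [h0]
    · have a1 := pr_pos hp f h0
      have a2 := pr_pos hp g h0
      have a3 := pr_pos hp h h0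
      have a4 := pr_pos hp k h0
      rw [hφ ω h0, Real.logb_div (by positivity) a4.ne', Real.logb_div (by positivity) a3.ne',
        Real.logb_mul a1.ne' a2.ne']
      ring
  rw [e] at key
  linarith

lemma H_mono (hp : IsPr p) (f : Ω → S) (g : Ω → T)
    (h : ∀ ω ω', p ω ≠ 0 → p ω' ≠ 0 → f ω = f ω' → g ω = g ω') : H p g ≤ H p f := by
  classical
  unfold H
  apply Finset.sum_le_sum
  intro ω _
  by_cases h0 : p ω = 0
  · simp [h0]
  apply mul_le_mul_of_nonneg_left _ (hp.nonneg ω)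
  rw [neg_le_neg_iff]
  apply Real.logb_le_logb_of_le (by norm_num) (pr_pos hp f h0)
  unfold pr
  apply Finset.sum_le_sum
  intro ω' _
  by_cases h1 : p ω' = 0
  · simp [h1]
  · by_cases h2 : f ω' = f ω
    · simp [h2, h _ _ h1 h0 h2]
    · simp only [h2, if_false]
      split_ifs
      · exact hp.nonneg _
      · exact le_rfl

lemma H_congr (hp : IsPr p) (f : Ω → S) (g : Ω → T)
    (h : ∀ ω ω', f ω = f ω' ↔ g ω = g ω') : H p f = H p g :=
  le_antisymm (H_mono hp g f (fun ω ω' _ _ => (h ω ω').2)) (H_mono hp f g (fun ω ω' _ _ => (h ω ω').1))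

lemma H_const (hp : IsPr p) (v : S) : H p (fun _ => v) = 0 := by
  unfold H
  have : pr p (fun _ => v) v = 1 := by simp [pr, hp.sum_one]
  simp [this]

lemma H_pair_le (hp : IsPr p) (f : Ω → S) (g : Ω → T) :
    H p (fun ω => (f ω, g ω)) ≤ H p f + H p g := by
  have := submod hp f g (fun _ => ()) (fun _ _ _ => rfl) (fun _ _ _ => rfl)
  rw [H_const hp] at this
  linarith

lemma H_fst_le (hp : IsPr p) (f : Ω → S) (g : Ω → T) :
    H p f ≤ H p (fun ω => (f ω, g ω)) := by
  apply H_mono hp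
  intro ω ω' _ _ h
  exact (Prod.ext_iff.mp h).1

/-- integer fibre bound -/
lemma H_int_pair (hp : IsPr p) (f : Ω → ℤ) (g : Ω → T) (d : ℝ) (hd : 0 ≤ d)
    (h : ∀ ω ω', p ω ≠ 0 → p ω' ≠ 0 → g ω = g ω' → |((f ω : ℤ):ℝ) - f ω'| ≤ d) :
    H p (fun ω => (f ω, g ω)) ≤ H p g + Real.logb 2 (2 * d + 1) := by
  classical
  have := fiber_refined hp f g (fun _ => 2 * d + 1) (by
    intro ω hω
    have hsub : (univ.filter (fun ω' => p ω' ≠ 0 ∧ g ω' = g ω)).image f ⊆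
        Finset.Icc (f ω - ⌊d⌋) (f ω + ⌊d⌋) := by
      intro v hv
      obtain ⟨ω', hω', rfl⟩ := Finset.mem_image.mp hv
      have h2 := (Finset.mem_filter.mp hω').2
      have h3 := h ω' ω h2.1 hω h2.2
      have h4 : |f ω' - f ω| ≤ ⌊d⌋ := by
        rw [Int.le_floor]
        push_cast
        exact h3
      rw [abs_le] at h4
      rw [Finset.mem_Icc]
      omega
    have hc := Finset.card_le_card hsub
    rw [Int.card_Icc] at hc
    have hfl : 0 ≤ ⌊d⌋ := Int.floor_nonneg.mpr hd
    have h5 : (((univ.filter (fun ω' => p ω' ≠ 0 ∧ g ω' = g ω)).image f).card : ℤ) ≤ 2 * ⌊d⌋ + 1 := by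
      omega
    have h6 : (((univ.filter (fun ω' => p ω' ≠ 0 ∧ g ω' = g ω)).image f).card : ℝ) ≤ 2 * (⌊d⌋:ℝ) + 1 := by
      exact_mod_cast h5
    have := Int.floor_le d
    linarith)
  rw [← Finset.sum_mul, hp.sum_one, one_mul] at this
  exact this

lemma H_int_le (hp : IsPr p) (f : Ω → ℤ) (g : Ω → T) (d : ℝ) (hd : 0 ≤ d)
    (h : ∀ ω ω', p ω ≠ 0 → p ω' ≠ 0 → g ω = g ω' → |((f ω : ℤ):ℝ) - f ω'| ≤ d) :
    H p f ≤ H p g + Real.logb 2 (2 * d + 1) :=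
  (H_fst_le hp f g).trans (H_int_pair hp f g d hd h)

/-- lower bound by the maximal atom -/
lemma H_ge_of_pr_le (hp : IsPr p) (f : Ω → S) (B : ℝ)
    (h : ∀ ω, p ω ≠ 0 → pr p f (f ω) ≤ B) : -Real.logb 2 B ≤ H p f := by
  unfold H
  have : -Real.logb 2 B = ∑ ω, p ω * (-Real.logb 2 B) := by
    rw [← Finset.sum_mul, hp.sum_one, one_mul]
  rw [this]
  apply Finset.sum_le_sum
  intro ω _
  by_cases h0 : p ω = 0
  · simp [h0]
  apply mul_le_mul_of_nonneg_left _ (hp.nonneg ω)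
  rw [neg_le_neg_iff]
  exact Real.logb_le_logb_of_le (by norm_num) (pr_pos hp f h0) (h ω h0)

/-- lower bound by the collision probability -/
lemma H_ge_of_collision (hp : IsPr p) (f : Ω → S) (B : ℝ) (hB : 0 < B)
    (h : ∑ ω, p ω * pr p f (f ω) ≤ B) : -Real.logb 2 B ≤ H p f := by
  have := gibbs hp (fun ω => pr p f (f ω) / B) (fun ω h0 => div_pos (pr_pos hp f h0) hB) (by
    have : ∑ ω, p ω * (pr p f (f ω) / B) = (∑ ω, p ω * pr p f (f ω)) / B := by
      rw [Finset.sum_div]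
      apply Finset.sum_congr rfl
      intros; ring
    rw [this, div_le_one hB]
    exact h)
  have e : ∑ ω, p ω * Real.logb 2 (pr p f (f ω) / B) = - H p f - Real.logb 2 B := by
    have : Real.logb 2 B = ∑ ω, p ω * (Real.logb 2 B) := by
      rw [← Finset.sum_mul, hp.sum_one, one_mul]
    rw [this]
    clear this
    unfold H
    rw [← Finset.sum_neg_distrib, ← Finset.sum_sub_distrib]
    apply Finset.sum_congr rfl
    intro ω _
    by_cases h0 : p ω = 0
    · simp [h0]
    · rw [Real.logb_div (pr_pos hp f h0).ne' hB.ne']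
      ring
  rw [e] at this
  linarith

end basic
end EntT

namespace EntT
open Finset

/-- product weights -/
def pm {Ω Ω' : Type} (p : Ω → ℝ) (q : Ω' → ℝ) : Ω × Ω' → ℝ := fun t => p t.1 * q t.2

/-- mixture weights -/
def mix {Ω T : Type} (p : T → ℝ) (q : T → Ω → ℝ) : T × Ω → ℝ := fun x => p x.1 * q x.1 x.2

open Classical in
/-- conditional weights -/
noncomputable def cond {Ω S : Type} [Fintype Ω] (p : Ω → ℝ) (g : Ω → S) (v : S) : Ω → ℝ :=
  fun ω => if g ω = v then p ω / pr p g v else 0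

/-- the map pushes the first law forward to the second one -/
def IsPush {Ω Ω' : Type} [Fintype Ω] (p : Ω → ℝ) (φ : Ω → Ω') (p' : Ω' → ℝ) : Prop :=
  ∀ ω', pr p φ ω' = p' ω'

section prod
variable {Ω Ω' Ω₁ Ω₂ Ω₃ S T R : Type} [Fintype Ω] [Fintype Ω'] [Fintype Ω₁] [Fintype Ω₂]
  [Fintype Ω₃] [Fintype T]
variable {p : Ω → ℝ} {q : Ω' → ℝ} {p₁ : Ω₁ → ℝ} {p₂ : Ω₂ → ℝ} {p₃ : Ω₃ → ℝ}

lemma pr_congr {f : Ω → S} {g : Ω → R} {v : S} {w : R} (h : ∀ ω, f ω = v ↔ g ω = w) :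
    pr p f v = pr p g w := by
  classical
  unfold pr
  apply Finset.sum_congr rfl
  intro ω _
  by_cases h1 : f ω = v
  · rw [if_pos h1, if_pos ((h ω).1 h1)]
  · rw [if_neg h1, if_neg (fun h2 => h1 ((h ω).2 h2))]

lemma H_push {φ : Ω → Ω'} (h : IsPush p φ q) (f : Ω' → S) :
    H p (fun ω => f (φ ω)) = H q f := by
  classical
  have e : ∀ v, pr p (fun ω => f (φ ω)) v = pr q f v := by
    intro v
    have := sum_comp (p := p) φ univ (fun _ _ => mem_univ _) (fun w => if f w = v then (1:ℝ) else 0)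
    simp only [mul_ite, mul_one, mul_zero] at this
    unfold pr
    rw [this]
    apply Finset.sum_congr rfl
    intro w _
    rw [h w]
  unfold H
  simp_rw [e]
  rw [sum_comp (p := p) φ univ (fun _ _ => mem_univ _) (fun w => -(Real.logb 2 (pr q f (f w))))]
  apply Finset.sum_congr rfl
  intro w _
  rw [h w]

lemma IsPr.pm (hp : IsPr p) (hq : IsPr q) : IsPr (pm p q) := by
  constructor
  · intro t
    exact mul_nonneg (hp.nonneg _) (hq.nonneg _)
  · simp only [EntT.pm]
    rw [Fintype.sum_prod_type]
    simp_rw [← Finset.mul_sum, hq.sum_one, mul_one, hp.sum_one]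

lemma pr_prod (f : Ω → S) (g : Ω' → R) (a : S) (b : R) :
    pr (pm p q) (fun t => (f t.1, g t.2)) (a, b) = pr p f a * pr q g b := by
  classical
  unfold pr pm
  rw [Fintype.sum_prod_type, Finset.sum_mul_sum]
  apply Finset.sum_congr rfl
  intro x _
  apply Finset.sum_congr rfl
  intro y _
  by_cases h1 : f x = a <;> by_cases h2 : g y = b <;> simp [h1, h2]

lemma push_id : IsPush p (fun ω => ω) p := by
  classical
  intro ω
  simp [pr]

lemma push_fst (hq : IsPr q) : IsPush (pm p q) Prod.fst p := by
  classical
  intro a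
  unfold pr pm
  rw [Fintype.sum_prod_type]
  have : ∀ x : Ω, ∑ y : Ω', (if (x, y).1 = a then p (x, y).1 * q (x, y).2 else 0)
      = if x = a then p x else 0 := by
    intro x
    by_cases h : x = a
    · simp [h, ← Finset.mul_sum, hq.sum_one]
    · simp [h]
  simp_rw [this]
  simp

lemma push_snd (hp : IsPr p) : IsPush (pm p q) Prod.snd q := by
  classical
  intro a
  unfold pr pm
  rw [Fintype.sum_prod_type_right]
  have : ∀ y : Ω', ∑ x : Ω, (if (x, y).2 = a then p (x, y).1 * q (x, y).2 else 0)
      = if y = a then q y else 0 := by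
    intro x
    by_cases h : x = a
    · simp [h, ← Finset.sum_mul, hp.sum_one]
    · simp [h]
  simp_rw [this]
  simp

lemma push_map {φ : Ω → Ω₁} {φ' : Ω' → Ω₂} (h : IsPush p φ p₁) (h' : IsPush q φ' p₂) :
    IsPush (pm p q) (fun t => (φ t.1, φ' t.2)) (pm p₁ p₂) := by
  rintro ⟨a, b⟩
  rw [pr_prod, h a, h' b]
  rfl

lemma H_prod (hp : IsPr p) (hq : IsPr q) (f : Ω → S) (g : Ω' → R) :
    H (pm p q) (fun t => (f t.1, g t.2)) = H p f + H q g := by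
  rw [← H_push (push_fst (p := p) hq) f, ← H_push (push_snd (q := q) hp) g]
  unfold H
  rw [← Finset.sum_add_distrib]
  apply Finset.sum_congr rfl
  rintro ⟨a, b⟩ _
  by_cases h0 : pm p q (a, b) = 0
  · simp [h0]
  have ha : p a ≠ 0 := fun h => h0 (by simp [pm, h])
  have hb : q b ≠ 0 := fun h => h0 (by simp [pm, h])
  have e1 : pr (pm p q) (fun t => f t.1) (f a) = pr p f (f a) := by
    have := pr_prod (p := p) (q := q) f (fun _ => ()) (f a) ()
    have e : pr q (fun _ => ()) () = 1 := by simp [pr, hq.sum_one]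
    rw [e, mul_one] at this
    rw [← this]
    exact pr_congr (by simp)
  have e2 : pr (pm p q) (fun t => g t.2) (g b) = pr q g (g b) := by
    have := pr_prod (p := p) (q := q) (fun _ => ()) g () (g b)
    have e : pr p (fun _ => ()) () = 1 := by simp [pr, hp.sum_one]
    rw [e, one_mul] at this
    rw [← this]
    exact pr_congr (by simp)
  simp only [e1, e2]
  rw [pr_prod, Real.logb_mul (pr_pos hp f ha).ne' (pr_pos hq g hb).ne']
  ring

/-- for fixed second coordinate, `F` determines `f` up to `d` -/
lemma H_le_of_left (hp : IsPr p) (hq : IsPr q) (f : Ω → ℤ) (F : Ω × Ω' → S) (d : ℝ) (hd : 0 ≤ d)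
    (hF : ∀ x y z, p x ≠ 0 → p y ≠ 0 → q z ≠ 0 → F (x, z) = F (y, z) → |((f x : ℤ):ℝ) - f y| ≤ d) :
    H p f ≤ H (pm p q) F + Real.logb 2 (2 * d + 1) := by
  have hpq := hp.pm hq
  have h1 := H_pair_le hpq F (fun t => t.2)
  rw [H_push (push_snd (q := q) hp) (fun x => x)] at h1
  have h2 := H_int_pair hpq (fun t => f t.1) (fun t => (F t, t.2)) d hd (by
    rintro ⟨x, z⟩ ⟨y, z'⟩ h h' heq
    simp only [Prod.mk.injEq] at heq
    obtain ⟨h3, rfl⟩ := heq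
    exact hF x y z (left_ne_zero_of_mul h) (left_ne_zero_of_mul h') (right_ne_zero_of_mul h) h3)
  have h3 := H_prod hp hq f (fun x => x)
  have h4 := H_mono hpq (fun t => (f t.1, (F t, t.2))) (fun t => (f t.1, t.2)) (by
    intro t t' _ _ h
    simp only [Prod.mk.injEq] at h ⊢
    exact ⟨h.1, h.2.2⟩)
  linarith

lemma H_le_of_right (hp : IsPr p) (hq : IsPr q) (f : Ω' → ℤ) (F : Ω × Ω' → S) (d : ℝ) (hd : 0 ≤ d)
    (hF : ∀ x y z, q x ≠ 0 → q y ≠ 0 → p z ≠ 0 → F (z, x) = F (z, y) → |((f x : ℤ):ℝ) - f y| ≤ d) :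
    H q f ≤ H (pm p q) F + Real.logb 2 (2 * d + 1) := by
  have hpq := hp.pm hq
  have h1 := H_pair_le hpq F (fun t => t.1)
  rw [H_push (push_fst (p := p) hq) (fun x => x)] at h1
  have h2 := H_int_pair hpq (fun t => f t.2) (fun t => (F t, t.1)) d hd (by
    rintro ⟨z, x⟩ ⟨z', y⟩ h h' heq
    simp only [Prod.mk.injEq] at heq
    obtain ⟨h3, rfl⟩ := heq
    exact hF x y z (right_ne_zero_of_mul h) (right_ne_zero_of_mul h') (left_ne_zero_of_mul h) h3)
  have h3 := H_prod hp hq (fun x => x) f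
  have h4 := H_mono hpq (fun t => (f t.2, (F t, t.1))) (fun t => (t.1, f t.2)) (by
    intro t t' _ _ h
    simp only [Prod.mk.injEq] at h ⊢
    exact ⟨h.2.2, h.1⟩)
  linarith

lemma logb_one' : Real.logb 2 (2 * 0 + 1) = 0 := by simp

lemma H_left_le_sub (hp : IsPr p) (hq : IsPr q) (A : Ω → ℤ) (B : Ω' → ℤ) :
    H p A ≤ H (pm p q) (fun t => A t.1 - B t.2) := by
  have := H_le_of_left hp hq A (fun t => A t.1 - B t.2) 0 le_rfl (by
    intro x y z _ _ _ h
    have : A x = A y := by simpa using h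
    simp [this])
  rwa [logb_one', add_zero] at this

lemma H_right_le_sub (hp : IsPr p) (hq : IsPr q) (A : Ω → ℤ) (B : Ω' → ℤ) :
    H q B ≤ H (pm p q) (fun t => A t.1 - B t.2) := by
  have := H_le_of_right hp hq B (fun t => A t.1 - B t.2) 0 le_rfl (by
    intro x y z _ _ _ h
    have : B x = B y := by simpa using h
    simp [this])
  rwa [logb_one', add_zero] at this

lemma H_left_le_add (hp : IsPr p) (hq : IsPr q) (A : Ω → ℤ) (B : Ω' → ℤ) :
    H p A ≤ H (pm p q) (fun t => A t.1 + B t.2) := by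
  have := H_left_le_sub hp hq A (fun x => -B x)
  simpa using this

lemma H_right_le_add (hp : IsPr p) (hq : IsPr q) (A : Ω → ℤ) (B : Ω' → ℤ) :
    H q B ≤ H (pm p q) (fun t => A t.1 + B t.2) := by
  have := H_le_of_right hp hq B (fun t => A t.1 + B t.2) 0 le_rfl (by
    intro x y z _ _ _ h
    have : B x = B y := by simpa using h
    simp [this])
  rwa [logb_one', add_zero] at this

/-- Ruzsa triangle inequality -/
lemma ruzsa (h1 : IsPr p₁) (h2 : IsPr p₂) (h3 : IsPr p₃) (A : Ω₁ → ℤ) (B : Ω₂ → ℤ) (C : Ω₃ → ℤ) :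
    H (pm p₁ p₃) (fun t => A t.1 - C t.2) + H p₂ B ≤
      H (pm p₁ p₂) (fun t => A t.1 - B t.2) + H (pm p₂ p₃) (fun t => B t.1 - C t.2) := by
  have h23 := h2.pm h3
  have hP := h1.pm h23
  have e1 := H_push (push_map (push_id (p := p₁)) (push_snd (q := p₃) h2)) (fun t => A t.1 - C t.2)
  have e2 := H_push (push_map (push_id (p := p₁)) (push_fst (p := p₂) h3)) (fun t => A t.1 - B t.2)
  have e3 := H_push (push_snd (q := pm p₂ p₃) h1) (fun t => B t.1 - C t.2)
  have e4 := H_push (push_map (push_id (p := p₁)) (push_snd (q := p₃) h2)) (fun t => (A t.1, C t.2))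
  rw [H_prod h1 h3] at e4
  simp only at e1 e2 e3 e4
  have s := submod hP (fun t => (A t.1 - B t.2.1, B t.2.1 - C t.2.2)) (fun t => (A t.1, C t.2.2))
    (fun t => A t.1 - C t.2.2) (by
      intro t t' h; simp only [Prod.mk.injEq] at h; omega) (by
      intro t t' h; simp only [Prod.mk.injEq] at h; omega)
  have s2 := H_pair_le hP (fun t => A t.1 - B t.2.1) (fun t => B t.2.1 - C t.2.2)
  have s3 := H_mono hP (fun t => ((A t.1 - B t.2.1, B t.2.1 - C t.2.2), (A t.1, C t.2.2)))
    (fun t => (A t.1, (B t.2.1, C t.2.2))) (by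
      intro t t' _ _ h; simp only [Prod.mk.injEq] at h ⊢; omega)
  have s4 := H_prod h1 h23 A (fun t => (B t.1, C t.2))
  rw [H_prod h2 h3] at s4
  linarith

/-- Kaimanovich–Vershik -/
lemma kv (h1 : IsPr p₁) (h2 : IsPr p₂) (h3 : IsPr p₃) (A : Ω₁ → ℤ) (B : Ω₂ → ℤ) (C : Ω₃ → ℤ) :
    H (pm p₁ (pm p₂ p₃)) (fun t => A t.1 + B t.2.1 + C t.2.2) + H p₂ B ≤
      H (pm p₁ p₂) (fun t => A t.1 + B t.2) + H (pm p₂ p₃) (fun t => B t.1 + C t.2) := by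
  have h23 := h2.pm h3
  have hP := h1.pm h23
  have e2 := H_push (push_map (push_id (p := p₁)) (push_fst (p := p₂) h3)) (fun t => A t.1 + B t.2)
  have e3 := H_push (push_snd (q := p₃) h2) C
  have e3' := H_push (push_snd (q := pm p₂ p₃) h1) (fun t => C t.2)
  have e4 := H_prod h1 h23 A (fun t => B t.1 + C t.2)
  simp only at e2 e3 e3' e4
  have s := submod hP (fun t => (A t.1 + B t.2.1, C t.2.2)) (fun t => (A t.1, B t.2.1 + C t.2.2))
    (fun t => A t.1 + B t.2.1 + C t.2.2) (by
      intro t t' h; simp only [Prod.mk.injEq] at h; omega) (by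
      intro t t' h; simp only [Prod.mk.injEq] at h; omega)
  have s2 := H_pair_le hP (fun t => A t.1 + B t.2.1) (fun t => C t.2.2)
  have s3 := H_mono hP (fun t => ((A t.1 + B t.2.1, C t.2.2), (A t.1, B t.2.1 + C t.2.2)))
    (fun t => (A t.1, (B t.2.1, C t.2.2))) (by
      intro t t' _ _ h; simp only [Prod.mk.injEq] at h ⊢; omega)
  have s4 := H_prod h1 h23 A (fun t => (B t.1, C t.2))
  rw [H_prod h2 h3] at s4
  linarith

/-- excess of entropy of `A - W` over `W` -/
noncomputable def Ab (p : Ω → ℝ) (A : Ω → ℤ) (q : Ω' → ℝ) (W : Ω' → ℤ) : ℝ :=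
  H (pm p q) (fun t => A t.1 - W t.2) - H q W

lemma Ab_sub (hp : IsPr p) (hq : IsPr q) (A A' : Ω → ℤ) (W : Ω' → ℤ) :
    Ab p (fun ω => A ω - A' ω) q W ≤ Ab p A q W + Ab p A' q W +
      (H (pm q q) (fun t => W t.1 - W t.2) - H q W) := by
  unfold Ab
  have hqq := hq.pm hq
  have hP := hp.pm hqq
  have e1 := H_push (push_map (push_id (p := p)) (push_fst (p := q) hq)) (fun t => A t.1 - W t.2)
  have e2 := H_push (push_map (push_id (p := p)) (push_snd (q := q) hq)) (fun t => A' t.1 - W t.2)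
  have e3 := H_push (push_map (push_id (p := p)) (push_fst (p := q) hq))
    (fun t => A t.1 - A' t.1 - W t.2)
  have e4 := H_prod hp hqq (fun ω => (A ω, A' ω)) (fun t => W t.1 - W t.2)
  simp only at e1 e2 e3 e4
  have s := submod hP (fun t => (A t.1 - W t.2.1, A' t.1 - W t.2.2))
    (fun t => ((A t.1, A' t.1), W t.2.1 - W t.2.2))
    (fun t => A t.1 - A' t.1 - W t.2.1 + W t.2.2) (by
      intro t t' h; simp only [Prod.mk.injEq] at h; omega) (by
      intro t t' h; simp only [Prod.mk.injEq] at h; omega)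
  have s2 := H_pair_le hP (fun t => A t.1 - W t.2.1) (fun t => A' t.1 - W t.2.2)
  have s3 := H_mono hP (fun t => ((A t.1 - W t.2.1, A' t.1 - W t.2.2),
      ((A t.1, A' t.1), W t.2.1 - W t.2.2)))
    (fun t => ((A t.1, A' t.1), (W t.2.1, W t.2.2))) (by
      intro t t' _ _ h; simp only [Prod.mk.injEq] at h ⊢; omega)
  have s4 := H_prod hp hqq (fun ω => (A ω, A' ω)) (fun t => (W t.1, W t.2))
  rw [H_prod hq hq] at s4
  -- drop the last W
  have hp' := (hp.pm hq).pm hq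
  have s5 := H_left_le_add (hp.pm hq) hq (fun t => A t.1 - A' t.1 - W t.2) W
  have e5 : H (pm (pm p q) q) (fun t => A t.1.1 - A' t.1.1 - W t.1.2 + W t.2) =
      H (pm p (pm q q)) (fun t => A t.1 - A' t.1 - W t.2.1 + W t.2.2) := by
    have hpush : IsPush (pm (pm p q) q) (fun t => (t.1.1, (t.1.2, t.2))) (pm p (pm q q)) := by
      classical
      rintro ⟨a, b, c⟩
      unfold pr
      rw [Finset.sum_eq_single ((a, b), c)]
      · simp [pm, mul_assoc]
      · rintro ⟨⟨a', b'⟩, c'⟩ _ hne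
        rw [if_neg]
        intro h
        simp only [Prod.mk.injEq] at h
        exact hne (by simp [h])
      · simp
    exact H_push hpush (fun t => A t.1 - A' t.1 - W t.2.1 + W t.2.2)
  linarith

/-! mixtures and conditioning -/

variable {r : T → ℝ} {Q : T → Ω → ℝ}

lemma IsPr.mix (hr : IsPr r) (hQ : ∀ t, r t ≠ 0 → IsPr (Q t)) : IsPr (mix r Q) := by
  constructor
  · intro x
    simp only [EntT.mix]
    by_cases h : r x.1 = 0
    · simp [h]
    · exact mul_nonneg (hr.nonneg _) ((hQ _ h).nonneg _)
  · simp only [EntT.mix]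
    rw [Fintype.sum_prod_type, ← hr.sum_one]
    apply Finset.sum_congr rfl
    intro t _
    by_cases h : r t = 0
    · simp [h]
    · show ∑ y, r t * Q t y = r t
      rw [← Finset.mul_sum, (hQ t h).sum_one, mul_one]

lemma pr_mix (F : T → Ω → S) (t : T) (v : S) :
    pr (mix r Q) (fun x => (x.1, F x.1 x.2)) (t, v) = r t * pr (Q t) (F t) v := by
  classical
  unfold pr mix
  rw [Fintype.sum_prod_type, Finset.sum_eq_single t]
  · rw [Finset.mul_sum]
    apply Finset.sum_congr rfl
    intro y _
    by_cases h : F t y = v <;> simp [h]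
  · intro t' _ hne
    apply Finset.sum_eq_zero
    intro y _
    simp [hne]
  · simp

lemma H_mix (hr : IsPr r) (hQ : ∀ t, r t ≠ 0 → IsPr (Q t)) (F : T → Ω → S) :
    H (mix r Q) (fun x => (x.1, F x.1 x.2)) = H r (fun t => t) + ∑ t, r t * H (Q t) (F t) := by
  unfold H
  rw [Fintype.sum_prod_type, ← Finset.sum_add_distrib]
  apply Finset.sum_congr rfl
  intro t _
  by_cases h : r t = 0
  · simp [h, mix]
  have hQt := hQ t h
  have e : pr r (fun t => t) t = r t := push_id t
  rw [e]
  have : ∀ y, mix r Q (t, y) * -Real.logb 2 (pr (mix r Q) (fun x => (x.1, F x.1 x.2)) (t, F t y)) =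
      r t * (Q t y * (-Real.logb 2 (r t))) + r t * (Q t y * -Real.logb 2 (pr (Q t) (F t) (F t y))) := by
    intro y
    by_cases hy : Q t y = 0
    · simp [mix, hy]
    rw [pr_mix, Real.logb_mul h (pr_pos hQt _ hy).ne']
    simp only [mix]
    ring
  simp_rw [this]
  rw [Finset.sum_add_distrib, ← Finset.mul_sum, ← Finset.mul_sum, ← Finset.sum_mul, hQt.sum_one]
  ring

lemma push_mix_fst (hQ : ∀ t, r t ≠ 0 → IsPr (Q t)) : IsPush (mix r Q) Prod.fst r := by
  intro t
  have := pr_mix (r := r) (Q := Q) (fun _ _ => ()) t ()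
  have e : pr (mix r Q) (fun x => (x.1, ())) (t, ()) = pr (mix r Q) Prod.fst t :=
    pr_congr (by simp)
  rw [e] at this
  rw [this]
  by_cases h : r t = 0
  · simp [h]
  · simp [pr, (hQ t h).sum_one]

lemma mix_avg_le (hr : IsPr r) (hQ : ∀ t, r t ≠ 0 → IsPr (Q t)) (F : T → Ω → S) :
    ∑ t, r t * H (Q t) (F t) ≤ H (mix r Q) (fun x => F x.1 x.2) := by
  have h1 := H_mix hr hQ F
  have h2 := H_pair_le (hr.mix hQ) (fun x => x.1) (fun x => F x.1 x.2)
  rw [H_push (push_mix_fst hQ) (fun t => t)] at h2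
  linarith

lemma IsPr.cond (hp : IsPr p) (g : Ω → S) {t : Ω} (ht : p t ≠ 0) : IsPr (cond p g (g t)) := by
  classical
  have hpos := pr_pos hp g ht
  constructor
  · intro ω
    simp only [EntT.cond]
    split_ifs
    · exact div_nonneg (hp.nonneg _) hpos.le
    · exact le_rfl
  · simp only [EntT.cond]
    have : ∀ ω, (if g ω = g t then p ω / pr p g (g t) else 0) =
        (if g ω = g t then p ω else 0) / pr p g (g t) := by
      intro ω
      split_ifs <;> simp
    simp_rw [this]
    rw [← Finset.sum_div, div_eq_one_iff_eq hpos.ne']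
    simp only [pr]

lemma cond_ne (g : Ω → S) (v : S) {ω : Ω} (h : cond p g v ω ≠ 0) : g ω = v ∧ p ω ≠ 0 := by
  unfold cond at h
  split_ifs at h with h1
  · exact ⟨h1, fun h2 => h (by simp [h2])⟩
  · exact absurd rfl h

lemma push_mix_cond (hp : IsPr p) (g : Ω → S) :
    IsPush (mix p (fun t => cond p g (g t))) Prod.snd p := by
  classical
  intro ω
  unfold pr
  rw [Fintype.sum_prod_type]
  have : ∀ t, ∑ y, (if (t, y).2 = ω then mix p (fun t => cond p g (g t)) (t, y) else 0) =
      (if g t = g ω then p t else 0) * (p ω / pr p g (g ω)) := by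
    intro t
    simp only
    rw [Finset.sum_ite_eq']
    simp only [mem_univ, if_true, mix, cond]
    by_cases h : g ω = g t
    · simp [h]
    · simp [h, Ne.symm h]
  simp_rw [this]
  rw [← Finset.sum_mul]
  by_cases h : p ω = 0
  · simp [h]
  · have := pr_pos hp g h
    have e : (∑ t, if g t = g ω then p t else 0) = pr p g (g ω) := by simp only [pr]
    rw [e]
    field_simp

lemma pr_cond (g : Ω → S) (f : Ω → R) (v : S) (w : R) :
    pr (cond p g v) f w = pr p (fun ω => (f ω, g ω)) (w, v) / pr p g v := by
  classical
  conv_lhs => rw [pr]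
  conv_rhs => lhs; rw [pr]
  rw [Finset.sum_div]
  apply Finset.sum_congr rfl
  intro ω _
  unfold cond
  by_cases h1 : f ω = w <;> by_cases h2 : g ω = v <;> simp [h1, h2]

lemma avg_cond (hp : IsPr p) (g : Ω → S) (f : Ω → R) :
    ∑ t, p t * H (cond p g (g t)) f = H p (fun ω => (f ω, g ω)) - H p g := by
  classical
  have hk : ∀ ω, p ω ≠ 0 → 0 < pr p (fun ω => (f ω, g ω)) (f ω, g ω) := fun ω h =>
    pr_pos hp (fun ω => (f ω, g ω)) h
  have h1 : H p (fun ω => (f ω, g ω)) - H p g =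
      ∑ ω, p ω * -Real.logb 2 (pr p (fun ω => (f ω, g ω)) (f ω, g ω) / pr p g (g ω)) := by
    unfold H
    rw [← Finset.sum_sub_distrib]
    apply Finset.sum_congr rfl
    intro ω _
    by_cases h : p ω = 0
    · simp [h]
    · rw [Real.logb_div (hk ω h).ne' (pr_pos hp g h).ne']
      ring
  rw [h1]
  have h2 := sum_comp (p := mix p (fun t => cond p g (g t))) Prod.snd univ (fun _ _ => mem_univ _)
    (fun ω => -Real.logb 2 (pr p (fun ω => (f ω, g ω)) (f ω, g ω) / pr p g (g ω)))
  simp_rw [push_mix_cond hp g _] at h2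
  rw [← h2, Fintype.sum_prod_type]
  apply Finset.sum_congr rfl
  intro t _
  unfold H
  rw [Finset.mul_sum]
  apply Finset.sum_congr rfl
  intro ω _
  simp only [mix]
  rw [mul_assoc]
  congr 1
  by_cases h : g ω = g t
  · rw [pr_cond, ← h]
  · simp [cond, h]

lemma push_mix_cond_prod (hp : IsPr p) (g : Ω → S) :
    IsPush (mix p (fun t => pm (cond p g (g t)) q)) Prod.snd (pm p q) := by
  classical
  rintro ⟨ω, ω'⟩
  have := push_mix_cond hp g ω
  unfold pr at this ⊢
  rw [Fintype.sum_prod_type] at this ⊢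
  simp only [Finset.sum_ite_eq', mem_univ, if_true] at this ⊢
  simp only [mix, pm] at this ⊢
  rw [← this, Finset.sum_mul]
  apply Finset.sum_congr rfl
  intro x _
  rw [Finset.sum_eq_single (ω, ω')]
  · simp [mul_assoc]
  · intro y _ hy
    rw [if_neg hy]
  · simp

lemma avg_cond_prod (hp : IsPr p) (hq : IsPr q) (g : Ω → S) (F : Ω × Ω' → R) :
    ∑ t, p t * H (pm (cond p g (g t)) q) F ≤ H (pm p q) F := by
  have := mix_avg_le (Q := fun t => pm (cond p g (g t)) q) hp
    (fun t ht => (hp.cond g ht).pm hq) (fun _ => F)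
  rwa [H_push (push_mix_cond_prod hp g) F] at this

end prod
end EntT

namespace EntT
open Finset

/-- probability of an event -/
noncomputable def prE {Ω : Type} [Fintype Ω] (p : Ω → ℝ) (E : Ω → Prop) : ℝ := pr p E True

/-- Frostman condition at scale `2^n` -/
def Fr {Ω : Type} [Fintype Ω] (p : Ω → ℝ) (X : Ω → ℤ) (n : ℕ) (L s : ℝ) : Prop :=
  ∀ x R : ℝ, 1 ≤ R → prE p (fun ω => |(X ω : ℝ) - x| ≤ R) ≤ L * (R / 2 ^ n) ^ s

section ev
variable {Ω Ω' Ω₁ Ω₂ S T R : Type} [Fintype Ω] [Fintype Ω'] [Fintype Ω₁] [Fintype Ω₂]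
variable {p : Ω → ℝ} {q : Ω' → ℝ} {p₁ : Ω₁ → ℝ} {p₂ : Ω₂ → ℝ}

open Classical in
lemma prE_eq (p : Ω → ℝ) (E : Ω → Prop) : prE p E = ∑ ω, if E ω then p ω else 0 := by
  unfold prE pr
  apply Finset.sum_congr rfl
  intro ω _
  by_cases h : E ω <;> simp [h]

lemma prE_nonneg (hp : IsPr p) (E : Ω → Prop) : 0 ≤ prE p E := pr_nonneg hp _ _
lemma prE_le_one (hp : IsPr p) (E : Ω → Prop) : prE p E ≤ 1 := pr_le_one hp _ _

lemma prE_mono (hp : IsPr p) {E F : Ω → Prop} (h : ∀ ω, p ω ≠ 0 → E ω → F ω) :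
    prE p E ≤ prE p F := by
  classical
  rw [prE_eq, prE_eq]
  apply Finset.sum_le_sum
  intro ω _
  by_cases h0 : p ω = 0
  · simp [h0]
  by_cases h1 : E ω
  · simp [h1, h ω h0 h1]
  · rw [if_neg h1]
    split_ifs
    · exact hp.nonneg ω
    · exact le_rfl

lemma prE_not (hp : IsPr p) (E : Ω → Prop) : prE p (fun ω => ¬ E ω) = 1 - prE p E := by
  classical
  rw [prE_eq, prE_eq, ← hp.sum_one, ← Finset.sum_sub_distrib]
  apply Finset.sum_congr rfl
  intro ω _
  by_cases h : E ω <;> simp [h]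

lemma prE_or (hp : IsPr p) (E F : Ω → Prop) : prE p (fun ω => E ω ∨ F ω) ≤ prE p E + prE p F := by
  classical
  rw [prE_eq, prE_eq, prE_eq, ← Finset.sum_add_distrib]
  apply Finset.sum_le_sum
  intro ω _
  have := hp.nonneg ω
  by_cases h : E ω <;> by_cases h' : F ω <;> simp [h, h', this]

lemma prE_exists {E : Ω → Prop} (h : 0 < prE p E) : ∃ ω, p ω ≠ 0 ∧ E ω := by
  classical
  by_contra hc
  push Not at hc
  rw [prE_eq] at h
  have : ∑ ω, (if E ω then p ω else 0) = 0 := by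
    apply Finset.sum_eq_zero
    intro ω _
    by_cases h0 : p ω = 0
    · simp [h0]
    · simp [hc ω h0]
  linarith

lemma pr_le_prE (hp : IsPr p) (f : Ω → S) (v : S) {E : Ω → Prop}
    (h : ∀ ω, p ω ≠ 0 → f ω = v → E ω) : pr p f v ≤ prE p E := by
  have : pr p f v = prE p (fun ω => f ω = v) := pr_congr (by simp)
  rw [this]
  exact prE_mono hp h

lemma markov (hp : IsPr p) (g : Ω → ℝ) (hg : ∀ ω, p ω ≠ 0 → 0 ≤ g ω) (T : ℝ) :
    prE p (fun ω => T < g ω) * T ≤ ∑ ω, p ω * g ω := by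
  classical
  rw [prE_eq, Finset.sum_mul]
  apply Finset.sum_le_sum
  intro ω _
  by_cases h0 : p ω = 0
  · simp [h0]
  split_ifs with h
  · exact mul_le_mul_of_nonneg_left h.le (hp.nonneg ω)
  · rw [zero_mul]
    exact mul_nonneg (hp.nonneg ω) (hg ω h0)

lemma prE_prod (p : Ω → ℝ) (q : Ω' → ℝ) (E : Ω × Ω' → Prop) :
    prE (pm p q) E = ∑ ω, p ω * prE q (fun ω' => E (ω, ω')) := by
  classical
  rw [prE_eq, Fintype.sum_prod_type]
  apply Finset.sum_congr rfl
  intro x _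
  rw [prE_eq, Finset.mul_sum]
  apply Finset.sum_congr rfl
  intro y _
  simp only [pm]
  split_ifs <;> simp

lemma prE_prod' (p : Ω → ℝ) (q : Ω' → ℝ) (E : Ω × Ω' → Prop) :
    prE (pm p q) E = ∑ ω', q ω' * prE p (fun ω => E (ω, ω')) := by
  classical
  rw [prE_eq, Fintype.sum_prod_type_right]
  apply Finset.sum_congr rfl
  intro x _
  rw [prE_eq, Finset.mul_sum]
  apply Finset.sum_congr rfl
  intro y _
  simp only [pm]
  split_ifs
  · ring
  · simp

lemma avg_le (hp : IsPr p) (f : Ω → ℝ) (B : ℝ) (h : ∀ ω, p ω ≠ 0 → f ω ≤ B) :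
    ∑ ω, p ω * f ω ≤ B := by
  have : B = ∑ ω, p ω * B := by rw [← Finset.sum_mul, hp.sum_one, one_mul]
  rw [this]
  apply Finset.sum_le_sum
  intro ω _
  by_cases h0 : p ω = 0
  · simp [h0]
  · exact mul_le_mul_of_nonneg_left (h ω h0) (hp.nonneg ω)

lemma exists_ge_avg (hp : IsPr p) (f : Ω → ℝ) (B : ℝ) (h : B ≤ ∑ ω, p ω * f ω) :
    ∃ ω, p ω ≠ 0 ∧ B ≤ f ω := by
  by_contra hc
  push Not at hc
  have h1 : ∑ ω, p ω * f ω < ∑ ω, p ω * B := by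
    apply Finset.sum_lt_sum
    · intro ω _
      by_cases h0 : p ω = 0
      · simp [h0]
      · exact mul_le_mul_of_nonneg_left (hc ω h0).le (hp.nonneg ω)
    · by_contra hn
      push Not at hn
      have : ∑ ω, p ω = 0 := by
        apply Finset.sum_eq_zero
        intro ω _
        by_contra h0
        have := hn ω (mem_univ _)
        have h2 : 0 < p ω := lt_of_le_of_ne (hp.nonneg ω) (Ne.symm h0)
        have := le_of_mul_le_mul_left this h2
        linarith [hc ω h0]
      rw [hp.sum_one] at this
      norm_num at this
  rw [← Finset.sum_mul, hp.sum_one, one_mul] at h1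
  linarith

lemma exists_le_avg (hp : IsPr p) (f : Ω → ℝ) (B : ℝ) (h : ∑ ω, p ω * f ω ≤ B) :
    ∃ ω, p ω ≠ 0 ∧ f ω ≤ B := by
  obtain ⟨ω, h1, h2⟩ := exists_ge_avg hp (fun ω => - f ω) (-B) (by
    simp only [mul_neg, Finset.sum_neg_distrib]; linarith)
  exact ⟨ω, h1, by linarith⟩

lemma logb_fr (n : ℕ) (L s R : ℝ) (hL : 0 < L) (hR : 0 < R) :
    -Real.logb 2 (L * (R / 2 ^ n) ^ s) = s * (n - Real.logb 2 R) - Real.logb 2 L := by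
  have h2 : (0:ℝ) < 2 ^ n := by positivity
  rw [Real.logb_mul hL.ne' (by positivity), Real.logb_rpow_eq_mul_logb_of_pos (by positivity),
    Real.logb_div hR.ne' h2.ne', Real.logb_pow]
  simp
  ring

lemma H_ge_fr (hp : IsPr p) {X : Ω → ℤ} {n : ℕ} {L s : ℝ} (hF : Fr p X n L s) (hL : 0 < L)
    (f : Ω → S) (R : ℝ) (hR : 1 ≤ R)
    (h : ∀ ω ω', p ω ≠ 0 → p ω' ≠ 0 → f ω = f ω' → |(X ω : ℝ) - X ω'| ≤ R) :
    s * (n - Real.logb 2 R) - Real.logb 2 L ≤ H p f := by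
  rw [← logb_fr n L s R hL (by linarith)]
  apply H_ge_of_pr_le hp
  intro ω h0
  refine le_trans (pr_le_prE hp f (f ω) ?_) (hF (X ω) R hR)
  intro ω' h0' he
  exact h ω' ω h0' h0 he

lemma push_swap : IsPush (pm p q) (fun t => (t.2, t.1)) (pm q p) := by
  classical
  rintro ⟨a, b⟩
  unfold pr
  rw [Finset.sum_eq_single (b, a)]
  · simp [pm, mul_comm]
  · rintro ⟨a', b'⟩ _ hne
    rw [if_neg]
    intro h
    simp only [Prod.mk.injEq] at h
    exact hne (by simp [h])
  · simp

lemma H_neg (hp : IsPr p) (A : Ω → ℤ) : H p (fun ω => - A ω) = H p A :=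
  H_congr hp _ _ (by intros; exact neg_inj)

lemma H_sub_swap (hp : IsPr p) (hq : IsPr q) (A : Ω → ℤ) (B : Ω' → ℤ) :
    H (pm p q) (fun t => A t.1 - B t.2) = H (pm q p) (fun t => B t.1 - A t.2) := by
  rw [← H_push push_swap (fun t : Ω' × Ω => B t.1 - A t.2), ← H_neg (hp.pm hq)]
  simp

lemma Ab_left (hp : IsPr p) (hp₁ : IsPr p₁) (A : Ω → ℤ) (W : Ω' → ℤ) :
    Ab (pm p p₁) (fun t => A t.1) q W = Ab p A q W := by
  unfold Ab
  rw [← H_push (push_map (push_fst (p := p) hp₁) (push_id (p := q))) (fun t => A t.1 - W t.2)]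

lemma Ab_right (hp : IsPr p) (hp₁ : IsPr p₁) (A : Ω₁ → ℤ) (W : Ω' → ℤ) :
    Ab (pm p p₁) (fun t => A t.2) q W = Ab p₁ A q W := by
  unfold Ab
  rw [← H_push (push_map (push_snd (q := p₁) hp) (push_id (p := q))) (fun t => A t.1 - W t.2)]

lemma ediv_close (x y q : ℤ) (hq : 0 < q) : |((x / q : ℤ) : ℝ) - (y / q : ℤ)| ≤ |(x:ℝ) - y| / q + 1 := by
  have hq' : (0:ℝ) < q := by exact_mod_cast hq
  have h1 := Int.mul_ediv_add_emod x q
  have h2 := Int.mul_ediv_add_emod y q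
  have a1 := Int.emod_nonneg x hq.ne'
  have a2 := Int.emod_lt_of_pos x hq
  have b1 := Int.emod_nonneg y hq.ne'
  have b2 := Int.emod_lt_of_pos y hq
  have e1 : (x:ℝ) = q * (x / q : ℤ) + (x % q : ℤ) := by exact_mod_cast h1.symm
  have e2 : (y:ℝ) = q * (y / q : ℤ) + (y % q : ℤ) := by exact_mod_cast h2.symm
  have a1' : (0:ℝ) ≤ (x % q : ℤ) := by exact_mod_cast a1
  have a2' : ((x % q : ℤ):ℝ) < q := by exact_mod_cast a2
  have b1' : (0:ℝ) ≤ (y % q : ℤ) := by exact_mod_cast b1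
  have b2' : ((y % q : ℤ):ℝ) < q := by exact_mod_cast b2
  have e3 : ((x / q : ℤ):ℝ) - (y / q : ℤ) = ((x:ℝ) - y) / q + (((y % q : ℤ):ℝ) - (x % q : ℤ)) / q := by
    rw [← add_div, eq_div_iff hq'.ne']
    linarith
  rw [e3]
  refine (abs_add_le _ _).trans ?_
  rw [abs_div, abs_of_pos hq']
  have : |(((y % q : ℤ):ℝ) - (x % q : ℤ)) / q| ≤ 1 := by
    rw [abs_div, abs_of_pos hq', div_le_one hq', abs_le]
    constructor <;> linarith
  linarith

lemma of_ediv_eq (x y q : ℤ) (hq : 0 < q) (h : x / q = y / q) : |(x:ℝ) - y| ≤ q := by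
  have h1 := Int.mul_ediv_add_emod x q
  have h2 := Int.mul_ediv_add_emod y q
  have a1 := Int.emod_nonneg x hq.ne'
  have a2 := Int.emod_lt_of_pos x hq
  have b1 := Int.emod_nonneg y hq.ne'
  have b2 := Int.emod_lt_of_pos y hq
  rw [h] at h1
  have : |x - y| ≤ q := by rw [abs_le]; constructor <;> linarith
  exact_mod_cast this

/-- separation of scales -/
lemma scale_sep (h1 : IsPr p₁) (h2 : IsPr p₂) (U : Ω₁ → ℤ) (V : Ω₂ → ℤ) (q : ℤ) (hq : 0 < q)
    (K : ℝ) (hK : 0 ≤ K) (hU : ∀ ω, p₁ ω ≠ 0 → |(U ω : ℝ)| ≤ K * q) :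
    H p₁ U + H p₂ (fun ω => V ω / q) ≤ H (pm p₁ p₂) (fun t => U t.1 + V t.2) +
      Real.logb 2 (2 * (2 * K + 1) + 1) := by
  have hP := h1.pm h2
  have hq' : (0:ℝ) < q := by exact_mod_cast hq
  have s := submod hP (fun t => (V t.2 / q, U t.1 + V t.2)) (fun t => V t.2) (fun t => V t.2 / q)
    (by intro t t' h; simp only [Prod.mk.injEq] at h; exact h.1) (by
      intro t t' h; show V t.2 / q = V t'.2 / q; rw [show V t.2 = V t'.2 from h])
  have e1 := H_push (push_snd (q := p₂) h1) V
  have e2 := H_push (push_snd (q := p₂) h1) (fun ω => V ω / q)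
  have e3 := H_prod h1 h2 U V
  have e4 := H_mono hP (fun t => ((V t.2 / q, U t.1 + V t.2), V t.2)) (fun t => (U t.1, V t.2)) (by
    intro t t' _ _ h
    simp only [Prod.mk.injEq] at h ⊢
    omega)
  have e5 := H_int_pair hP (fun t => V t.2 / q) (fun t => U t.1 + V t.2) (2 * K + 1) (by positivity) (by
    intro t t' h0 h0' h
    refine (ediv_close _ _ q hq).trans ?_
    have hh : (V t.2 : ℝ) - V t'.2 = U t'.1 - U t.1 := by
      have : (U t.1 : ℝ) + V t.2 = U t'.1 + V t'.2 := by exact_mod_cast h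
      linarith
    rw [hh]
    have a1 := hU t.1 (left_ne_zero_of_mul h0)
    have a2 := hU t'.1 (left_ne_zero_of_mul h0')
    have : |(U t'.1 : ℝ) - U t.1| ≤ 2 * K * q := by
      refine (abs_sub _ _).trans ?_
      linarith
    have := (div_le_iff₀ hq').2 this
    linarith)
  linarith

end ev
end EntT

namespace EntT
open Finset

/-- discretised multiplication -/
noncomputable def al (κ : ℝ) (n : ℕ) (v x : ℤ) : ℤ := ⌊κ * v * x / 2 ^ n⌋

lemma al_close (κ : ℝ) (n : ℕ) (v x : ℤ) : (al κ n v x : ℝ) ≤ κ * v * x / 2 ^ n ∧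
    κ * v * x / 2 ^ n ≤ al κ n v x + 1 :=
  ⟨Int.floor_le _, (Int.lt_floor_add_one _).le⟩

structure CoreH {Ω Ω' : Type} [Fintype Ω] [Fintype Ω'] (p : Ω → ℝ) (q : Ω' → ℝ) (X : Ω → ℤ)
    (W : Ω' → ℤ) (v0 : ℤ) (κ c : ℝ) (n : ℕ) (s θ δ L r : ℝ) : Prop where
  hp : IsPr p
  hq : IsPr q
  hX : ∀ ω, p ω ≠ 0 → |(X ω : ℝ)| ≤ c * 2 ^ n
  hab : ∀ ω, p ω ≠ 0 → Ab p (fun ω' => al κ n (X ω + v0) (X ω')) q W ≤ θ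
  hV : ∀ ω, p ω ≠ 0 → r * 2 ^ n ≤ |((X ω + v0 : ℤ) : ℝ)|
  hd : H (pm q q) (fun t => W t.1 - W t.2) - H q W ≤ δ
  hW : H q W ≤ s * n + δ
  hF : Fr p X n L s
  hL : 1 ≤ L
  hr : 0 < r
  hr1 : r ≤ 1
  hκ : κ ≠ 0
  hc : 1 ≤ c
  hs : 0 < s
  hs1 : s < 1

noncomputable def K0 (κ c : ℝ) : ℝ := Real.logb 2 (2 / |κ| + 1) + Real.logb 2 5 +
  Real.logb 2 (2 * (2 * (4 * |κ| * c + 4) + 1) + 1)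

section core
variable {Ω Ω' : Type} [Fintype Ω] [Fintype Ω'] {p : Ω → ℝ} {q : Ω' → ℝ} {X : Ω → ℤ}
    {W : Ω' → ℤ} {v0 : ℤ} {κ c : ℝ} {n : ℕ} {s θ δ L r : ℝ}

set_option maxHeartbeats 1000000 in
lemma core_upper (hC : CoreH p q X W v0 κ c n s θ δ L r) (ω : Fin 6 → Ω) (hω : ∀ i, p (ω i) ≠ 0)
    (D : ℤ) (hD : D = X (ω 2) - X (ω 3)) (hD0 : D ≠ 0) (b : ℝ) (hb0 : 0 ≤ b) (hb1 : b ≤ 1)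
    (hb : b * (2 * D) = ((X (ω 0) : ℝ) - X (ω 1)) + (X (ω 4) - X (ω 5))) :
    ∃ U : Ω × Ω → ℤ,
      (∀ t, |(U t : ℝ) - (2 * κ * D / 2 ^ n) * (X t.1 + b * X t.2)| ≤ 4) ∧
      H (pm p p) U + s * (n - Real.logb 2 |(D:ℝ)|) ≤
        s * n + 9 * θ + 8 * δ + Real.logb 2 L - s * Real.logb 2 r + K0 κ c := by
  obtain ⟨hp, hq, hX, hab, hV, hd, hW, hF, hL, hr, hr1, hκ, hc, hs, hs1⟩ := hC
  have hpp := hp.pm hp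
  have h2 : (0:ℝ) < 2 ^ n := by positivity
  set a : Fin 6 → Ω → ℤ := fun i ω' => al κ n (X (ω i) + v0) (X ω') with ha
  have hA : ∀ i, Ab p (a i) q W ≤ θ := fun i => hab _ (hω i)
  set d := H (pm q q) (fun t => W t.1 - W t.2) - H q W with hddef
  have q1 := Ab_sub hp hq (a 2) (a 3) W
  have q2 := Ab_sub hp hq (a 3) (a 2) W
  have q3 := Ab_sub hp hq (a 0) (a 1) W
  have q4 := Ab_sub hp hq (a 5) (a 4) W
  have q5 := Ab_sub hp hq (fun ω => a 2 ω - a 3 ω) (fun ω => a 3 ω - a 2 ω) W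
  have q6 := Ab_sub hp hq (fun ω => a 5 ω - a 4 ω) (fun ω => a 0 ω - a 1 ω) W
  have q7 := Ab_sub hpp hq (fun t => (a 2 t.1 - a 3 t.1) - (a 3 t.1 - a 2 t.1))
    (fun t => (a 5 t.2 - a 4 t.2) - (a 0 t.2 - a 1 t.2)) W
  rw [Ab_left hp hp (fun ω => (a 2 ω - a 3 ω) - (a 3 ω - a 2 ω)) W,
    Ab_right hp hp (fun ω => (a 5 ω - a 4 ω) - (a 0 ω - a 1 ω)) W] at q7
  set U : Ω × Ω → ℤ := fun t => (a 2 t.1 - a 3 t.1) - (a 3 t.1 - a 2 t.1) -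
    ((a 5 t.2 - a 4 t.2) - (a 0 t.2 - a 1 t.2)) with hU
  have hUab : Ab (pm p p) U q W ≤ 8 * θ + 7 * δ := by
    have := hA 0; have := hA 1; have := hA 2; have := hA 3; have := hA 4; have := hA 5
    linarith
  have hclose : ∀ t, |(U t : ℝ) - (2 * κ * D / 2 ^ n) * (X t.1 + b * X t.2)| ≤ 4 := by
    intro t
    have e : (2 * κ * D / 2 ^ n) * (X t.1 + b * X t.2) =
      2 * (κ * (X (ω 2) + v0 : ℤ) * X t.1 / 2 ^ n - κ * (X (ω 3) + v0 : ℤ) * X t.1 / 2 ^ n) +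
      (κ * (X (ω 0) + v0 : ℤ) * X t.2 / 2 ^ n - κ * (X (ω 1) + v0 : ℤ) * X t.2 / 2 ^ n) +
      (κ * (X (ω 4) + v0 : ℤ) * X t.2 / 2 ^ n - κ * (X (ω 5) + v0 : ℤ) * X t.2 / 2 ^ n) := by
      have e1 : (2 * κ * D / 2 ^ n) * (X t.1 + b * X t.2) =
        2 * κ * D * X t.1 / 2 ^ n + κ * (b * (2 * D)) * X t.2 / 2 ^ n := by ring
      rw [e1, hb, hD]
      push_cast
      ring
    rw [e, hU]
    have z2 := al_close κ n (X (ω 2) + v0) (X t.1)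
    have z3 := al_close κ n (X (ω 3) + v0) (X t.1)
    have z0 := al_close κ n (X (ω 0) + v0) (X t.2)
    have z1 := al_close κ n (X (ω 1) + v0) (X t.2)
    have z4 := al_close κ n (X (ω 4) + v0) (X t.2)
    have z5 := al_close κ n (X (ω 5) + v0) (X t.2)
    simp only [ha]
    push_cast at z0 z1 z2 z3 z4 z5 ⊢
    rw [abs_le]
    constructor <;> linarith
  refine ⟨U, hclose, ?_⟩
  -- the scale
  set Q : ℤ := |D| with hQ
  have hQ0 : 0 < Q := abs_pos.mpr hD0
  have hQ1 : (1:ℝ) ≤ Q := by exact_mod_cast hQ0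
  have hQD : (Q:ℝ) = |(D:ℝ)| := by rw [hQ]; push_cast; rfl
  have hκ' : 0 < |κ| := abs_pos.mpr hκ
  have hUb : ∀ t, pm p p t ≠ 0 → |(U t : ℝ)| ≤ (4 * |κ| * c + 4) * Q := by
    intro t ht
    have x1 := hX t.1 (left_ne_zero_of_mul ht)
    have x2 := hX t.2 (right_ne_zero_of_mul ht)
    have hcl := hclose t
    have h3 : |(2 * κ * D / 2 ^ n) * ((X t.1:ℝ) + b * X t.2)| ≤ 4 * |κ| * c * Q := by
      rw [abs_mul, abs_div, abs_mul, abs_mul, abs_two, abs_of_pos h2, ← hQD]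
      have : |(X t.1:ℝ) + b * X t.2| ≤ 2 * (c * 2 ^ n) := by
        refine (abs_add_le _ _).trans ?_
        rw [abs_mul, abs_of_nonneg hb0]
        have : b * |(X t.2:ℝ)| ≤ 1 * |(X t.2:ℝ)| := mul_le_mul_of_nonneg_right hb1 (abs_nonneg _)
        linarith
      calc 2 * |κ| * Q / 2 ^ n * |(X t.1:ℝ) + b * X t.2| ≤ 2 * |κ| * Q / 2 ^ n * (2 * (c * 2 ^ n)) := by
            apply mul_le_mul_of_nonneg_left this; positivity
        _ = 4 * |κ| * c * Q := by field_simp; ring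
    have h4 : |(U t : ℝ)| ≤ |(U t : ℝ) - (2 * κ * D / 2 ^ n) * (X t.1 + b * X t.2)| +
        |(2 * κ * D / 2 ^ n) * ((X t.1:ℝ) + b * X t.2)| := by
      have := abs_add_le ((U t : ℝ) - (2 * κ * D / 2 ^ n) * (X t.1 + b * X t.2))
        ((2 * κ * D / 2 ^ n) * ((X t.1:ℝ) + b * X t.2))
      rwa [sub_add_cancel] at this
    nlinarith
  have hqp := hq.pm hp
  have k1 := scale_sep hpp hqp U (fun t => -W t.1 + a 0 t.2) Q hQ0 (4 * |κ| * c + 4)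
    (by have : 0 < |κ| * c := by positivity
        linarith) hUb
  have k2 := kv hpp hq hp U (fun t => -W t) (a 0)
  rw [H_neg hq W] at k2
  have k3 : H (pm (pm p p) q) (fun t => U t.1 + -W t.2) = Ab (pm p p) U q W + H q W := by
    unfold Ab; simp [sub_eq_add_neg]
  have k4 : H (pm q p) (fun t => -W t.1 + a 0 t.2) = Ab p (a 0) q W + H q W := by
    unfold Ab
    rw [H_sub_swap hp hq, ← H_neg hqp]
    simp only [neg_add, neg_neg, sub_add_cancel]
    rfl
  have k5 : H (pm (pm p p) (pm q p)) (fun t => U t.1 + (-W t.2.1 + a 0 t.2.2)) =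
    H (pm (pm p p) (pm q p)) (fun t => U t.1 + -W t.2.1 + a 0 t.2.2) := by
    simp only [add_assoc]
  have k6 := H_le_of_right hq hp (fun ω => a 0 ω / Q) (fun t => (-W t.1 + a 0 t.2) / Q) 2 (by norm_num) (by
    intro x y z _ _ _ h
    have h3 := of_ediv_eq _ _ Q hQ0 h
    have h4 := ediv_close (a 0 x) (a 0 y) Q hQ0
    push_cast at h3
    have e : -(W z:ℝ) + a 0 x - (-W z + a 0 y) = a 0 x - a 0 y := by ring
    rw [e] at h3
    have : |(a 0 x:ℝ) - a 0 y| / Q ≤ 1 := by rw [div_le_one (by linarith)]; exact h3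
    linarith)
  have k7 := H_ge_fr hp hF (by linarith) (fun ω => a 0 ω / Q) ((2 / |κ| + 1) * Q / r) (by
      rw [le_div_iff₀ hr]
      have : 0 < 2 / |κ| := by positivity
      nlinarith) (by
    intro x y _ _ h
    have h3 := of_ediv_eq _ _ Q hQ0 h
    have z1 := al_close κ n (X (ω 0) + v0) (X x)
    have z2 := al_close κ n (X (ω 0) + v0) (X y)
    simp only [ha] at h3
    have hv := hV _ (hω 0)
    set v : ℝ := ((X (ω 0) + v0 : ℤ) : ℝ) with hvdef
    have h5 : |κ * v * X x / 2 ^ n - κ * v * X y / 2 ^ n| ≤ 2 * Q := by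
      rw [abs_le] at h3 ⊢
      constructor <;> linarith
    have h6 : |κ * v * X x / 2 ^ n - κ * v * X y / 2 ^ n| = |κ| * |v| * |(X x:ℝ) - X y| / 2 ^ n := by
      rw [← sub_div, abs_div, abs_of_pos h2, ← mul_sub, abs_mul, abs_mul]
    rw [h6, div_le_iff₀ h2] at h5
    have h7 : |κ| * (r * 2 ^ n) * |(X x:ℝ) - X y| ≤ |κ| * |v| * |(X x:ℝ) - X y| := by gcongr
    have h8 : |κ| * r * |(X x:ℝ) - X y| ≤ 2 * Q := by
      have : 2 ^ n * (|κ| * r * |(X x:ℝ) - X y|) ≤ 2 ^ n * (2 * Q) := by linarith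
      exact le_of_mul_le_mul_left this h2
    rw [le_div_iff₀ hr]
    have h9 : |(X x:ℝ) - X y| * r ≤ 2 / |κ| * Q := by
      rw [div_mul_eq_mul_div, le_div_iff₀ hκ']
      linarith
    linarith)
  have hK : (0:ℝ) < 2 / |κ| + 1 := by positivity
  have e8 : Real.logb 2 ((2 / |κ| + 1) * Q / r) = Real.logb 2 (2 / |κ| + 1) + Real.logb 2 |(D:ℝ)| - Real.logb 2 r := by
    rw [Real.logb_div (by positivity) hr.ne', Real.logb_mul hK.ne' (by positivity), hQD]
  rw [e8] at k7
  have hlog : 0 ≤ Real.logb 2 (2 / |κ| + 1) := Real.logb_nonneg (by norm_num) (by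
    have : 0 < 2 / |κ| := by positivity
    linarith)
  have hlog' : s * Real.logb 2 (2 / |κ| + 1) ≤ Real.logb 2 (2 / |κ| + 1) := by nlinarith
  rw [show (2:ℝ) * 2 + 1 = 5 by norm_num] at k6
  have hA0 := hA 0
  unfold K0
  have e9 : s * (n - (Real.logb 2 (2 / |κ| + 1) + Real.logb 2 |(D:ℝ)| - Real.logb 2 r)) =
    s * (n - Real.logb 2 |(D:ℝ)|) - s * Real.logb 2 (2 / |κ| + 1) + s * Real.logb 2 r := by ring
  rw [e9] at k7
  linarith

end core
end EntT

namespace EntT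
open Finset

lemma dich (B : Set ℝ) (ρ : ℝ) (hρ : 0 ≤ ρ) (h0 : (0:ℝ) ∈ B) (h1 : (1:ℝ) ∈ B)
    (h : ∀ b' ∈ B, 0 ≤ b' → b' ≤ 1 →
      (∃ b ∈ B, |b - b' / 2| < ρ) ∧ (∃ b ∈ B, |b - (b' + 1) / 2| < ρ)) :
    ∀ j : ℕ, ∀ y : ℝ, 0 ≤ y → y ≤ 1 → ∃ b ∈ B, 0 ≤ b ∧ b ≤ 1 ∧ |b - y| ≤ (1/2) ^ j + 2 * ρ := by
  intro j
  induction j with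
  | zero =>
    intro y hy0 hy1
    refine ⟨0, h0, le_rfl, zero_le_one, ?_⟩
    rw [abs_le]; constructor <;> simp <;> linarith
  | succ j ih =>
    intro y hy0 hy1
    have clamp : ∀ b ∈ B, |b - y| ≤ (1/2) ^ (j+1) + 2 * ρ →
        ∃ b ∈ B, 0 ≤ b ∧ b ≤ 1 ∧ |b - y| ≤ (1/2) ^ (j+1) + 2 * ρ := by
      intro b hb hby
      by_cases c0 : b < 0
      · refine ⟨0, h0, le_rfl, zero_le_one, ?_⟩
        rw [abs_le] at hby ⊢; constructor <;> linarith
      by_cases c1 : 1 < b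
      · refine ⟨1, h1, zero_le_one, le_rfl, ?_⟩
        rw [abs_le] at hby ⊢; constructor <;> linarith
      · exact ⟨b, hb, by linarith, by linarith, hby⟩
    rw [pow_succ] at clamp ⊢
    by_cases hy : y ≤ 1/2
    · obtain ⟨b', hb', c0, c1, hd⟩ := ih (2*y) (by linarith) (by linarith)
      obtain ⟨⟨b, hb, hbd⟩, _⟩ := h b' hb' c0 c1
      apply clamp b hb
      rw [abs_le] at hd ⊢
      rw [abs_lt] at hbd
      constructor <;> linarith
    · obtain ⟨b', hb', c0, c1, hd⟩ := ih (2*y-1) (by linarith) (by linarith)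
      obtain ⟨_, ⟨b, hb, hbd⟩⟩ := h b' hb' c0 c1
      apply clamp b hb
      rw [abs_le] at hd ⊢
      rw [abs_lt] at hbd
      constructor <;> linarith

lemma card_near (G : ℕ) (z w : ℝ) (hw : 0 ≤ w) (P : ℕ → Prop) [DecidablePred P]
    (hP : ∀ j, P j → |(j:ℝ) - z| ≤ w) : (((range G).filter P).card : ℝ) ≤ 2 * w + 1 := by
  have hsub : (((range G).filter P).image (fun j : ℕ => (j : ℤ))) ⊆ Finset.Icc ⌈z - w⌉ ⌊z + w⌋ := by
    intro v hv
    simp only [mem_image, mem_filter, mem_range] at hv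
    obtain ⟨j, ⟨_, hj⟩, rfl⟩ := hv
    have := abs_le.1 (hP j hj)
    rw [Finset.mem_Icc, Int.ceil_le, Int.le_floor]
    push_cast
    constructor <;> linarith
  have hc := Finset.card_le_card hsub
  rw [Finset.card_image_of_injective _ Nat.cast_injective, Int.card_Icc] at hc
  have h1 := Int.floor_le (z + w)
  have h2 := Int.le_ceil (z - w)
  by_cases hn : 0 ≤ ⌊z + w⌋ + 1 - ⌈z - w⌉
  · have : (((range G).filter P).card : ℤ) ≤ ⌊z + w⌋ + 1 - ⌈z - w⌉ := by
      rw [← Int.toNat_of_nonneg hn]; exact_mod_cast hc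
    have : (((range G).filter P).card : ℝ) ≤ ⌊z + w⌋ + 1 - ⌈z - w⌉ := by exact_mod_cast this
    linarith
  · rw [Int.toNat_of_nonpos (by linarith)] at hc
    have : ((range G).filter P).card = 0 := by omega
    rw [this]
    push_cast
    linarith

open Classical in
/-- number of directions for which a given pair of points collide -/
lemma count_dir (g J : ℕ) (c σ : ℝ) (hσ : 0 < σ) (hc : 1 ≤ c) (hJ : 2 * c < 2 ^ J) (y1 y2 : ℝ)
    (hy2 : |y2| ≤ 2 * c * (σ * 2 ^ g)) :
    (((range (2 ^ g)).filter (fun j : ℕ => |y1 + (j / 2 ^ g : ℝ) * y2| ≤ σ)).card : ℝ) ≤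
      2 ^ g * ∑ i ∈ range (g + J + 1), (4 * c) * (1/2) ^ i *
        (if |y2| ≤ 2 ^ (i+1) * σ ∧ |y1| ≤ 2 ^ (i+2) * σ then 1 else 0) := by
  have hG : (0:ℝ) < 2 ^ g := by positivity
  by_cases hne : ((range (2 ^ g)).filter (fun j : ℕ => |y1 + (j / 2 ^ g : ℝ) * y2| ≤ σ)) = ∅
  · rw [hne]
    simp only [card_empty, Nat.cast_zero]
    apply mul_nonneg hG.le
    apply Finset.sum_nonneg
    intro i _
    split_ifs <;> simp <;> positivity
  obtain ⟨j, hj⟩ := Finset.nonempty_iff_ne_empty.2 hne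
  simp only [mem_filter, mem_range] at hj
  obtain ⟨hjG, hj⟩ := hj
  set m := max |y2| σ with hm
  have hm1 : 1 ≤ m / σ := by rw [le_div_iff₀ hσ, one_mul]; exact le_max_right _ _
  obtain ⟨i, hi1, hi2⟩ := exists_nat_pow_near hm1 (one_lt_two)
  rw [le_div_iff₀ hσ] at hi1
  rw [div_lt_iff₀ hσ] at hi2
  have hmle : m ≤ 2 * c * (σ * 2 ^ g) := by
    apply max_le hy2
    have : (1:ℝ) ≤ 2 ^ g := one_le_pow₀ (by norm_num)
    nlinarith [mul_pos hσ hG, mul_le_mul_of_nonneg_left this hσ.le]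
  have h2i : (2:ℝ) ^ i ≤ 2 * c * 2 ^ g := by
    have : (2:ℝ) ^ i * σ ≤ 2 * c * 2 ^ g * σ := by linarith
    exact le_of_mul_le_mul_right this hσ
  have hiI : i < g + J + 1 := by
    have : (2:ℝ) ^ i < 2 ^ (J + g) := by
      rw [pow_add]
      nlinarith
    have := (pow_lt_pow_iff_right₀ (by norm_num : (1:ℝ) < 2)).1 this
    omega
  have hy1 : |y1| ≤ 2 * m := by
    have e : y1 = (y1 + (j / 2 ^ g : ℝ) * y2) - (j / 2 ^ g : ℝ) * y2 := by ring
    have h01 : (j / 2 ^ g : ℝ) ≤ 1 := by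
      rw [div_le_one hG]; exact_mod_cast hjG.le
    have h00 : (0:ℝ) ≤ (j / 2 ^ g : ℝ) := by positivity
    have h3 : |(j / 2 ^ g : ℝ) * y2| ≤ |y2| := by
      rw [abs_mul, abs_of_nonneg h00]
      nlinarith [abs_nonneg y2]
    have h4 : |y1| ≤ |y1 + (j / 2 ^ g : ℝ) * y2| + |(j / 2 ^ g : ℝ) * y2| := by
      conv_lhs => rw [e]
      exact abs_sub _ _
    have h5 : |y2| ≤ m := le_max_left _ _
    have h6 : σ ≤ m := le_max_right _ _
    linarith
  have hind : |y2| ≤ 2 ^ (i+1) * σ ∧ |y1| ≤ 2 ^ (i+2) * σ := by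
    constructor
    · exact (le_max_left _ _).trans hi2.le
    · have : (2:ℝ) ^ (i+2) = 2 * 2 ^ (i+1) := by ring
      rw [this]; linarith
  have hterm := Finset.single_le_sum (f := fun i => (4 * c) * (1/2) ^ i *
        (if |y2| ≤ 2 ^ (i+1) * σ ∧ |y1| ≤ 2 ^ (i+2) * σ then (1:ℝ) else 0))
    (s := range (g + J + 1)) (fun i _ => by split_ifs <;> simp <;> positivity) (mem_range.2 hiI)
  refine le_trans ?_ (mul_le_mul_of_nonneg_left hterm hG.le)
  simp only [if_pos hind, mul_one]
  have h2i0 : (0:ℝ) < 2 ^ i := by positivity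
  rw [one_div, inv_pow]
  by_cases hi0 : i = 0
  · subst hi0
    have := Finset.card_filter_le (range (2^g)) (fun j : ℕ => |y1 + (j / 2 ^ g : ℝ) * y2| ≤ σ)
    rw [card_range] at this
    have : (((range (2 ^ g)).filter (fun j : ℕ => |y1 + (j / 2 ^ g : ℝ) * y2| ≤ σ)).card : ℝ) ≤ 2 ^ g := by
      exact_mod_cast this
    simp
    nlinarith
  · have hi0' : (2:ℝ) ≤ 2 ^ i := by
      calc (2:ℝ) = 2 ^ 1 := by norm_num
        _ ≤ 2 ^ i := pow_le_pow_right₀ (by norm_num) (by omega)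
    have hmy : m = |y2| := by
      rw [hm, max_eq_left_iff]
      by_contra hlt
      push Not at hlt
      have : m = σ := max_eq_right hlt.le
      nlinarith
    rw [hmy] at hi1
    have hy2pos : 0 < |y2| := lt_of_lt_of_le (by positivity) hi1
    have hcard := card_near (2 ^ g) (-(2 ^ g * y1 / y2)) (2 ^ g * σ / |y2|) (by positivity)
      (fun j : ℕ => |y1 + (j / 2 ^ g : ℝ) * y2| ≤ σ) (by
        intro j hj
        have hy20 : y2 ≠ 0 := abs_pos.1 hy2pos
        have e : (j:ℝ) - -(2 ^ g * y1 / y2) = 2 ^ g * (y1 + (j / 2 ^ g : ℝ) * y2) / y2 := by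
          field_simp
          ring
        rw [e, abs_div, abs_mul, abs_of_pos hG]
        gcongr)
    refine hcard.trans ?_
    have h7 : 2 ^ g * σ / |y2| ≤ 2 ^ g * (2 ^ i)⁻¹ := by
      rw [mul_div_assoc]
      apply mul_le_mul_of_nonneg_left _ hG.le
      rw [div_le_iff₀ hy2pos, ← div_eq_inv_mul, le_div_iff₀ h2i0]
      linarith
    have h8 : (1:ℝ) ≤ 2 * c * (2 ^ g * (2 ^ i)⁻¹) := by
      rw [← mul_assoc, ← div_eq_mul_inv, le_div_iff₀ h2i0]
      linarith
    have h9 : (0:ℝ) < 2 ^ g * (2 ^ i)⁻¹ := by positivity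
    nlinarith

end EntT

namespace EntT
open Finset

section mar
variable {Ω : Type} [Fintype Ω] {p : Ω → ℝ} {X : Ω → ℤ} {n : ℕ} {s L : ℝ}

lemma marstrand (hp : IsPr p) (c : ℝ) (hc : 1 ≤ c) (J : ℕ) (hJ : 2 * c < 2 ^ J)
    (hX : ∀ ω, p ω ≠ 0 → |(X ω : ℝ)| ≤ c * 2 ^ n) (hF : Fr p X n L s) (hL : 1 ≤ L) (hs : 0 ≤ s)
    (hs2 : 2 * s ≤ 1) (g : ℕ) (hg : g ≤ n) :
    ∃ j : ℕ, j < 2 ^ g ∧ 2 * s * g - 2 * Real.logb 2 L - Real.logb 2 (16 * c * (g + J + 1)) ≤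
      H (pm p p) (fun t => ⌊((X t.1 : ℝ) + (j / 2 ^ g : ℝ) * X t.2) / 2 ^ (n - g)⌋) := by
  classical
  have hpp := hp.pm hp
  set σ : ℝ := 2 ^ (n - g) with hσdef
  have hσ : 0 < σ := by positivity
  have hσ1 : 1 ≤ σ := one_le_pow₀ (by norm_num)
  have hσG : σ * 2 ^ g = 2 ^ n := by rw [hσdef, ← pow_add]; congr 1; omega
  have hG : (0:ℝ) < 2 ^ g := by positivity
  set f : ℕ → Ω × Ω → ℤ := fun j t => ⌊((X t.1 : ℝ) + (j / 2 ^ g : ℝ) * X t.2) / σ⌋ with hf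
  set coll : ℕ → ℝ := fun j => ∑ t, pm p p t * pr (pm p p) (f j) (f j t) with hcoll
  set B : ℝ := 16 * c * (g + J + 1) * L ^ 2 * (2 ^ g : ℝ) ^ (-(2 * s)) with hB
  have hBpos : 0 < B := by positivity
  -- bound per scale
  have hscale : ∀ (t : Ω × Ω) (i : ℕ), (1/2:ℝ) ^ i * prE (pm p p) (fun t' =>
      |(X t'.2 : ℝ) - X t.2| ≤ 2 ^ (i+1) * σ ∧ |(X t'.1 : ℝ) - X t.1| ≤ 2 ^ (i+2) * σ) ≤
      4 * L ^ 2 * (2 ^ g : ℝ) ^ (-(2 * s)) := by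
    intro t i
    have hle : ∀ x : ℝ, prE p (fun ω => |(X ω : ℝ) - x| ≤ 2 ^ (i+2) * σ) ≤
        L * (2 ^ (i+2) / 2 ^ g) ^ s := by
      intro x
      have := hF x (2 ^ (i+2) * σ) (by
        have : (1:ℝ) ≤ 2 ^ (i+2) := one_le_pow₀ (by norm_num)
        nlinarith)
      rw [← hσG, mul_comm σ, mul_div_mul_right _ _ hσ.ne'] at this
      exact this
    have h1 : prE (pm p p) (fun t' =>
      |(X t'.2 : ℝ) - X t.2| ≤ 2 ^ (i+1) * σ ∧ |(X t'.1 : ℝ) - X t.1| ≤ 2 ^ (i+2) * σ) ≤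
      (L * (2 ^ (i+2) / 2 ^ g) ^ s) * (L * (2 ^ (i+2) / 2 ^ g) ^ s) := by
      refine (prE_mono (F := fun t' : Ω × Ω => |(X t'.1 : ℝ) - X t.1| ≤ 2 ^ (i+2) * σ ∧
        |(X t'.2 : ℝ) - X t.2| ≤ 2 ^ (i+2) * σ) hpp ?_).trans ?_
      · rintro t' _ ⟨h1, h2⟩
        refine ⟨h2, h1.trans ?_⟩
        gcongr <;> norm_num
      · have := pr_prod (p := p) (q := p) (fun ω => |(X ω : ℝ) - X t.1| ≤ 2 ^ (i+2) * σ)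
          (fun ω => |(X ω : ℝ) - X t.2| ≤ 2 ^ (i+2) * σ) True True
        have e : prE (pm p p) (fun t' : Ω × Ω => |(X t'.1 : ℝ) - X t.1| ≤ 2 ^ (i+2) * σ ∧
          |(X t'.2 : ℝ) - X t.2| ≤ 2 ^ (i+2) * σ) = pr (pm p p) (fun t' : Ω × Ω =>
          (|(X t'.1 : ℝ) - X t.1| ≤ 2 ^ (i+2) * σ, |(X t'.2 : ℝ) - X t.2| ≤ 2 ^ (i+2) * σ)) (True, True) :=
          pr_congr (by intro ω; simp)
        rw [e, this]
        exact mul_le_mul (hle _) (hle _) (prE_nonneg hp _) (by positivity)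
    have h2 : ((2:ℝ) ^ (i+2) / 2 ^ g) ^ s * (2 ^ (i+2) / 2 ^ g) ^ s ≤
        2 ^ (i+2) * (2 ^ g : ℝ) ^ (-(2 * s)) := by
      rw [← Real.rpow_add (by positivity), Real.div_rpow (by positivity) (by positivity),
        Real.rpow_neg (by positivity), div_eq_mul_inv, show s + s = 2 * s by ring]
      apply mul_le_mul_of_nonneg_right _ (by positivity)
      calc ((2:ℝ) ^ (i+2)) ^ (2 * s) ≤ ((2:ℝ) ^ (i+2)) ^ (1:ℝ) :=
            Real.rpow_le_rpow_of_exponent_le (one_le_pow₀ (by norm_num)) hs2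
        _ = _ := by rw [Real.rpow_one]
    calc _ ≤ (1/2:ℝ) ^ i * ((L * (2 ^ (i+2) / 2 ^ g) ^ s) * (L * (2 ^ (i+2) / 2 ^ g) ^ s)) := by
          gcongr
      _ = (1/2:ℝ) ^ i * L ^ 2 * (((2:ℝ) ^ (i+2) / 2 ^ g) ^ s * (2 ^ (i+2) / 2 ^ g) ^ s) := by ring
      _ ≤ (1/2:ℝ) ^ i * L ^ 2 * (2 ^ (i+2) * (2 ^ g : ℝ) ^ (-(2 * s))) := by gcongr
      _ = ((1/2:ℝ) ^ i * 2 ^ i) * 4 * L ^ 2 * (2 ^ g : ℝ) ^ (-(2 * s)) := by ring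
      _ = _ := by rw [← mul_pow]; norm_num
  have hsum : ∑ j ∈ range (2 ^ g), coll j ≤ ∑ j ∈ range (2 ^ g), B := by
    have step1 : ∀ t, ∑ j ∈ range (2 ^ g), pr (pm p p) (f j) (f j t) ≤ (2:ℝ) ^ g * B ∨ pm p p t = 0 := by
      intro t
      by_cases ht : pm p p t = 0
      · right; exact ht
      left
      have hx2 := hX t.2 (right_ne_zero_of_mul ht)
      calc ∑ j ∈ range (2 ^ g), pr (pm p p) (f j) (f j t)
          ≤ ∑ j ∈ range (2 ^ g), ∑ t', (if |((X t'.1:ℝ) - X t.1) + (j / 2 ^ g : ℝ) * ((X t'.2:ℝ) - X t.2)| ≤ σ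
              then pm p p t' else 0) := by
            apply Finset.sum_le_sum
            intro j _
            rw [← prE_eq]
            apply pr_le_prE hpp
            intro t' _ h
            have := Int.abs_sub_lt_one_of_floor_eq_floor h
            rw [← sub_div, abs_div, abs_of_pos hσ, div_lt_one hσ] at this
            refine le_trans (le_of_eq ?_) this.le
            congr 1; ring
        _ = ∑ t', pm p p t' * (((range (2 ^ g)).filter (fun j : ℕ =>
              |((X t'.1:ℝ) - X t.1) + (j / 2 ^ g : ℝ) * ((X t'.2:ℝ) - X t.2)| ≤ σ)).card : ℝ) := by
            rw [Finset.sum_comm]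
            apply Finset.sum_congr rfl
            intro t' _
            rw [← Finset.sum_filter, Finset.sum_const, nsmul_eq_mul, mul_comm]
        _ ≤ ∑ t', pm p p t' * (2 ^ g * ∑ i ∈ range (g + J + 1), (4 * c) * (1/2) ^ i *
            (if |(X t'.2:ℝ) - X t.2| ≤ 2 ^ (i+1) * σ ∧ |(X t'.1:ℝ) - X t.1| ≤ 2 ^ (i+2) * σ then 1 else 0)) := by
            apply Finset.sum_le_sum
            intro t' _
            by_cases ht' : pm p p t' = 0
            · simp [ht']
            apply mul_le_mul_of_nonneg_left _ (hpp.nonneg t')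
            apply count_dir g J c σ hσ hc hJ
            have hx2' := hX t'.2 (right_ne_zero_of_mul ht')
            rw [hσG]
            refine (abs_sub _ _).trans ?_
            linarith
        _ = 2 ^ g * ∑ i ∈ range (g + J + 1), (4 * c) * ((1/2) ^ i * prE (pm p p) (fun t' =>
              |(X t'.2 : ℝ) - X t.2| ≤ 2 ^ (i+1) * σ ∧ |(X t'.1 : ℝ) - X t.1| ≤ 2 ^ (i+2) * σ)) := by
            simp_rw [prE_eq, Finset.mul_sum]
            rw [Finset.sum_comm]
            apply Finset.sum_congr rfl
            intro i _
            apply Finset.sum_congr rfl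
            intro t' _
            split_ifs
            · ring
            · simp
        _ ≤ 2 ^ g * ∑ i ∈ range (g + J + 1), (4 * c) * (4 * L ^ 2 * (2 ^ g : ℝ) ^ (-(2 * s))) := by
            apply mul_le_mul_of_nonneg_left _ hG.le
            apply Finset.sum_le_sum
            intro i _
            exact mul_le_mul_of_nonneg_left (hscale t i) (by positivity)
        _ = 2 ^ g * B := by
            rw [Finset.sum_const, card_range, nsmul_eq_mul, hB]
            push_cast
            ring
    rw [Finset.sum_const, card_range, nsmul_eq_mul, hcoll, Finset.sum_comm]
    simp_rw [← Finset.mul_sum]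
    push_cast
    apply avg_le hpp
    intro t ht
    exact (step1 t).resolve_right ht
  obtain ⟨j, hj, hjB⟩ := Finset.exists_le_of_sum_le (by simp) hsum
  refine ⟨j, mem_range.1 hj, ?_⟩
  refine le_trans (le_of_eq ?_) (H_ge_of_collision hpp (f j) B hBpos hjB)
  have e1 : Real.logb 2 B = Real.logb 2 (16 * c * (g + J + 1)) + Real.logb 2 (L ^ 2) +
      Real.logb 2 ((2 ^ g : ℝ) ^ (-(2 * s))) := by
    rw [hB, Real.logb_mul (by positivity) (by positivity), Real.logb_mul (by positivity) (by positivity)]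
  have e2 : Real.logb 2 ((2 ^ g : ℝ) ^ (-(2 * s))) = -(2 * s) * g := by
    rw [Real.logb_rpow_eq_mul_logb_of_pos (by positivity), Real.logb_pow]
    simp
  have e3 : Real.logb 2 (L ^ 2) = 2 * Real.logb 2 L := by
    rw [Real.logb_pow]
    simp
  rw [e1, e2, e3]
  ring

end mar
end EntT

namespace EntT
open Finset

section core
variable {Ω Ω' : Type} [Fintype Ω] [Fintype Ω'] {p : Ω → ℝ} {q : Ω' → ℝ} {X : Ω → ℤ}
    {W : Ω' → ℤ} {v0 : ℤ} {κ c : ℝ} {n : ℕ} {s θ δ L r : ℝ}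

/-- slopes -/
def slopes (p : Ω → ℝ) (X : Ω → ℤ) (M : ℝ) : Set ℝ :=
  {b | ∃ w1 w2 w3 w4 : Ω, p w1 ≠ 0 ∧ p w2 ≠ 0 ∧ p w3 ≠ 0 ∧ p w4 ≠ 0 ∧
    M ≤ |(X w3 : ℝ) - X w4| ∧ b * ((X w3 : ℝ) - X w4) = (X w1 : ℝ) - X w2}

/-- consequence of equality of `U` -/
lemma U_eq (hκ : κ ≠ 0) (U : Ω × Ω → ℤ) (D : ℤ) (hD0 : D ≠ 0) (b : ℝ)
    (hU : ∀ t, |(U t : ℝ) - (2 * κ * D / 2 ^ n) * (X t.1 + b * X t.2)| ≤ 4) (t t' : Ω × Ω)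
    (h : U t = U t') :
    |((X t.1 : ℝ) - X t'.1) + b * (X t.2 - X t'.2)| ≤ 4 / |κ| * (2 ^ n / |(D:ℝ)|) := by
  have h2 : (0:ℝ) < 2 ^ n := by positivity
  have hD : 0 < |(D:ℝ)| := abs_pos.2 (by exact_mod_cast hD0)
  have hk : 0 < |κ| := abs_pos.2 hκ
  have a1 := abs_le.1 (hU t)
  have a2 := abs_le.1 (hU t')
  rw [h] at a1
  have h3 : |(2 * κ * D / 2 ^ n) * (((X t.1 : ℝ) - X t'.1) + b * (X t.2 - X t'.2))| ≤ 8 := by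
    rw [abs_le]
    constructor <;> linarith
  rw [abs_mul, abs_div, abs_mul, abs_mul, abs_two, abs_of_pos h2] at h3
  rw [div_mul_eq_mul_div, div_le_iff₀ h2] at h3
  rw [div_mul_div_comm, le_div_iff₀ (by positivity)]
  linarith

lemma gap_false (hC : CoreH p q X W v0 κ c n s θ δ L r) (k : ℕ) (hkn : 3 * k ≤ n)
    (hk : 4 / |κ| < 2 ^ k)
    (h3 : 9 * θ + 8 * δ + 3 * Real.logb 2 L - s * Real.logb 2 r + K0 κ c +
      Real.logb 2 (4 / |κ| + 2 * c) < s * k)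
    (ω : Fin 6 → Ω) (hω : ∀ i, p (ω i) ≠ 0)
    (D : ℤ) (hD : D = X (ω 2) - X (ω 3)) (hDk : 2 ^ (n - k) ≤ |(D:ℝ)|) (b : ℝ) (hb0 : 0 ≤ b) (hb1 : b ≤ 1)
    (hb : b * (2 * D) = ((X (ω 0) : ℝ) - X (ω 1)) + (X (ω 4) - X (ω 5)))
    (hgap : ∀ b' ∈ slopes p X (2 ^ (n - k)), 1 / 2 ^ (n - 3 * k) ≤ |b' - b|) : False := by
  classical
  have h2n : (0:ℝ) < 2 ^ n := by positivity
  have h2nk : (0:ℝ) < 2 ^ (n - k) := by positivity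
  have hD0' : 0 < |(D:ℝ)| := lt_of_lt_of_le h2nk hDk
  have hD0 : D ≠ 0 := by
    rintro rfl
    simp at hD0'
  obtain ⟨U, hU, hup⟩ := core_upper hC ω hω D hD hD0 b hb0 hb1 hb
  obtain ⟨hp, hq, hX, hab, hV, hd, hW, hF, hL, hr, hr1, hκ, hc, hs, hs1⟩ := hC
  have hpp := hp.pm hp
  have hκ' : 0 < |κ| := abs_pos.2 hκ
  have hK1 : 0 < 4 / |κ| := by positivity
  set K1 : ℝ := 4 / |κ| + 2 * c with hK1def
  have hDle : |(D:ℝ)| ≤ 2 * c * 2 ^ n := by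
    rw [hD]
    push_cast
    refine (abs_sub _ _).trans ?_
    have := hX _ (hω 2)
    have := hX _ (hω 3)
    linarith
  set R1 : ℝ := K1 * (2 ^ n / |(D:ℝ)|) with hR1def
  have hR1 : 1 ≤ R1 := by
    rw [hR1def, ← mul_div_assoc, le_div_iff₀ hD0', hK1def]
    nlinarith
  have hnk : (2:ℝ) ^ (n - k) * 2 ^ k = 2 ^ n := by rw [← pow_add]; congr 1; omega
  have hnDk : 2 ^ n / |(D:ℝ)| ≤ 2 ^ k := by
    rw [div_le_iff₀ hD0', ← hnk, mul_comm]
    gcongr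
  -- U determines the second coordinate coarsely
  have key : ∀ t t', pm p p t ≠ 0 → pm p p t' ≠ 0 → U t = U t' →
      |(X t'.2 : ℝ) - X t.2| ≤ 2 ^ (n - k) := by
    intro t t' ht ht' he
    by_contra hlt
    push Not at hlt
    have hz := U_eq hκ U D hD0 b hU t t' he
    have hne : 0 < |(X t'.2 : ℝ) - X t.2| := lt_trans h2nk hlt
    have hne' : (X t'.2 : ℝ) - X t.2 ≠ 0 := abs_pos.1 hne
    have hmem : ((X t.1 : ℝ) - X t'.1) / ((X t'.2 : ℝ) - X t.2) ∈ slopes p X (2 ^ (n - k)) :=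
      ⟨t.1, t'.1, t'.2, t.2, left_ne_zero_of_mul ht, left_ne_zero_of_mul ht', right_ne_zero_of_mul ht',
        right_ne_zero_of_mul ht, hlt.le, by field_simp⟩
    have hg := hgap _ hmem
    have e : ((X t.1 : ℝ) - X t'.1) / ((X t'.2 : ℝ) - X t.2) - b =
      (((X t.1 : ℝ) - X t'.1) + b * (X t.2 - X t'.2)) / ((X t'.2 : ℝ) - X t.2) := by
      field_simp
      ring
    rw [e, abs_div, div_le_div_iff₀ (by positivity) hne, one_mul] at hg
    have h4 : |((X t.1 : ℝ) - X t'.1) + b * (X t.2 - X t'.2)| < 2 ^ k * 2 ^ k := by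
      calc _ ≤ 4 / |κ| * (2 ^ n / |(D:ℝ)|) := hz
        _ ≤ 4 / |κ| * 2 ^ k := by gcongr
        _ < 2 ^ k * 2 ^ k := by gcongr
    have h5 : (2:ℝ) ^ k * 2 ^ k * 2 ^ (n - 3 * k) = 2 ^ (n - k) := by
      rw [← pow_add, ← pow_add]; congr 1; omega
    have h6 : |((X t.1 : ℝ) - X t'.1) + b * (X t.2 - X t'.2)| * 2 ^ (n - 3 * k) <
      2 ^ k * 2 ^ k * 2 ^ (n - 3 * k) := by gcongr
    linarith
  -- lower bound
  set B : ℝ := (L * (2 ^ (n - k) / 2 ^ n) ^ s) * (L * (R1 / 2 ^ n) ^ s) with hB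
  have hlow : -Real.logb 2 B ≤ H (pm p p) U := by
    apply H_ge_of_pr_le hpp
    intro t ht
    refine (pr_le_prE (E := fun t' : Ω × Ω => |(X t'.2 : ℝ) - X t.2| ≤ 2 ^ (n - k) ∧
      |(X t'.1 : ℝ) - (X t.1 + b * (X t.2 - X t'.2))| ≤ R1) hpp U (U t) ?_).trans ?_
    · intro t' ht' he
      refine ⟨key t t' ht ht' he.symm, ?_⟩
      have hz := U_eq hκ U D hD0 b hU t t' he.symm
      rw [abs_sub_comm]
      calc |(X t.1 : ℝ) + b * (X t.2 - X t'.2) - X t'.1| =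
          |((X t.1 : ℝ) - X t'.1) + b * (X t.2 - X t'.2)| := by congr 1; ring
        _ ≤ 4 / |κ| * (2 ^ n / |(D:ℝ)|) := hz
        _ ≤ R1 := by
          rw [hR1def]
          apply mul_le_mul_of_nonneg_right _ (by positivity)
          rw [hK1def]; linarith
    · rw [prE_prod']
      calc _ ≤ ∑ ω', (if |(X ω' : ℝ) - X t.2| ≤ 2 ^ (n - k) then p ω' else 0) * (L * (R1 / 2 ^ n) ^ s) := by
            apply Finset.sum_le_sum
            intro ω' _
            split_ifs with hif
            · apply mul_le_mul_of_nonneg_left _ (hp.nonneg _)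
              refine le_trans (prE_mono hp ?_) (hF (X t.1 + b * (X t.2 - X ω')) R1 hR1)
              intro ω _ h
              exact h.2
            · have : prE p (fun ω => |(X ω' : ℝ) - X t.2| ≤ 2 ^ (n - k) ∧
                |(X ω : ℝ) - (X t.1 + b * (X t.2 - X ω'))| ≤ R1) = 0 := by
                rw [prE_eq]; simp [hif]
              simp only [this, mul_zero, zero_mul, le_refl]
        _ = prE p (fun ω' => |(X ω' : ℝ) - X t.2| ≤ 2 ^ (n - k)) * (L * (R1 / 2 ^ n) ^ s) := by
            rw [prE_eq, Finset.sum_mul]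
        _ ≤ B := by
            rw [hB]
            apply mul_le_mul_of_nonneg_right _ (by positivity)
            exact hF _ _ (one_le_pow₀ (by norm_num))
  have hL0 : 0 < L := by linarith
  have l1 := logb_fr n L s (2 ^ (n - k)) hL0 h2nk
  have l2 := logb_fr n L s R1 hL0 (by linarith)
  have l3 : Real.logb 2 B = Real.logb 2 (L * (2 ^ (n - k) / 2 ^ n) ^ s) + Real.logb 2 (L * (R1 / 2 ^ n) ^ s) := by
    rw [hB, Real.logb_mul (by positivity) (by positivity)]
  have l4 : Real.logb 2 ((2:ℝ) ^ (n - k)) = n - k := by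
    rw [Real.logb_pow, Nat.cast_sub (by omega)]; simp
  have l5 : Real.logb 2 R1 = Real.logb 2 K1 + n - Real.logb 2 |(D:ℝ)| := by
    rw [hR1def, Real.logb_mul (by positivity) (by positivity), Real.logb_div h2n.ne' hD0'.ne', Real.logb_pow]
    simp; ring
  rw [l4] at l1
  rw [l5] at l2
  have l6 : 0 ≤ Real.logb 2 K1 := Real.logb_nonneg (by norm_num) (by rw [hK1def]; linarith)
  have l7 : s * Real.logb 2 K1 ≤ Real.logb 2 K1 := by nlinarith
  have e1 : s * (n - (n - k)) = s * (k:ℝ) := by ring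
  have e2 : s * (n - (Real.logb 2 K1 + n - Real.logb 2 |(D:ℝ)|)) = s * Real.logb 2 |(D:ℝ)| - s * Real.logb 2 K1 := by ring
  have e3 : s * (n - Real.logb 2 |(D:ℝ)|) = s * n - s * Real.logb 2 |(D:ℝ)| := by ring
  linarith

lemma Fr_mono (hp : IsPr p) (hF : Fr p X n L s) (hL : 1 ≤ L) {s' : ℝ} (h0 : 0 ≤ s') (h : s' ≤ s) : Fr p X n L s' := by
  intro x R hR
  have h2n : (0:ℝ) < 2 ^ n := by positivity
  by_cases hR1 : R / 2 ^ n ≤ 1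
  · refine (hF x R hR).trans ?_
    apply mul_le_mul_of_nonneg_left _ (by linarith)
    exact Real.rpow_le_rpow_of_exponent_ge (by positivity) hR1 h
  · push Not at hR1
    refine (prE_le_one hp _).trans ?_
    have : 1 ≤ (R / 2 ^ n) ^ s' := Real.one_le_rpow hR1.le h0
    nlinarith

lemma core_false (hC : CoreH p q X W v0 κ c n s θ δ L r) (k J : ℕ) (hkn : 3 * k ≤ n)
    (hJ : 2 * c < 2 ^ J) (hk : 4 / |κ| < 2 ^ k) (h1 : Real.logb 2 L < s * k)
    (h3 : 9 * θ + 8 * δ + 3 * Real.logb 2 L - s * Real.logb 2 r + K0 κ c +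
      Real.logb 2 (4 / |κ| + 2 * c) < s * k)
    (h4 : 9 * θ + 8 * δ + 3 * Real.logb 2 L - s * Real.logb 2 r + K0 κ c + Real.logb 2 (2 * c) +
      Real.logb 2 (2 * (4 / |κ| + 6 * c + 1) + 1) + Real.logb 2 (16 * c * (((n - 3 * k : ℕ) : ℝ) + J + 1))
        < 2 * min s (1/2) * ((n - 3 * k : ℕ) : ℝ) - s * n) : False := by
  classical
  have hC' := hC
  obtain ⟨hp, hq, hX, hab, hV, hd, hW, hF, hL, hr, hr1, hκ, hc, hs, hs1⟩ := hC
  have hpp := hp.pm hp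
  set g := n - 3 * k with hg
  set B := slopes p X (2 ^ (n - k)) with hB
  have h2n : (0:ℝ) < 2 ^ n := by positivity
  have h2nk : (0:ℝ) < 2 ^ (n - k) := by positivity
  have hnk : (2:ℝ) ^ (n - k) * 2 ^ k = 2 ^ n := by rw [← pow_add]; congr 1; omega
  have hκ' : 0 < |κ| := abs_pos.2 hκ
  have hK1 : 0 < 4 / |κ| := by positivity
  -- a far pair
  obtain ⟨w0, hw0, -⟩ := exists_ge_avg hp (fun _ => (0:ℝ)) 0 (by simp)
  obtain ⟨w1, hw1, hfar⟩ : ∃ w, p w ≠ 0 ∧ ¬ |(X w : ℝ) - X w0| ≤ 2 ^ (n - k) := by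
    apply prE_exists
    rw [prE_not hp]
    have := hF (X w0) (2 ^ (n - k)) (one_le_pow₀ (by norm_num))
    have hlt : L * (2 ^ (n - k) / 2 ^ n) ^ s < 1 := by
      have l1 := logb_fr n L s (2 ^ (n - k)) (by linarith) h2nk
      have l4 : Real.logb 2 ((2:ℝ) ^ (n - k)) = n - k := by
        rw [Real.logb_pow, Nat.cast_sub (by omega)]; simp
      rw [l4] at l1
      have : Real.logb 2 (L * (2 ^ (n - k) / 2 ^ n) ^ s) < 0 := by
        have e1 : s * (n - (n - k)) = s * (k:ℝ) := by ring
        linarith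
      by_contra hge
      push Not at hge
      have := Real.logb_nonneg (by norm_num : (1:ℝ) < 2) hge
      linarith
    linarith
  push Not at hfar
  have h0B : (0:ℝ) ∈ B := ⟨w0, w0, w1, w0, hw0, hw0, hw1, hw0, hfar.le, by simp⟩
  have h1B : (1:ℝ) ∈ B := ⟨w1, w0, w1, w0, hw1, hw0, hw1, hw0, hfar.le, by simp⟩
  have hρ : (0:ℝ) ≤ 1 / 2 ^ g := by positivity
  have hdense := dich B (1 / 2 ^ g) hρ h0B h1B (by
    rintro b' ⟨z1, z2, z3, z4, hz1, hz2, hz3, hz4, hM, he⟩ hb0 hb1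
    constructor
    · by_contra hno
      push Not at hno
      refine gap_false hC' k hkn hk h3 ![z1, z2, z3, z4, z1, z1] ?_ (X z3 - X z4) rfl ?_ (b' / 2)
        (by linarith) (by linarith) ?_ hno
      · intro i; fin_cases i <;> assumption
      · push_cast; exact hM
      · show b' / 2 * (2 * ((X z3 - X z4 : ℤ) : ℝ)) = ((X z1 : ℝ) - X z2) + (X z1 - X z1)
        push_cast
        linarith
    · by_contra hno
      push Not at hno
      refine gap_false hC' k hkn hk h3 ![z1, z2, z3, z4, z3, z4] ?_ (X z3 - X z4) rfl ?_ ((b' + 1) / 2)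
        (by linarith) (by linarith) ?_ hno
      · intro i; fin_cases i <;> assumption
      · push_cast; exact hM
      · show (b' + 1) / 2 * (2 * ((X z3 - X z4 : ℤ) : ℝ)) = ((X z1 : ℝ) - X z2) + (X z3 - X z4)
        push_cast
        linarith)
  have hs' : 0 ≤ min s (1/2) := le_min hs.le (by norm_num)
  obtain ⟨j, hj, hmar⟩ := marstrand hp c hc J hJ hX (Fr_mono hp hF hL hs' (min_le_left _ _)) hL hs'
    (by have := min_le_right s (1/2); linarith) g (by omega)
  have hG : (0:ℝ) < 2 ^ g := by positivity
  obtain ⟨b, ⟨z1, z2, z3, z4, hz1, hz2, hz3, hz4, hM, he⟩, hb0, hb1, hbj⟩ :=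
    hdense g (j / 2 ^ g) (by positivity) (by rw [div_le_one hG]; exact_mod_cast hj.le)
  have hbj' : |b - j / 2 ^ g| ≤ 3 / 2 ^ g := by
    refine hbj.trans (le_of_eq ?_)
    rw [one_div_pow]; ring
  have hD0' : 0 < |((X z3 - X z4 : ℤ):ℝ)| := by push_cast; exact lt_of_lt_of_le h2nk hM
  have hD0 : X z3 - X z4 ≠ 0 := by
    intro h0
    rw [h0] at hD0'
    simp at hD0'
  obtain ⟨U, hU, hup⟩ := core_upper hC' ![z1, z2, z3, z4, z1, z2] (by intro i; fin_cases i <;> assumption)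
    (X z3 - X z4) rfl hD0 b hb0 hb1 (by
      show b * (2 * ((X z3 - X z4 : ℤ) : ℝ)) = ((X z1 : ℝ) - X z2) + (X z1 - X z2)
      push_cast
      linarith)
  set D := X z3 - X z4 with hDdef
  have hng : n - g = 3 * k := by omega
  have hfin := H_int_le hpp (fun t => ⌊((X t.1 : ℝ) + (j / 2 ^ g : ℝ) * X t.2) / 2 ^ (n - g)⌋) U
    (4 / |κ| + 6 * c + 1) (by positivity) (by
      intro t t' ht ht' he
      have hz := U_eq hκ U D hD0 b hU t t' he
      set σ : ℝ := 2 ^ (n - g) with hσ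
      have hσ0 : 0 < σ := by positivity
      have hnDk : 2 ^ n / |(D:ℝ)| ≤ σ := by
        rw [div_le_iff₀ hD0', hσ, hng]
        calc (2:ℝ) ^ n = 2 ^ k * 2 ^ (n - k) := by rw [mul_comm]; exact hnk.symm
          _ ≤ 2 ^ (3 * k) * |(D:ℝ)| := by
            apply mul_le_mul _ _ h2nk.le (by positivity)
            · exact pow_le_pow_right₀ (by norm_num) (by omega)
            · rw [hDdef]; push_cast; exact hM
      have hx2 : |(X t.2 : ℝ) - X t'.2| ≤ 2 * c * 2 ^ n := by
        refine (abs_sub _ _).trans ?_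
        have := hX _ (right_ne_zero_of_mul ht)
        have := hX _ (right_ne_zero_of_mul ht')
        linarith
      have hσG : σ * 2 ^ g = 2 ^ n := by rw [hσ, ← pow_add]; congr 1; omega
      have hprod : |(j / 2 ^ g - b) * ((X t.2 : ℝ) - X t'.2)| ≤ 6 * c * σ := by
        rw [abs_mul, abs_sub_comm]
        calc _ ≤ 3 / 2 ^ g * (2 * c * 2 ^ n) := by gcongr
          _ = 6 * c * σ := by rw [← hσG]; field_simp; ring
      have hz' : |((X t.1 : ℝ) - X t'.1) + b * (X t.2 - X t'.2)| ≤ 4 / |κ| * σ :=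
        hz.trans (by gcongr)
      have htot : |((X t.1 : ℝ) + (j / 2 ^ g : ℝ) * X t.2) / σ - ((X t'.1 : ℝ) + (j / 2 ^ g : ℝ) * X t'.2) / σ| ≤
          4 / |κ| + 6 * c := by
        rw [← sub_div, abs_div, abs_of_pos hσ0, div_le_iff₀ hσ0]
        have e : (X t.1 : ℝ) + (j / 2 ^ g : ℝ) * X t.2 - ((X t'.1 : ℝ) + (j / 2 ^ g : ℝ) * X t'.2) =
          (((X t.1 : ℝ) - X t'.1) + b * (X t.2 - X t'.2)) + (j / 2 ^ g - b) * ((X t.2 : ℝ) - X t'.2) := by ring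
        rw [e]
        refine (abs_add_le _ _).trans ?_
        linarith
      have f1 := Int.floor_le (((X t.1 : ℝ) + (j / 2 ^ g : ℝ) * X t.2) / σ)
      have f2 := Int.lt_floor_add_one (((X t.1 : ℝ) + (j / 2 ^ g : ℝ) * X t.2) / σ)
      have f3 := Int.floor_le (((X t'.1 : ℝ) + (j / 2 ^ g : ℝ) * X t'.2) / σ)
      have f4 := Int.lt_floor_add_one (((X t'.1 : ℝ) + (j / 2 ^ g : ℝ) * X t'.2) / σ)
      rw [abs_le] at htot ⊢
      constructor <;> linarith)
  have hDle : |(D:ℝ)| ≤ 2 * c * 2 ^ n := by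
    rw [hDdef]
    push_cast
    refine (abs_sub _ _).trans ?_
    have := hX _ hz3
    have := hX _ hz4
    linarith
  have hDlog : Real.logb 2 |(D:ℝ)| ≤ Real.logb 2 (2 * c) + n := by
    have := Real.logb_le_logb_of_le (by norm_num : (1:ℝ) < 2) hD0' hDle
    rw [Real.logb_mul (by positivity) h2n.ne', Real.logb_pow] at this
    simpa using this
  have l6 : 0 ≤ Real.logb 2 (2 * c) := Real.logb_nonneg (by norm_num) (by linarith)
  have l8 : - Real.logb 2 (2 * c) ≤ s * (n - Real.logb 2 |(D:ℝ)|) := by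
    have a1 : s * (-Real.logb 2 (2 * c)) ≤ s * (n - Real.logb 2 |(D:ℝ)|) :=
      mul_le_mul_of_nonneg_left (by linarith) hs.le
    nlinarith
  linarith

end core
end EntT

namespace EntT
open Finset

/-- discretised square -/
noncomputable def sq (a : ℝ) (n : ℕ) (x : ℤ) : ℤ := ⌊a * (x:ℝ) ^ 2 / 2 ^ n⌋

lemma sq_close (a : ℝ) (n : ℕ) (x : ℤ) : (sq a n x : ℝ) ≤ a * (x:ℝ) ^ 2 / 2 ^ n ∧
    a * (x:ℝ) ^ 2 / 2 ^ n ≤ sq a n x + 1 :=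
  ⟨Int.floor_le _, (Int.lt_floor_add_one _).le⟩

section sel
variable {Ω : Type} [Fintype Ω] {p : Ω → ℝ} {X : Ω → ℤ} {a c : ℝ} {n : ℕ} {s E L r : ℝ}

noncomputable def WW (a : ℝ) (n : ℕ) (X : Ω → ℤ) : Ω × Ω → ℤ := fun t => sq a n (X t.1) - sq a n (X t.2)

noncomputable def cnd (p : Ω → ℝ) (X : Ω → ℤ) (t : Ω × Ω) : Ω × Ω → ℝ :=
  cond (pm p p) (fun u => X u.1 + X u.2) (X t.1 + X t.2)

noncomputable def gg (p : Ω → ℝ) (X : Ω → ℤ) (a : ℝ) (n : ℕ) (t : Ω × Ω) : ℝ :=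
  (H (pm (cnd p X t) p) (fun u => X u.1.1 - X u.2) - H (cnd p X t) (fun u => X u.1)) +
  (H (pm (cnd p X t) (pm p p)) (fun u => WW a n X u.1 - WW a n X u.2) - H (pm p p) (WW a n X))

lemma ab_of_good (hp : IsPr p) (ha : a ≠ 0) (hr : 0 < r) (t : Ω × Ω) (ht : pm p p t ≠ 0)
    (hV : r * 2 ^ n ≤ |((X t.1 + X t.2 : ℤ) : ℝ)|) :
    Ab p (fun ω => al (2 * a) n (X t.1 + X t.2) (X ω)) (pm p p) (WW a n X) ≤
      gg p X a n t + Real.logb 2 9 + Real.logb 2 (2 * (2 / (|2 * a| * r)) + 1) := by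
  have hpp := hp.pm hp
  have hc : IsPr (cnd p X t) := hpp.cond (fun u => X u.1 + X u.2) ht
  have h2n : (0:ℝ) < 2 ^ n := by positivity
  have hκ : 0 < |2 * a| := abs_pos.2 (by simpa using ha)
  set V : ℤ := X t.1 + X t.2 with hVdef
  have hsum : ∀ u, cnd p X t u ≠ 0 → X u.2 = V - X u.1 := by
    intro u hu
    have := (cond_ne _ _ hu).1
    linarith
  -- approximation of W on the fibre
  have happ : ∀ u, cnd p X t u ≠ 0 →
      |(WW a n X u : ℝ) - ((2 * a) * V * X u.1 / 2 ^ n - a * V ^ 2 / 2 ^ n)| ≤ 1 := by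
    intro u hu
    have z1 := sq_close a n (X u.1)
    have z2 := sq_close a n (X u.2)
    have e : (2 * a) * V * X u.1 / 2 ^ n - a * V ^ 2 / 2 ^ n =
      a * (X u.1 : ℝ) ^ 2 / 2 ^ n - a * (X u.2 : ℝ) ^ 2 / 2 ^ n := by
      rw [hsum u hu]; push_cast; ring
    rw [e]
    unfold WW
    push_cast
    rw [abs_le]
    constructor <;> linarith
  have k1 := ruzsa hp hc hpp (fun ω => al (2 * a) n V (X ω)) (WW a n X) (WW a n X)
  have hpc := hp.pm hc
  have k2 := H_int_le hpc (fun u => al (2 * a) n V (X u.1) - WW a n X u.2) (fun u => X u.1 - X u.2.1) 4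
    (by norm_num) (by
      intro u u' hu hu' he
      have b1 := abs_le.1 (happ u.2 (right_ne_zero_of_mul hu))
      have b2 := abs_le.1 (happ u'.2 (right_ne_zero_of_mul hu'))
      have z1 := al_close (2 * a) n V (X u.1)
      have z2 := al_close (2 * a) n V (X u'.1)
      have he' : (X u.1 : ℝ) - X u.2.1 = X u'.1 - X u'.2.1 := by exact_mod_cast he
      have e2 : 2 * a * V * X u.1 / 2 ^ n - 2 * a * V * X u.2.1 / 2 ^ n =
        2 * a * V * X u'.1 / 2 ^ n - 2 * a * V * X u'.2.1 / 2 ^ n := by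
        rw [← sub_div, ← sub_div, ← mul_sub, ← mul_sub, he']
      push_cast
      rw [abs_le]
      constructor <;> linarith)
  rw [show (2:ℝ) * 4 + 1 = 9 by norm_num] at k2
  have k3 := H_sub_swap hp hc X (fun u => X u.1)
  have k4 := H_int_le hc (fun u => X u.1) (WW a n X) (2 / (|2 * a| * r)) (by positivity) (by
      intro u u' hu hu' he
      have b1 := abs_le.1 (happ u hu)
      have b2 := abs_le.1 (happ u' hu')
      rw [he] at b1
      have h5 : |2 * a * V * X u.1 / 2 ^ n - 2 * a * V * X u'.1 / 2 ^ n| ≤ 2 := by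
        rw [abs_le]
        constructor <;> linarith
      have h6 : |2 * a * V * X u.1 / 2 ^ n - 2 * a * V * X u'.1 / 2 ^ n| =
          |2 * a| * |(V:ℝ)| * |(X u.1:ℝ) - X u'.1| / 2 ^ n := by
        rw [← sub_div, abs_div, abs_of_pos h2n, ← mul_sub, abs_mul, abs_mul]
      rw [h6, div_le_iff₀ h2n] at h5
      have h7 : |2 * a| * (r * 2 ^ n) * |(X u.1:ℝ) - X u'.1| ≤ |2 * a| * |(V:ℝ)| * |(X u.1:ℝ) - X u'.1| := by
        gcongr
      rw [le_div_iff₀ (by positivity)]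
      have : 2 ^ n * (|(X u.1:ℝ) - X u'.1| * (|2 * a| * r)) ≤ 2 ^ n * 2 := by linarith
      exact le_of_mul_le_mul_left this h2n)
  unfold Ab gg
  linarith

lemma gg_nonneg (hp : IsPr p) (t : Ω × Ω) (ht : pm p p t ≠ 0) : 0 ≤ gg p X a n t := by
  have hpp := hp.pm hp
  have hc : IsPr (cnd p X t) := hpp.cond (fun u => X u.1 + X u.2) ht
  have h1 := H_left_le_sub hc hp (fun u => X u.1) X
  have h2 := H_right_le_sub hc hpp (WW a n X) (WW a n X)
  unfold gg
  linarith

lemma gg_avg (hp : IsPr p) (hF : Fr p X n L s) (hL : 1 ≤ L) (hLE : Real.logb 2 L ≤ E)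
    (h1 : H (pm p p) (fun t => X t.1 + X t.2) ≤ s * n + E)
    (h2 : H (pm p p) (fun t => X t.1 - X t.2) ≤ s * n + E)
    (h3 : H (pm (pm p p) (pm p p)) (fun u => WW a n X u.1 - WW a n X u.2) ≤ s * n + E)
    (h4 : s * n - E ≤ H p (fun ω => sq a n (X ω))) :
    ∑ t, pm p p t * gg p X a n t ≤ 6 * E := by
  have hpp := hp.pm hp
  have a1 := avg_cond_prod hpp hp (fun u => X u.1 + X u.2) (fun u => X u.1.1 - X u.2)
  have a2 := avg_cond_prod hpp hpp (fun u => X u.1 + X u.2) (fun u => WW a n X u.1 - WW a n X u.2)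
  have a3 := avg_cond hpp (fun u => X u.1 + X u.2) (fun u => X u.1)
  have e1 := H_push (push_map (push_fst (p := p) hp) (push_id (p := p))) (fun u => X u.1 - X u.2)
  have e2 : H (pm p p) (fun u => (X u.1, X u.1 + X u.2)) = H p X + H p X := by
    rw [← H_prod hp hp X X]
    apply H_congr hpp
    intro u u'
    simp only [Prod.mk.injEq]
    omega
  have e3 := H_ge_fr hp hF (by linarith) X 1 le_rfl (by
    intro ω ω' _ _ h; rw [h]; simp)
  simp only [Real.logb_one, sub_zero] at e3
  have e4 := H_left_le_sub hp hp (fun ω => sq a n (X ω)) (fun ω => sq a n (X ω))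
  have e5 : ∑ t, pm p p t * gg p X a n t =
    (∑ t, pm p p t * H (pm (cnd p X t) p) (fun u => X u.1.1 - X u.2) -
      ∑ t, pm p p t * H (cnd p X t) (fun u => X u.1)) +
    (∑ t, pm p p t * H (pm (cnd p X t) (pm p p)) (fun u => WW a n X u.1 - WW a n X u.2) -
      H (pm p p) (WW a n X)) := by
    have : H (pm p p) (WW a n X) = ∑ t, pm p p t * H (pm p p) (WW a n X) := by
      rw [← Finset.sum_mul, hpp.sum_one, one_mul]
    rw [this, ← Finset.sum_sub_distrib, ← Finset.sum_sub_distrib, ← Finset.sum_add_distrib]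
    apply Finset.sum_congr rfl
    intro t _
    unfold gg
    ring
  rw [e5]
  have e6 : H (pm p p) (fun t => sq a n (X t.1) - sq a n (X t.2)) = H (pm p p) (WW a n X) := rfl
  unfold cnd
  simp only at a1 a2 a3 e1 e2
  linarith

lemma Ab_cond (hp : IsPr p) {Ω' : Type} [Fintype Ω'] {q : Ω' → ℝ} (hq : IsPr q) (F : Ω → Prop)
    (hF : 1 / 2 ≤ prE p F) (A : Ω → ℤ) (W : Ω' → ℤ) (θ : ℝ) (h : Ab p A q W ≤ θ) :
    Ab (cond p F True) A q W ≤ 2 * θ := by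
  classical
  have a1 := avg_cond_prod hp hq F (fun u => A u.1 - W u.2)
  unfold Ab at h ⊢
  obtain ⟨w, hw, hFw⟩ := prE_exists (p := p) (E := F) (by linarith)
  have hcF : IsPr (cond p F True) := by
    have := hp.cond F hw
    rwa [show F w = True by simpa using hFw] at this
  have h0 := H_right_le_sub hcF hq A W
  have hsum : prE p F * (H (pm (cond p F True) q) (fun u => A u.1 - W u.2) - H q W) ≤
      ∑ t, p t * (H (pm (cond p F (F t)) q) (fun u => A u.1 - W u.2) - H q W) := by
    rw [prE_eq, Finset.sum_mul]
    apply Finset.sum_le_sum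
    intro t _
    by_cases ht : p t = 0
    · simp [ht]
    split_ifs with hft
    · rw [show F t = True by simpa using hft]
    · rw [zero_mul]
      apply mul_nonneg (hp.nonneg t)
      have := H_right_le_sub (hp.cond F ht) hq A W
      linarith
  simp_rw [mul_sub] at hsum
  rw [Finset.sum_sub_distrib, ← Finset.sum_mul, hp.sum_one, one_mul] at hsum
  nlinarith

lemma sel (hp : IsPr p) (ha : a ≠ 0) (hc : 1 ≤ c) (hs : 0 < s) (hs1 : s < 1) (hE : 0 < E)
    (hX : ∀ ω, p ω ≠ 0 → |(X ω : ℝ)| ≤ c * 2 ^ n)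
    (hF : Fr p X n L s) (hL : 1 ≤ L) (hLE : Real.logb 2 L ≤ E)
    (h1 : H (pm p p) (fun t => X t.1 + X t.2) ≤ s * n + E)
    (h2 : H (pm p p) (fun t => X t.1 - X t.2) ≤ s * n + E)
    (h3 : H (pm (pm p p) (pm p p)) (fun u => WW a n X u.1 - WW a n X u.2) ≤ s * n + E)
    (h4 : s * n - E ≤ H p (fun ω => sq a n (X ω)))
    (hr : 0 < r) (hr1 : r ≤ 1) (hrn : 1 ≤ r * 2 ^ n) (hrL : L * r ^ s ≤ 1 / 4) :
    ∃ (p' : Ω → ℝ) (v0 : ℤ), CoreH p' (pm p p) X (WW a n X) v0 (2 * a) c n s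
      (2 * (24 * E + Real.logb 2 9 + Real.logb 2 (2 * (2 / (|2 * a| * r)) + 1))) (2 * E) (2 * L) r := by
  classical
  have hpp := hp.pm hp
  have h2n : (0:ℝ) < 2 ^ n := by positivity
  have hav := gg_avg hp hF hL hLE h1 h2 h3 h4
  have hmk := markov hpp (gg p X a n) (fun t ht => gg_nonneg hp t ht) (24 * E)
  have hb1 : prE (pm p p) (fun t => 24 * E < gg p X a n t) ≤ 1 / 4 := by nlinarith
  have hb2 : prE (pm p p) (fun t => |((X t.1 + X t.2 : ℤ) : ℝ)| < r * 2 ^ n) ≤ 1 / 4 := by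
    rw [prE_prod']
    apply avg_le hp
    intro ω' _
    have := hF (-(X ω')) (r * 2 ^ n) hrn
    rw [mul_div_assoc, div_self h2n.ne', mul_one] at this
    refine le_trans (prE_mono hp ?_) (this.trans hrL)
    intro ω _ h
    push_cast at h
    rw [sub_neg_eq_add]
    exact h.le
  set good : Ω × Ω → Prop := fun t => ¬ (24 * E < gg p X a n t ∨ |((X t.1 + X t.2 : ℤ) : ℝ)| < r * 2 ^ n) with hgood
  have hb3 : 1 / 2 ≤ prE (pm p p) good := by
    rw [hgood, prE_not hpp]
    have := prE_or hpp (fun t => 24 * E < gg p X a n t) (fun t => |((X t.1 + X t.2 : ℤ) : ℝ)| < r * 2 ^ n)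
    linarith
  rw [prE_prod'] at hb3
  obtain ⟨w0, hw0, hE0⟩ := exists_ge_avg hp _ _ hb3
  set F : Ω → Prop := fun ω => good (ω, w0) with hFdef
  obtain ⟨w, hw, hFw⟩ := prE_exists (p := p) (E := F) (by linarith)
  have hcF : IsPr (cond p F True) := by
    have := hp.cond F hw
    rwa [show F w = True by simpa using hFw] at this
  have hsupp : ∀ ω, cond p F True ω ≠ 0 → F ω ∧ p ω ≠ 0 := by
    intro ω hω
    have := cond_ne F True hω
    exact ⟨by simpa using this.1, this.2⟩
  refine ⟨cond p F True, X w0, hcF, hpp, ?_, ?_, ?_, ?_, ?_, ?_, by linarith, hr, hr1, by simpa using ha, hc, hs, hs1⟩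
  · intro ω hω
    exact hX ω (hsupp ω hω).2
  · intro ω hω
    obtain ⟨hg, hpω⟩ := hsupp ω hω
    simp only [hFdef, hgood, not_or, not_lt] at hg
    apply Ab_cond hp hpp F hE0
    have := ab_of_good (a := a) (n := n) (X := X) hp ha hr (ω, w0) (mul_ne_zero hpω hw0) hg.2
    linarith [hg.1]
  · intro ω hω
    obtain ⟨hg, hpω⟩ := hsupp ω hω
    simp only [hFdef, hgood, not_or, not_lt] at hg
    exact hg.2
  · have e4 := H_left_le_sub hp hp (fun ω => sq a n (X ω)) (fun ω => sq a n (X ω))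
    have e6 : H (pm p p) (fun t => sq a n (X t.1) - sq a n (X t.2)) = H (pm p p) (WW a n X) := rfl
    linarith
  · have e4 := H_left_le_sub hpp hpp (WW a n X) (WW a n X)
    linarith
  · intro x R hR
    have h5 := hF x R hR
    have h6 : prE (cond p F True) (fun ω => |(X ω : ℝ) - x| ≤ R) ≤ 2 * prE p (fun ω => |(X ω : ℝ) - x| ≤ R) := by
      rw [prE_eq, prE_eq, Finset.mul_sum]
      apply Finset.sum_le_sum
      intro ω _
      split_ifs
      · unfold cond
        split_ifs
        · have hpr : 1 / 2 ≤ pr p F True := hE0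
          rw [div_le_iff₀ (by linarith)]
          nlinarith [hp.nonneg ω]
        · linarith [hp.nonneg ω]
      · simp
    linarith

end sel
end EntT

namespace EntT
open Finset

lemma logb_affine (A B ζ : ℝ) (hA : 0 < A) (hB : 0 < B) (hζ : 0 < ζ) :
    ∃ K : ℝ, 0 ≤ K ∧ ∀ x : ℝ, 0 ≤ x → Real.logb 2 (A * (x + B)) ≤ ζ * x + K := by
  have hl : 0 < Real.log 2 := Real.log_pos (by norm_num)
  set t := ζ * Real.log 2 / A with ht
  have ht0 : 0 < t := by positivity
  refine ⟨|ζ * B + (-1 - Real.log t) / Real.log 2|, abs_nonneg _, fun x hx => ?_⟩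
  have h1 : Real.log (A * (x + B) * t) ≤ A * (x + B) * t - 1 := Real.log_le_sub_one_of_pos (by positivity)
  rw [Real.log_mul (by positivity) (by positivity)] at h1
  have h2 : A * (x + B) * t = ζ * (x + B) * Real.log 2 := by rw [ht]; field_simp
  have h3 : Real.logb 2 (A * (x + B)) ≤ ζ * (x + B) + (-1 - Real.log t) / Real.log 2 := by
    unfold Real.logb
    rw [div_le_iff₀ hl, add_mul, div_mul_cancel₀ _ hl.ne']
    linarith
  have := le_abs_self (ζ * B + (-1 - Real.log t) / Real.log 2)
  linarith

/-- choice of a threshold for finitely many linear inequalities -/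
lemma exists_thr (K d : ℝ) (hd : 0 < d) : ∃ N : ℕ, ∀ n : ℕ, N ≤ n → K < d * n := by
  obtain ⟨N, hN⟩ := exists_nat_gt (K / d)
  refine ⟨N, fun n hn => ?_⟩
  rw [div_lt_iff₀ hd] at hN
  have : (N:ℝ) ≤ n := by exact_mod_cast hn
  nlinarith

set_option maxHeartbeats 1000000 in
lemma propA (s : ℝ) (hs : 0 < s) (hs1 : s < 1) : ∃ η : ℝ, 0 < η ∧ ∀ a c : ℝ, a ≠ 0 → 1 ≤ c →
    ∃ N : ℕ, ∀ n : ℕ, N ≤ n → ∀ (Ω : Type) (_ : Fintype Ω) (p : Ω → ℝ) (X : Ω → ℤ), IsPr p →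
    (∀ ω, p ω ≠ 0 → |(X ω : ℝ)| ≤ c * 2 ^ n) → Fr p X n (2 ^ (η * n)) s →
    H (pm p p) (fun t => X t.1 + X t.2) ≤ s * n + η * n →
    H (pm p p) (fun t => X t.1 - X t.2) ≤ s * n + η * n →
    H (pm (pm p p) (pm p p)) (fun u => WW a n X u.1 - WW a n X u.2) ≤ s * n + η * n →
    s * n - η * n ≤ H p (fun ω => sq a n (X ω)) → False := by
  set τ := min s (1 - s) with hτ
  have hτ0 : 0 < τ := lt_min hs (by linarith)
  have hτs : τ ≤ s := min_le_left _ _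
  have hτ1 : τ ≤ 1 - s := min_le_right _ _
  have hst : 0 < s * τ := by positivity
  set η := s ^ 2 * τ / 10000 with hη
  have hη0 : 0 < η := by positivity
  have hηs : η / s = s * τ / 10000 := by rw [hη]; field_simp
  have hηs' : η = s * (s * τ / 10000) := by rw [hη]; ring
  have hη1 : η ≤ s * τ / 10000 := by rw [hηs']; nlinarith
  have hst1 : s * τ ≤ s := by nlinarith
  have hst2 : s * τ ≤ τ := by nlinarith
  refine ⟨η, hη0, fun a c ha hc => ?_⟩
  obtain ⟨J, hJ⟩ := pow_unbounded_of_one_lt (2 * c) (by norm_num : (1:ℝ) < 2)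
  obtain ⟨K1, hK1, hlog⟩ := logb_affine (16 * c) (J + 1) (s * τ / 100) (by linarith) (by positivity) (by positivity)
  have hka : 0 < |2 * a| := abs_pos.mpr (mul_ne_zero two_ne_zero ha)
  set κ := 2 * a with hκ
  set cst := 18 * Real.logb 2 9 + 18 * Real.logb 2 (4 / |κ| + 1) + 36 / s + 5 + |K0 κ c| with hcst
  set K2 := |Real.logb 2 (4 / |κ| + 2 * c)| with hK2
  set K3 := |Real.logb 2 (2 * c)| + |Real.logb 2 (2 * (4 / |κ| + 6 * c + 1) + 1)| with hK3
  have hl9 : 0 ≤ Real.logb 2 9 := Real.logb_nonneg (by norm_num) (by norm_num)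
  have hl4 : 0 ≤ Real.logb 2 (4 / |κ| + 1) := Real.logb_nonneg (by norm_num) (by
    have : 0 ≤ 4 / |κ| := by positivity
    linarith)
  have hcst0 : 0 ≤ cst := by positivity
  have hK20 : 0 ≤ K2 := by positivity
  have hK30 : 0 ≤ K3 := by positivity
  have h4k : 0 ≤ 4 / |κ| := by positivity
  obtain ⟨N, hN⟩ := exists_thr (cst + K2 + K3 + K1 + 4 / |κ| + 10) (s * τ / 100) (by positivity)
  refine ⟨N, fun n hn Ω _ p X hp hX hF h1 h2 h3 h4 => ?_⟩
  have hNn := hN n hn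
  have hn0 : (0:ℝ) ≤ n := by positivity
  have hηn : η * n ≤ s * τ / 10000 * n := mul_le_mul_of_nonneg_right hη1 hn0
  have hηns : η * n / s = s * τ / 10000 * n := by rw [mul_div_right_comm, hηs]
  have hstn : s * τ * n ≤ s * n := mul_le_mul_of_nonneg_right hst1 hn0
  have hstn2 : s * τ * n ≤ τ * n := mul_le_mul_of_nonneg_right hst2 hn0
  have hnpos : (0:ℝ) < n := by
    rcases hn0.lt_or_eq with h | h
    · exact h
    · rw [← h] at hNn; linarith
  set e := (η * n + 2) / s with he
  have hes : s * e = η * n + 2 := by rw [he]; field_simp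
  have he0 : 0 ≤ e := by positivity
  have hen : e ≤ n := by
    have : s * e ≤ s * n := by rw [hes]; linarith
    exact le_of_mul_le_mul_left this hs
  have hlr : Real.logb 2 ((2:ℝ) ^ (-e)) = -e := Real.logb_rpow (by norm_num) (by norm_num)
  have hlL : Real.logb 2 ((2:ℝ) ^ (η * n)) = η * n := Real.logb_rpow (by norm_num) (by norm_num)
  have hL1 : 1 ≤ (2:ℝ) ^ (η * n) := Real.one_le_rpow (by norm_num) (by positivity)
  have hr0 : 0 < (2:ℝ) ^ (-e) := by positivity
  have hr1 : (2:ℝ) ^ (-e) ≤ 1 := Real.rpow_le_one_of_one_le_of_nonpos (by norm_num) (by linarith)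
  obtain ⟨p', v0, hC⟩ := sel (r := 2 ^ (-e)) (E := η * n) (L := 2 ^ (η * n)) hp ha hc hs hs1 (by positivity) hX hF
    hL1 hlL.le h1 h2 h3 h4 hr0 hr1
    (by
      rw [← Real.rpow_natCast, ← Real.rpow_add (by norm_num)]
      exact Real.one_le_rpow (by norm_num) (by linarith))
    (by
      rw [← Real.rpow_mul (by norm_num), ← Real.rpow_add (by norm_num)]
      have : η * n + -e * s = -2 := by linarith
      rw [this, Real.rpow_neg (by norm_num)]
      norm_num)
  set k := ⌊τ / 6 * n⌋₊ with hk
  have hkle : (k:ℝ) ≤ τ / 6 * n := Nat.floor_le (by positivity)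
  have hkge : τ / 6 * n < k + 1 := Nat.lt_floor_add_one _
  have hskge : s * τ / 6 * n - 1 ≤ s * k := by nlinarith
  have h3k : 3 * k ≤ n := by
    have : (3 * k : ℝ) ≤ n := by nlinarith
    exact_mod_cast this
  have hg : ((n - 3 * k : ℕ) : ℝ) = n - 3 * k := by push_cast [h3k]; ring
  have hlL2 : Real.logb 2 (2 * (2:ℝ) ^ (η * n)) = 1 + η * n := by
    rw [Real.logb_mul (by norm_num) (by positivity), hlL, Real.logb_self_eq_one (by norm_num)]
  have hth : Real.logb 2 (2 * (2 / (|κ| * (2:ℝ) ^ (-e))) + 1) ≤ Real.logb 2 (4 / |κ| + 1) + e := by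
    have : Real.logb 2 ((4 / |κ| + 1) / (2:ℝ) ^ (-e)) = Real.logb 2 (4 / |κ| + 1) + e := by
      rw [Real.logb_div (by positivity) (by positivity), hlr]; ring
    rw [← this]
    apply Real.logb_le_logb_of_le (by norm_num) (by positivity)
    rw [add_div]
    have h6 : 1 ≤ 1 / (2:ℝ) ^ (-e) := by rw [le_div_iff₀ hr0]; linarith
    have h7 : 2 * (2 / (|κ| * (2:ℝ) ^ (-e))) = 4 / |κ| / (2:ℝ) ^ (-e) := by field_simp; norm_num
    linarith
  have hee : e = s * τ / 10000 * n + 2 / s := by rw [he, add_div, hηns]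
  have h2s : 36 / s = 18 * (2 / s) := by ring
  have hK0 := le_abs_self (K0 κ c)
  -- main quantity
  have hT : 9 * (2 * (24 * (η * n) + Real.logb 2 9 + Real.logb 2 (2 * (2 / (|κ| * (2:ℝ) ^ (-e))) + 1)))
      + 8 * (2 * (η * n)) + 3 * Real.logb 2 (2 * (2:ℝ) ^ (η * n)) - s * Real.logb 2 ((2:ℝ) ^ (-e)) + K0 κ c
      ≤ 470 * (s * τ / 10000 * n) + cst := by
    rw [hlL2, hlr, hcst, h2s]
    have : s * -e = - (η * n + 2) := by linarith
    rw [this]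
    linarith
  have hK2' := le_abs_self (Real.logb 2 (4 / |κ| + 2 * c))
  have hK3' := le_abs_self (Real.logb 2 (2 * c))
  have hK3'' := le_abs_self (Real.logb 2 (2 * (4 / |κ| + 6 * c + 1) + 1))
  refine core_false hC k J h3k hJ ?_ ?_ ?_ ?_
  · have : (k:ℝ) < 2 ^ k := by exact_mod_cast k.lt_two_pow_self
    linarith
  · rw [hlL2]; linarith
  · linarith
  · rw [hg]
    have hm : 2 * min s (1/2) * ((n:ℝ) - 3 * k) - s * n ≥ τ * n / 2 := by
      rcases min_cases s (1/2) with ⟨h, h'⟩ | ⟨h, h'⟩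
      · rw [h]; nlinarith
      · rw [h]; nlinarith
    have hlg := hlog ((n:ℝ) - 3 * k) (by rw [← hg]; positivity)
    have hsk : s * τ / 100 * ((n:ℝ) - 3 * k) ≤ s * τ / 100 * n := by
      apply mul_le_mul_of_nonneg_left _ (by positivity)
      have : (0:ℝ) ≤ k := by positivity
      linarith
    rw [← add_assoc] at hlg
    linarith
end EntT

namespace EntT
open Finset

section bsg
variable {Ω : Type} [Fintype Ω] {p : Ω → ℝ} {X Y : Ω → ℤ}

lemma push_mix_map {Ω₁ Ω₂ T : Type} [Fintype Ω₁] [Fintype Ω₂] [Fintype T] {r : T → ℝ} {Q : T → Ω₁ → ℝ}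
    {Q' : T → Ω₂ → ℝ} {f : Ω₁ → Ω₂} (h : ∀ t, r t ≠ 0 → IsPush (Q t) f (Q' t)) :
    IsPush (mix r Q) (fun x => (x.1, f x.2)) (mix r Q') := by
  rintro ⟨t, v⟩
  rw [pr_mix (fun _ => f) t v]
  unfold mix
  by_cases ht : r t = 0
  · simp [ht]
  · rw [h t ht v]

/-- the conditional product law -/
noncomputable def qq (p : Ω → ℝ) (X Y : Ω → ℤ) (t : Ω) : Ω × Ω → ℝ :=
  pm (cond p Y (Y t)) (cond p X (X t))

lemma qq_pr (hp : IsPr p) (t : Ω) (ht : p t ≠ 0) : IsPr (qq p X Y t) :=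
  (hp.cond Y ht).pm (hp.cond X ht)

lemma H_J_fst (hp : IsPr p) {S : Type} (F : Ω → S) : H (mix p (qq p X Y)) (fun x => F x.2.1) = H p F := by
  have h1 : IsPush (mix p (qq p X Y)) (fun x => (x.1, x.2.1)) (mix p (fun t => cond p Y (Y t))) :=
    push_mix_map (f := Prod.fst) (fun t ht => push_fst (hp.cond X ht))
  have h2 := H_push h1 (fun x => F x.2)
  have h3 := H_push (push_mix_cond hp Y) F
  exact h2.trans h3

lemma H_J_snd (hp : IsPr p) {S : Type} (F : Ω → S) : H (mix p (qq p X Y)) (fun x => F x.2.2) = H p F := by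
  have h1 : IsPush (mix p (qq p X Y)) (fun x => (x.1, x.2.2)) (mix p (fun t => cond p X (X t))) :=
    push_mix_map (f := Prod.snd) (fun t ht => push_snd (hp.cond Y ht))
  have h2 := H_push h1 (fun x => F x.2)
  have h3 := H_push (push_mix_cond hp X) F
  exact h2.trans h3

lemma H_J_t (hp : IsPr p) {S : Type} (F : Ω → S) : H (mix p (qq p X Y)) (fun x => F x.1) = H p F :=
  H_push (push_mix_fst (fun t ht => qq_pr hp t ht)) F

lemma H_recover {S : Type} (hp : IsPr p) (F : Ω → S) (Z : Ω → ℤ) (w : ℤ → ℤ) :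
    H p (fun ω => (F ω, Z ω)) ≤ H p (fun ω => (F ω, w (Z ω))) + (H p Z - H p (fun ω => w (Z ω))) := by
  have h1 := submod hp (fun ω => (F ω, w (Z ω))) Z (fun ω => w (Z ω))
    (fun ω ω' h => (Prod.ext_iff.mp h).2) (fun ω ω' h => by rw [h])
  have h2 := H_mono hp (fun ω => ((F ω, w (Z ω)), Z ω)) (fun ω => (F ω, Z ω)) (by
    intro ω ω' _ _ h
    simp only [Prod.mk.injEq] at h ⊢
    exact ⟨h.1.1, h.2⟩)
  linarith

lemma H_J_all (hp : IsPr p) (hinj : ∀ t t', p t ≠ 0 → p t' ≠ 0 → X t = X t' → Y t = Y t' → t = t') :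
    3 * H p (fun ω => (X ω, Y ω)) - H p X - H p Y ≤
    H (mix p (qq p X Y)) (fun x => (((X x.2.1, Y x.1), X x.1), Y x.2.2)) := by
  have hJ : IsPr (mix p (qq p X Y)) := hp.mix (fun t ht => qq_pr hp t ht)
  have h1 := H_mix hp (fun t ht => qq_pr (X := X) (Y := Y) hp t ht) (fun _ u => (X u.1, Y u.2))
  have h2 : ∑ t, p t * H (qq p X Y t) (fun u => (X u.1, Y u.2)) =
      ∑ t, p t * H (cond p Y (Y t)) X + ∑ t, p t * H (cond p X (X t)) Y := by
    rw [← Finset.sum_add_distrib]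
    apply Finset.sum_congr rfl
    intro t _
    by_cases ht : p t = 0
    · simp [ht]
    · unfold qq
      rw [H_prod (hp.cond Y ht) (hp.cond X ht)]; ring
  rw [avg_cond hp Y X, avg_cond hp X Y] at h2
  have h3 : H p (fun ω => (X ω, Y ω)) ≤ H p (fun t => t) := H_mono hp _ _ (by
    intro ω ω' _ _ h
    rw [h])
  have h4 : H p (fun ω => (Y ω, X ω)) = H p (fun ω => (X ω, Y ω)) := H_congr hp _ _ (by
    intro ω ω'
    simp only [Prod.mk.injEq]
    tauto)
  have h5 := H_mono hJ (fun x => (((X x.2.1, Y x.1), X x.1), Y x.2.2)) (fun x => (x.1, (X x.2.1, Y x.2.2))) (by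
    intro x x' hx hx' h
    simp only [Prod.mk.injEq] at h ⊢
    refine ⟨hinj _ _ ?_ ?_ h.1.2 h.1.1.2, h.1.1.1, h.2⟩
    · intro h0; exact hx (by simp [mix, h0])
    · intro h0; exact hx' (by simp [mix, h0]))
  linarith

lemma bsg (hp : IsPr p) (hinj : ∀ t t', p t ≠ 0 → p t' ≠ 0 → X t = X t' → Y t = Y t' → t = t')
    (A B : ℤ → ℤ) :
    H (mix p (qq p X Y)) (fun x => A (X x.2.1) + B (Y x.2.2)) + 3 * H p (fun ω => (X ω, Y ω)) - H p X - H p Y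
      - 2 * (H p X - H p (fun ω => A (X ω))) - 2 * (H p Y - H p (fun ω => B (Y ω))) ≤
    H p (fun ω => A (X ω)) + H p (fun ω => B (Y ω)) + 3 * H p (fun ω => A (X ω) + B (Y ω)) := by
  have hJ : IsPr (mix p (qq p X Y)) := hp.mix (fun t ht => qq_pr hp t ht)
  have hall := H_J_all hp hinj
  set J := mix p (qq p X Y) with hJdef
  have supp : ∀ x, J x ≠ 0 → Y x.2.1 = Y x.1 ∧ X x.2.2 = X x.1 := by
    intro x hx
    have h1 : cond p Y (Y x.1) x.2.1 ≠ 0 := fun h => hx (by simp [hJdef, mix, qq, pm, h])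
    have h2 : cond p X (X x.1) x.2.2 ≠ 0 := fun h => hx (by simp [hJdef, mix, qq, pm, h])
    exact ⟨(cond_ne _ _ h1).1, (cond_ne _ _ h2).1⟩
  have sub := submod hJ (fun x => (A (X x.2.1), B (Y x.2.2)))
    (fun x => (A (X x.2.1) + B (Y x.1), (A (X x.1) + B (Y x.1), A (X x.1) + B (Y x.2.2))))
    (fun x => A (X x.2.1) + B (Y x.2.2))
    (by intro x x' h; simp only [Prod.mk.injEq] at h ⊢; rw [h.1, h.2])
    (by intro x x' h; simp only [Prod.mk.injEq] at h ⊢; linarith [h.1, h.2.1, h.2.2])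
  have f1 := H_pair_le hJ (fun x => A (X x.2.1)) (fun x => B (Y x.2.2))
  rw [hJdef, H_J_fst hp (fun u => A (X u)), H_J_snd hp (fun u => B (Y u)), ← hJdef] at f1
  have g1 := H_pair_le hJ (fun x => A (X x.2.1) + B (Y x.1))
    (fun x => (A (X x.1) + B (Y x.1), A (X x.1) + B (Y x.2.2)))
  have g2 := H_pair_le hJ (fun x => A (X x.1) + B (Y x.1)) (fun x => A (X x.1) + B (Y x.2.2))
  have g3 : H J (fun x => A (X x.1) + B (Y x.1)) = H p (fun ω => A (X ω) + B (Y ω)) :=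
    H_J_t hp (fun t => A (X t) + B (Y t))
  have g4 : H J (fun x => A (X x.2.1) + B (Y x.1)) ≤ H p (fun ω => A (X ω) + B (Y ω)) := by
    rw [← H_J_fst (X := X) (Y := Y) hp (fun t => A (X t) + B (Y t)), ← hJdef]
    apply H_mono hJ
    intro x x' hx hx' h
    rwa [(supp x hx).1, (supp x' hx').1] at h
  have g5 : H J (fun x => A (X x.1) + B (Y x.2.2)) ≤ H p (fun ω => A (X ω) + B (Y ω)) := by
    rw [← H_J_snd (X := X) (Y := Y) hp (fun t => A (X t) + B (Y t)), ← hJdef]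
    apply H_mono hJ
    intro x x' hx hx' h
    rwa [(supp x hx).2, (supp x' hx').2] at h
  have r1 := H_recover hJ (fun x => ((X x.2.1, Y x.1), X x.1)) (fun x => Y x.2.2) B
  have r2 := H_recover hJ (fun x => ((X x.2.1, Y x.1), B (Y x.2.2))) (fun x => X x.1) A
  have r3 := H_recover hJ (fun x => ((X x.2.1, A (X x.1)), B (Y x.2.2))) (fun x => Y x.1) B
  have r4 := H_recover hJ (fun x => ((B (Y x.1), A (X x.1)), B (Y x.2.2))) (fun x => X x.2.1) A
  have m1 := H_mono hJ (fun x => (((X x.2.1, Y x.1), B (Y x.2.2)), X x.1))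
    (fun x => (((X x.2.1, Y x.1), X x.1), B (Y x.2.2))) (by
      intro x x' _ _ h
      simp only [Prod.mk.injEq] at h ⊢
      tauto)
  have m2 := H_mono hJ (fun x => (((X x.2.1, A (X x.1)), B (Y x.2.2)), Y x.1))
    (fun x => (((X x.2.1, Y x.1), B (Y x.2.2)), A (X x.1))) (by
      intro x x' _ _ h
      simp only [Prod.mk.injEq] at h ⊢
      tauto)
  have m3 := H_mono hJ (fun x => (((B (Y x.1), A (X x.1)), B (Y x.2.2)), X x.2.1))
    (fun x => (((X x.2.1, A (X x.1)), B (Y x.2.2)), B (Y x.1))) (by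
      intro x x' _ _ h
      simp only [Prod.mk.injEq] at h ⊢
      tauto)
  have m4 := H_mono hJ (fun x => ((A (X x.2.1), B (Y x.2.2)),
      (A (X x.2.1) + B (Y x.1), (A (X x.1) + B (Y x.1), A (X x.1) + B (Y x.2.2)))))
    (fun x => (((B (Y x.1), A (X x.1)), B (Y x.2.2)), A (X x.2.1))) (by
      intro x x' _ _ h
      simp only [Prod.mk.injEq] at h ⊢
      refine ⟨⟨⟨?_, ?_⟩, h.1.2⟩, h.1.1⟩
      · linarith [h.1.1, h.2.1]
      · linarith [h.1.2, h.2.2.2])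
  rw [H_J_snd hp Y, H_J_snd hp (fun u => B (Y u))] at r1
  rw [H_J_t hp X, H_J_t hp (fun u => A (X u))] at r2
  rw [H_J_t hp Y, H_J_t hp (fun u => B (Y u))] at r3
  rw [H_J_fst hp X, H_J_fst hp (fun u => A (X u))] at r4
  linarith
end bsg
end EntT

namespace EntT
open Finset

section four
variable {Ω Ω' : Type} [Fintype Ω] [Fintype Ω'] {p : Ω → ℝ} {q : Ω' → ℝ}

lemma push_equiv {p' : Ω' → ℝ} (e : Ω ≃ Ω') (h : ∀ ω, p' (e ω) = p ω) : IsPush p e p' := by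
  classical
  intro ω'
  unfold pr
  rw [Finset.sum_eq_single (e.symm ω')]
  · simp [← h]
  · intro b _ hb
    rw [if_neg]
    intro h'; exact hb (by rw [← h']; simp)
  · simp

lemma sum_self (hp : IsPr p) (hq : IsPr q) (A : Ω → ℤ) (B : Ω' → ℤ) :
    H (pm p p) (fun t => A t.1 + A t.2) + H q B ≤ 2 * H (pm p q) (fun t => A t.1 + B t.2) := by
  have h1 := kv hp hq hp A B A
  have h2 : H (pm q p) (fun t => B t.1 + A t.2) = H (pm p q) (fun t => A t.1 + B t.2) := by
    rw [← H_push (push_swap (p := p) (q := q)) (fun t => B t.1 + A t.2)]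
    congr 1; ext t; simp only; ring
  let e : Ω × Ω' × Ω ≃ Ω' × Ω × Ω :=
    ⟨fun t => (t.2.1, (t.1, t.2.2)), fun t => (t.2.1, (t.1, t.2.2)), fun t => rfl, fun t => rfl⟩
  have h3 : IsPush (pm p (pm q p)) e (pm q (pm p p)) := push_equiv e (by
    intro t; simp only [pm, e, Equiv.coe_fn_mk]; ring)
  have h4 := H_push h3 (fun t => B t.1 + (A t.2.1 + A t.2.2))
  have h5 := H_right_le_add hq (hp.pm hp) B (fun t => A t.1 + A t.2)
  have h6 : H (pm p (pm q p)) (fun t => A t.1 + B t.2.1 + A t.2.2) =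
      H (pm p (pm q p)) (fun ω => B (e ω).1 + (A (e ω).2.1 + A (e ω).2.2)) := by
    congr 1; ext t; simp only [e, Equiv.coe_fn_mk]; ring
  linarith

lemma sub_self' (hp : IsPr p) (hq : IsPr q) (A : Ω → ℤ) (B : Ω' → ℤ) :
    H (pm p p) (fun t => A t.1 - A t.2) + H q B ≤ 2 * H (pm p q) (fun t => A t.1 + B t.2) := by
  have h1 := ruzsa hp hq hp A (fun ω => - B ω) A
  rw [H_neg hq] at h1
  have h2 : H (pm q p) (fun t => - B t.1 - A t.2) = H (pm p q) (fun t => A t.1 + B t.2) := by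
    rw [← H_push (push_swap (p := p) (q := q)) (fun t => - B t.1 - A t.2), ← H_neg (hp.pm hq)]
    congr 1; ext t; simp only; ring
  have h3 : H (pm p q) (fun t => A t.1 - - B t.2) = H (pm p q) (fun t => A t.1 + B t.2) := by
    congr 1; ext t; ring
  linarith

lemma four (hp : IsPr p) (A : Ω → ℤ) :
    H (pm (pm p p) (pm p p)) (fun u => (A u.1.1 - A u.1.2) - (A u.2.1 - A u.2.2)) + 3 * H p A ≤
      4 * H (pm p p) (fun t => A t.1 - A t.2) := by
  have hpp := hp.pm hp
  have h1 := ruzsa hpp hp hpp (fun t => A t.1 - A t.2) A (fun t => A t.1 - A t.2)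
  have h2 := H_sub_swap hp hpp A (fun t => A t.1 - A t.2)
  have h3 := kv hp hp hp (fun ω => - A ω) A (fun ω => - A ω)
  let e : (Ω × Ω) × Ω ≃ Ω × Ω × Ω :=
    ⟨fun t => (t.1.2, (t.1.1, t.2)), fun t => ((t.2.1, t.1), t.2.2), fun t => rfl, fun t => rfl⟩
  have h4 : IsPush (pm (pm p p) p) e (pm p (pm p p)) := push_equiv e (by
    intro t; simp only [pm, e, Equiv.coe_fn_mk]; ring)
  have h5 := H_push h4 (fun t => - A t.1 + A t.2.1 + - A t.2.2)
  have h6 : H (pm (pm p p) p) (fun t => A t.1.1 - A t.1.2 - A t.2) =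
      H (pm (pm p p) p) (fun ω => - A (e ω).1 + A (e ω).2.1 + - A (e ω).2.2) := by
    congr 1; ext t; simp only [e, Equiv.coe_fn_mk]; ring
  have h7 : H (pm p p) (fun t => - A t.1 + A t.2) = H (pm p p) (fun t => A t.1 - A t.2) := by
    rw [← H_neg hpp]
    congr 1; ext t; ring
  have h8 : H (pm p p) (fun t => A t.1 + - A t.2) = H (pm p p) (fun t => A t.1 - A t.2) := by
    congr 1
  linarith
end four

/-- discrete joint Frostman condition -/
def JF {Ω : Type} [Fintype Ω] (p : Ω → ℝ) (X Y : Ω → ℤ) (n : ℕ) (C s1 s2 : ℝ) : Prop :=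
  ∀ x y R R' : ℝ, 1 ≤ R → 1 ≤ R' →
    prE p (fun ω => |(X ω : ℝ) - x| ≤ R ∧ |(Y ω : ℝ) - y| ≤ R') ≤ C * (R / 2 ^ n) ^ s1 * (R' / 2 ^ n) ^ s2

section jf
variable {Ω : Type} [Fintype Ω] {p : Ω → ℝ} {X Y : Ω → ℤ} {n : ℕ} {C c s1 s2 : ℝ}

lemma JF.symm (hp : IsPr p) (h : JF p X Y n C s1 s2) : JF p Y X n C s2 s1 := by
  intro x y R R' hR hR'
  have := h y x R' R hR' hR
  calc _ ≤ prE p (fun ω => |(X ω : ℝ) - y| ≤ R' ∧ |(Y ω : ℝ) - x| ≤ R) :=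
        prE_mono hp (fun ω _ h => h.symm)
    _ ≤ _ := this
    _ = _ := by ring

lemma JF.fr (hp : IsPr p) (h : JF p X Y n C s1 s2) (hC : 1 ≤ C) (hc : 1 ≤ c) (h2 : 0 ≤ s2) (h2' : s2 ≤ 1)
    (hY : ∀ ω, p ω ≠ 0 → |(Y ω : ℝ)| ≤ c * 2 ^ n) : Fr p X n (C * c) s1 := by
  intro x R hR
  have h2n : (1:ℝ) ≤ 2 ^ n := one_le_pow₀ (by norm_num)
  have h0 : (0:ℝ) < 2 ^ n := by positivity
  have := h x 0 R (c * 2 ^ n) hR (by nlinarith)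
  rw [mul_div_cancel_right₀ _ h0.ne'] at this
  have hcs : c ^ s2 ≤ c := by
    conv_rhs => rw [← Real.rpow_one c]
    exact Real.rpow_le_rpow_of_exponent_le hc h2'
  calc _ ≤ prE p (fun ω => |(X ω : ℝ) - x| ≤ R ∧ |(Y ω : ℝ) - 0| ≤ c * 2 ^ n) :=
        prE_mono hp (fun ω hω h => ⟨h, by rw [sub_zero]; exact hY ω hω⟩)
    _ ≤ _ := this
    _ ≤ C * (R / 2 ^ n) ^ s1 * c := by gcongr
    _ = _ := by ring

lemma JF.H_ge (hp : IsPr p) (h : JF p X Y n C s1 s2) (hC : 1 ≤ C) :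
    (s1 + s2) * n - Real.logb 2 C ≤ H p (fun ω => (X ω, Y ω)) := by
  have h1 := H_ge_of_pr_le hp (fun ω => (X ω, Y ω)) (C * (1 / 2 ^ n) ^ s1 * (1 / 2 ^ n) ^ s2) (by
    intro ω hω
    refine (pr_le_prE hp _ _ ?_).trans (h (X ω) (Y ω) 1 1 le_rfl le_rfl)
    intro ω' _ h
    simp only [Prod.mk.injEq] at h
    rw [h.1, h.2]; simp)
  have h2 : -Real.logb 2 (C * (1 / 2 ^ n) ^ s1 * (1 / 2 ^ n) ^ s2) = (s1 + s2) * n - Real.logb 2 C := by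
    have h0 : (0:ℝ) < 1 / 2 ^ n := by positivity
    have := logb_fr n C (s1 + s2) 1 (by linarith) one_pos
    rw [mul_assoc, ← Real.rpow_add h0, this]; simp
  linarith
end jf
end EntT

namespace EntT
open Finset

section st
variable {Ω : Type} [Fintype Ω] {p : Ω → ℝ} {X Y : Ω → ℤ} {n : ℕ} {C c s s1 s2 E : ℝ}

lemma prE_cond (p : Ω → ℝ) {S : Type} (g : Ω → S) (v : S) (F : Ω → Prop) :
    prE (cond p g v) F = prE p (fun ω => F ω ∧ g ω = v) / pr p g v := by
  unfold prE
  rw [pr_cond]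
  congr 1
  apply pr_congr
  intro ω
  simp

lemma rpow_change {ρ m s s1 E : ℝ} (hρ : 0 < ρ) (hρ1 : ρ ≤ 1) (hm : -m ≤ Real.logb 2 ρ)
    (hE : 0 ≤ E) (h : s * m - s1 * m ≤ E) (hm0 : 0 ≤ m) : ρ ^ s1 ≤ 2 ^ E * ρ ^ s := by
  have h1 : ρ = 2 ^ (Real.logb 2 ρ) := (Real.rpow_logb (by norm_num) (by norm_num) hρ).symm
  have h2 : Real.logb 2 ρ ≤ 0 := Real.logb_nonpos (by norm_num) hρ.le hρ1
  rw [h1, ← Real.rpow_mul (by norm_num), ← Real.rpow_mul (by norm_num), ← Real.rpow_add (by norm_num)]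
  apply Real.rpow_le_rpow_of_exponent_le (by norm_num)
  set l := Real.logb 2 ρ
  rcases le_total s s1 with h3 | h3
  · nlinarith
  · nlinarith

/-- selected fibre: Frostman bound -/
lemma fr_cond (hp : IsPr p) (hJF : JF p X Y n C s1 s2) (hC : 1 ≤ C) {t : Ω} (ht : p t ≠ 0) {e M : ℝ}
    (he : -Real.logb 2 (pr p Y (Y t)) - s2 * n + Real.logb 2 C ≤ e) (he0 : 0 ≤ e)
    (hE : 0 ≤ E) (hs : 0 ≤ s) (h1 : s * n - s1 * n ≤ E) (hM : e + E ≤ M) :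
    Fr (cond p Y (Y t)) X n (2 ^ M) s := by
  intro x R hR
  have hμ := hp.cond Y ht
  have h0 : (0:ℝ) < 2 ^ n := by positivity
  have hM0 : 0 ≤ M := by linarith
  set ρ := R / 2 ^ n with hρ
  have hρ0 : 0 < ρ := by positivity
  rcases le_total 1 ρ with h | h
  · refine (prE_le_one hμ _).trans ?_
    have a1 : 1 ≤ (2:ℝ) ^ M := Real.one_le_rpow (by norm_num) hM0
    have a2 : 1 ≤ ρ ^ s := Real.one_le_rpow h hs
    nlinarith
  · rw [prE_cond]
    have hpos := pr_pos hp Y ht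
    have hℓ : pr p Y (Y t) = 2 ^ (Real.logb 2 (pr p Y (Y t))) :=
      (Real.rpow_logb (by norm_num) (by norm_num) hpos).symm
    have hC' : C = 2 ^ (Real.logb 2 C) := (Real.rpow_logb (by norm_num) (by norm_num) (by linarith)).symm
    have b1 : prE p (fun ω => |(X ω : ℝ) - x| ≤ R ∧ Y ω = Y t) ≤ C * ρ ^ s1 * (1 / 2 ^ n) ^ s2 := by
      refine (prE_mono hp ?_).trans (hJF x (Y t) R 1 hR le_rfl)
      intro ω _ h
      exact ⟨h.1, by rw [h.2]; simp⟩
    have b2 : ((1:ℝ) / 2 ^ n) ^ s2 = 2 ^ (- (s2 * n)) := by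
      rw [one_div, ← Real.rpow_natCast, ← Real.rpow_neg (by norm_num), ← Real.rpow_mul (by norm_num)]
      congr 1; ring
    have b3 : ρ ^ s1 ≤ 2 ^ E * ρ ^ s := by
      apply rpow_change (m := n) hρ0 h _ hE h1 (by positivity)
      rw [hρ, Real.logb_div (by positivity) (by positivity), Real.logb_pow,
        Real.logb_self_eq_one (by norm_num)]
      have := Real.logb_nonneg (b := 2) (by norm_num) hR
      linarith
    rw [div_le_iff₀ hpos]
    refine b1.trans ?_
    rw [b2]
    calc C * ρ ^ s1 * 2 ^ (-(s2 * n)) ≤ C * (2 ^ E * ρ ^ s) * 2 ^ (-(s2 * n)) := by gcongr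
      _ = (2 ^ (Real.logb 2 C) * 2 ^ E * 2 ^ (-(s2 * n))) * ρ ^ s := by rw [← hC']; ring
      _ = 2 ^ (Real.logb 2 C + E + -(s2 * n)) * ρ ^ s := by
        rw [Real.rpow_add (by norm_num), Real.rpow_add (by norm_num)]
      _ ≤ 2 ^ (M + Real.logb 2 (pr p Y (Y t))) * ρ ^ s := by
        apply mul_le_mul_of_nonneg_right _ (by positivity)
        apply Real.rpow_le_rpow_of_exponent_le (by norm_num)
        linarith
      _ = 2 ^ M * ρ ^ s * pr p Y (Y t) := by
        rw [Real.rpow_add (by norm_num), ← hℓ]; ring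

lemma H_cond_ge (hp : IsPr p) (hJF : JF p X Y n C s1 s2) (hC : 1 ≤ C) {t : Ω} (ht : p t ≠ 0) :
    0 ≤ H (cond p Y (Y t)) X + -Real.logb 2 (pr p Y (Y t)) - (s1 + s2) * n + Real.logb 2 C := by
  have hμ := hp.cond Y ht
  have hpos := pr_pos hp Y ht
  have h1 := H_ge_of_pr_le hμ X (C * (1 / 2 ^ n) ^ s1 * (1 / 2 ^ n) ^ s2 / pr p Y (Y t)) (by
    intro ω hω
    rw [pr_cond]
    apply div_le_div_of_nonneg_right _ hpos.le
    refine (pr_le_prE hp _ _ ?_).trans (hJF (X ω) (Y t) 1 1 le_rfl le_rfl)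
    intro ω' _ h
    simp only [Prod.mk.injEq] at h
    rw [h.1, h.2]; simp)
  have h2 : -Real.logb 2 (C * (1 / 2 ^ n) ^ s1 * (1 / 2 ^ n) ^ s2 / pr p Y (Y t)) =
      (s1 + s2) * n - Real.logb 2 C + Real.logb 2 (pr p Y (Y t)) := by
    have h0 : (0:ℝ) < 1 / 2 ^ n := by positivity
    have := logb_fr n C (s1 + s2) 1 (by linarith) one_pos
    rw [Real.logb_div (by positivity) hpos.ne', mul_assoc, ← Real.rpow_add h0, neg_sub, sub_eq_add_neg, this]
    simp; ring
  linarith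

lemma pr_le_fr (hp : IsPr p) {K : ℝ} (hF : Fr p Y n K s2) (hK : 0 < K) {t : Ω} (ht : p t ≠ 0) :
    0 ≤ -Real.logb 2 (pr p Y (Y t)) - s2 * n + Real.logb 2 K := by
  have hpos := pr_pos hp Y ht
  have h1 : pr p Y (Y t) ≤ K * (1 / 2 ^ n) ^ s2 := by
    refine (pr_le_prE hp _ _ ?_).trans (hF (Y t) 1 le_rfl)
    intro ω' _ h
    rw [h]; simp
  have h2 := logb_fr n K s2 1 hK one_pos
  have h3 := Real.logb_le_logb_of_le (b := 2) (by norm_num) hpos h1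
  simp only [Real.logb_one, sub_zero] at h2
  linarith

/-- sum of all the excesses -/
noncomputable def exc (p : Ω → ℝ) (X Y : Ω → ℤ) (A B : ℤ → ℤ) (k5 k6 : ℝ) (t : Ω) : ℝ :=
  (H (qq p X Y t) (fun u => X u.1 + Y u.2) - H (cond p Y (Y t)) X) +
  (H (qq p X Y t) (fun u => X u.1 + Y u.2) - H (cond p X (X t)) Y) +
  (H (qq p X Y t) (fun u => A (X u.1) + B (Y u.2)) - H (cond p Y (Y t)) (fun ω => A (X ω))) +
  (H (qq p X Y t) (fun u => A (X u.1) + B (Y u.2)) - H (cond p X (X t)) (fun ω => B (Y ω))) +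
  (H (cond p Y (Y t)) X + -Real.logb 2 (pr p Y (Y t)) + k5) +
  (-Real.logb 2 (pr p Y (Y t)) + k6) +
  (H (cond p Y (Y t)) X - H (cond p Y (Y t)) (fun ω => A (X ω)))

lemma exc_avg (hp : IsPr p) (A B : ℤ → ℤ) (k5 k6 : ℝ) :
    ∑ t, p t * exc p X Y A B k5 k6 t ≤
      2 * H (mix p (qq p X Y)) (fun x => X x.2.1 + Y x.2.2) +
      2 * H (mix p (qq p X Y)) (fun x => A (X x.2.1) + B (Y x.2.2))
      + H p (fun ω => (X ω, Y ω)) + H p X + H p Y + k5 + k6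
      - 2 * H p (fun ω => (A (X ω), Y ω)) - H p (fun ω => (Y ω, X ω)) - H p (fun ω => (B (Y ω), X ω))
      + 2 * H p Y + H p X := by
  have hq := fun t ht => qq_pr (X := X) (Y := Y) hp t ht
  have m1 := mix_avg_le hp hq (fun _ u => X u.1 + Y u.2)
  have m2 := mix_avg_le hp hq (fun _ u => A (X u.1) + B (Y u.2))
  have a1 := avg_cond hp Y X
  have a2 := avg_cond hp X Y
  have a3 := avg_cond hp Y (fun ω => A (X ω))
  have a4 := avg_cond hp X (fun ω => B (Y ω))
  have a5 : ∑ t, p t * -Real.logb 2 (pr p Y (Y t)) = H p Y := rfl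
  have key : ∑ t, p t * exc p X Y A B k5 k6 t =
      2 * ∑ t, p t * H (qq p X Y t) (fun u => X u.1 + Y u.2)
      + 2 * ∑ t, p t * H (qq p X Y t) (fun u => A (X u.1) + B (Y u.2))
      + ∑ t, p t * H (cond p Y (Y t)) X - ∑ t, p t * H (cond p X (X t)) Y
      - 2 * ∑ t, p t * H (cond p Y (Y t)) (fun ω => A (X ω))
      - ∑ t, p t * H (cond p X (X t)) (fun ω => B (Y ω))
      + 2 * ∑ t, p t * -Real.logb 2 (pr p Y (Y t)) + (k5 + k6) * ∑ t, p t := by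
    simp only [Finset.mul_sum, ← Finset.sum_add_distrib, ← Finset.sum_sub_distrib]
    apply Finset.sum_congr rfl
    intro t _
    unfold exc
    ring
  rw [hp.sum_one] at key
  linarith

set_option maxHeartbeats 1000000 in
lemma stage1 (hp : IsPr p) (hinj : ∀ t t', p t ≠ 0 → p t' ≠ 0 → X t = X t' → Y t = Y t' → t = t')
    (hs : 0 < s) (hc : 1 ≤ c) (hC : 1 ≤ C) (hX : ∀ ω, p ω ≠ 0 → |(X ω : ℝ)| ≤ c * 2 ^ n)
    (hY : ∀ ω, p ω ≠ 0 → |(Y ω : ℝ)| ≤ c * 2 ^ n)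
    (hJF : JF p X Y n C s1 s2) (h10 : 0 ≤ s1) (h11 : s1 ≤ 1) (h20 : 0 ≤ s2) (h21 : s2 ≤ 1)
    (h12 : 2 * s ≤ s1 + s2) (hG : Real.logb 2 (C * c) ≤ E) (A B : ℤ → ℤ)
    (hXY : H p X + H p Y ≤ 2 * (s * n + E)) (hS : H p (fun ω => X ω + Y ω) ≤ s * n + E)
    (hQ : H p (fun ω => A (X ω) + B (Y ω)) ≤ s * n + E)
    (hA : H p X - H p (fun ω => A (X ω)) ≤ E) (hB : H p Y - H p (fun ω => B (Y ω)) ≤ E) :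
    ∃ μ : Ω → ℝ, IsPr μ ∧ (∀ ω, μ ω ≠ 0 → |(X ω : ℝ)| ≤ c * 2 ^ n) ∧ Fr μ X n (2 ^ (400 * E)) s ∧
    H (pm μ μ) (fun t => X t.1 + X t.2) ≤ s * n + 400 * E ∧
    H (pm μ μ) (fun t => X t.1 - X t.2) ≤ s * n + 400 * E ∧
    H (pm (pm μ μ) (pm μ μ)) (fun u => (A (X u.1.1) - A (X u.1.2)) - (A (X u.2.1) - A (X u.2.2)))
      ≤ s * n + 400 * E ∧
    s * n - 400 * E ≤ H μ (fun ω => A (X ω)) := by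
  have hn : (0:ℝ) ≤ n := by positivity
  have G0 : 0 ≤ Real.logb 2 C := Real.logb_nonneg (by norm_num) hC
  have GG : Real.logb 2 C ≤ Real.logb 2 (C * c) :=
    Real.logb_le_logb_of_le (by norm_num) (by linarith) (by nlinarith)
  set G := Real.logb 2 C with hGd
  set G' := Real.logb 2 (C * c) with hGd'
  have hE : 0 ≤ E := by linarith
  have hJ1 := hJF.H_ge hp hC
  have frX := hJF.fr hp hC hc h20 h21 hY
  have frY := (hJF.symm hp).fr hp hC hc h10 h11 hX
  have hJ2 : 2 * s * n ≤ (s1 + s2) * n := mul_le_mul_of_nonneg_right h12 hn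
  have hCc : 0 < C * c := by nlinarith
  have lX := H_ge_fr hp frX hCc X 1 le_rfl (by intro ω ω' _ _ h; rw [h]; simp)
  have lY := H_ge_fr hp frY hCc Y 1 le_rfl (by intro ω ω' _ _ h; rw [h]; simp)
  simp only [Real.logb_one, sub_zero] at lX lY
  have swap : H p (fun ω => (Y ω, X ω)) = H p (fun ω => (X ω, Y ω)) := H_congr hp _ _ (by
    intro ω ω'
    simp only [Prod.mk.injEq]
    tauto)
  have u0 := H_pair_le hp X Y
  have u1 : H p (fun ω => (X ω, Y ω)) ≤ H p (fun ω => X ω + Y ω) + H p Y :=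
    (H_mono hp (fun ω => (X ω + Y ω, Y ω)) _ (by
      intro ω ω' _ _ h
      simp only [Prod.mk.injEq] at h ⊢
      exact ⟨by linarith [h.1, h.2], h.2⟩)).trans (H_pair_le hp _ _)
  have u2 : H p (fun ω => (X ω, Y ω)) ≤ H p (fun ω => X ω + Y ω) + H p X :=
    (H_mono hp (fun ω => (X ω + Y ω, X ω)) _ (by
      intro ω ω' _ _ h
      simp only [Prod.mk.injEq] at h ⊢
      exact ⟨h.2, by linarith [h.1, h.2]⟩)).trans (H_pair_le hp _ _)
  have bXY : 2 * (s * n) - E ≤ H p (fun ω => (X ω, Y ω)) := by linarith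
  have bX : H p X ≤ s * n + 4 * E := by linarith
  have bY : H p Y ≤ s * n + 4 * E := by linarith
  have s1u : s1 * n ≤ s * n + 5 * E := by linarith
  have s2u : s2 * n ≤ s * n + 5 * E := by linarith
  have s1l : s * n - 5 * E ≤ s1 * n := by linarith
  have s2l : s * n - 5 * E ≤ s2 * n := by linarith
  have b1 := bsg hp hinj (fun z => z) (fun z => z)
  have b2 := bsg hp hinj A B
  have r1 := H_recover hp Y X A
  have r2 := H_recover hp X Y B
  have sw1 : H p (fun ω => (Y ω, A (X ω))) = H p (fun ω => (A (X ω), Y ω)) := H_congr hp _ _ (by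
    intro ω ω'
    simp only [Prod.mk.injEq]
    tauto)
  have sw2 : H p (fun ω => (X ω, B (Y ω))) = H p (fun ω => (B (Y ω), X ω)) := H_congr hp _ _ (by
    intro ω ω'
    simp only [Prod.mk.injEq]
    tauto)
  have mA : H p (fun ω => A (X ω)) ≤ H p X := H_mono hp _ _ (fun ω ω' _ _ h => by rw [h])
  have mB : H p (fun ω => B (Y ω)) ≤ H p Y := H_mono hp _ _ (fun ω ω' _ _ h => by rw [h])
  have b1' : H (mix p (qq p X Y)) (fun x => X x.2.1 + Y x.2.2) ≤ s * n + 10 * E := by linarith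
  have b2' : H (mix p (qq p X Y)) (fun x => A (X x.2.1) + B (Y x.2.2)) ≤ s * n + 14 * E := by linarith
  have hav := exc_avg (X := X) (Y := Y) hp A B (-(s1 + s2) * n + G) (-s2 * n + G')
  have hav' : ∑ t, p t * exc p X Y A B (-(s1 + s2) * n + G) (-s2 * n + G') t ≤ 84 * E := by
    linarith
  obtain ⟨t, ht, het⟩ := exists_le_avg hp _ _ hav'
  have hμ := hp.cond Y ht
  have hν := hp.cond X ht
  have c5 := H_cond_ge hp hJF hC ht
  have c6 := pr_le_fr hp frY hCc ht
  unfold exc qq at het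
  have c1 := H_left_le_add hμ hν X Y
  have c2 := H_right_le_add hμ hν X Y
  have c3 := H_left_le_add hμ hν (fun ω => A (X ω)) (fun ω => B (Y ω))
  have c4 := H_right_le_add hμ hν (fun ω => A (X ω)) (fun ω => B (Y ω))
  have c7 : H (cond p Y (Y t)) (fun ω => A (X ω)) ≤ H (cond p Y (Y t)) X :=
    H_mono hμ _ _ (fun ω ω' _ _ h => by rw [h])
  have d1 := sum_self hμ hν X Y
  have d2 := sub_self' hμ hν X Y
  have d3 := sub_self' hμ hν (fun ω => A (X ω)) (fun ω => B (Y ω))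
  have d4 := four hμ (fun ω => A (X ω))
  have dA := H_left_le_sub hμ hμ (fun ω => A (X ω)) (fun ω => A (X ω))
  refine ⟨cond p Y (Y t), hμ, fun ω hω => hX ω (cond_ne _ _ hω).2, ?_, ?_, ?_, ?_, ?_⟩
  · apply fr_cond hp hJF hC ht (e := 84 * E) (E := 5 * E) _ (by linarith) (by linarith) hs.le (by linarith)
      (by linarith)
    linarith
  · linarith
  · linarith
  · linarith
  · linarith
end st
end EntT

namespace EntT
open Finset

noncomputable def zball (x : ℤ) (d : ℝ) : Finset ℤ := Finset.Icc (x - ⌊d⌋) (x + ⌊d⌋)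

lemma mem_zball {x y : ℤ} {d : ℝ} (h : |(y:ℝ) - x| ≤ d) : y ∈ zball x d := by
  unfold zball
  have h1 : |y - x| ≤ ⌊d⌋ := by
    apply Int.le_floor.mpr
    push_cast
    exact h
  rw [abs_le] at h1
  rw [Finset.mem_Icc]
  constructor <;> linarith [h1.1, h1.2]

lemma card_zball (x : ℤ) {d : ℝ} (hd : 0 ≤ d) : ((zball x d).card : ℝ) ≤ 2 * d + 1 := by
  unfold zball
  rw [Int.card_Icc]
  have h0 : 0 ≤ ⌊d⌋ := Int.floor_nonneg.mpr hd
  have h1 : x + ⌊d⌋ + 1 - (x - ⌊d⌋) = 2 * ⌊d⌋ + 1 := by ring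
  rw [h1]
  have h2 : (((2 * ⌊d⌋ + 1).toNat : ℤ) : ℝ) = ((2 * ⌊d⌋ + 1 : ℤ) : ℝ) := by
    rw [Int.toNat_of_nonneg (by linarith)]
  have h3 := Int.floor_le d
  push_cast at h2
  linarith

section sqr
variable {Ω : Type} [Fintype Ω] {p : Ω → ℝ} {X : Ω → ℤ} {a c r : ℝ} {n : ℕ}

lemma sq_fiber (ha : a ≠ 0) (hr : 0 < r) {x y : ℤ} (hx : r * 2 ^ n ≤ |(x:ℝ)|) (h : sq a n y = sq a n x) :
    y ∈ zball x (1 / (|a| * r)) ∪ zball (-x) (1 / (|a| * r)) := by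
  have h2n : (0:ℝ) < 2 ^ n := by positivity
  have hapos : 0 < |a| := abs_pos.mpr ha
  obtain ⟨a1, a2⟩ := sq_close a n x
  obtain ⟨b1, b2⟩ := sq_close a n y
  rw [h] at b1 b2
  have h1 : |a * ((y:ℝ) ^ 2 - (x:ℝ) ^ 2) / 2 ^ n| ≤ 1 := by
    have : a * ((y:ℝ) ^ 2 - (x:ℝ) ^ 2) / 2 ^ n = a * (y:ℝ) ^ 2 / 2 ^ n - a * (x:ℝ) ^ 2 / 2 ^ n := by ring
    rw [this, abs_le]; constructor <;> linarith
  rw [abs_div, abs_mul, abs_of_pos h2n, div_le_one h2n] at h1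
  have h3 : (y:ℝ) ^ 2 - (x:ℝ) ^ 2 = (|(y:ℝ)| - |(x:ℝ)|) * (|(y:ℝ)| + |(x:ℝ)|) := by
    rw [← sq_abs (y:ℝ), ← sq_abs (x:ℝ)]; ring
  rw [h3, abs_mul, abs_of_nonneg (by positivity : 0 ≤ |(y:ℝ)| + |(x:ℝ)|)] at h1
  have h4 : |(|(y:ℝ)| - |(x:ℝ)|)| ≤ 1 / (|a| * r) := by
    rw [le_div_iff₀ (by positivity)]
    have h5 : |(|(y:ℝ)| - |(x:ℝ)|)| * (r * 2 ^ n) ≤ |(|(y:ℝ)| - |(x:ℝ)|)| * (|(y:ℝ)| + |(x:ℝ)|) := by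
      apply mul_le_mul_of_nonneg_left _ (abs_nonneg _)
      linarith [abs_nonneg (y:ℝ)]
    have h6 : (|(|(y:ℝ)| - |(x:ℝ)|)| * (|a| * r)) * 2 ^ n ≤ 1 * 2 ^ n := by
      calc _ = |a| * (|(|(y:ℝ)| - |(x:ℝ)|)| * (r * 2 ^ n)) := by ring
        _ ≤ |a| * (|(|(y:ℝ)| - |(x:ℝ)|)| * (|(y:ℝ)| + |(x:ℝ)|)) := by gcongr
        _ ≤ 1 * 2 ^ n := by linarith
    exact le_of_mul_le_mul_right h6 h2n
  rw [Finset.mem_union]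
  set d := 1 / (|a| * r)
  rcases le_total 0 (x:ℝ) with hx0 | hx0 <;> rcases le_total 0 (y:ℝ) with hy0 | hy0
  · left; apply mem_zball; rwa [abs_of_nonneg hx0, abs_of_nonneg hy0] at h4
  · right; apply mem_zball; rw [abs_of_nonneg hx0, abs_of_nonpos hy0] at h4
    push_cast
    rw [← abs_neg]
    convert h4 using 2; ring
  · right; apply mem_zball; rw [abs_of_nonpos hx0, abs_of_nonneg hy0] at h4
    push_cast
    exact h4
  · left; apply mem_zball; rw [abs_of_nonpos hx0, abs_of_nonpos hy0] at h4
    rw [← abs_neg]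
    convert h4 using 2; ring

lemma sq_loss (hp : IsPr p) (ha : a ≠ 0) (hc : 1 ≤ c) (hr : 0 < r)
    (hX : ∀ ω, p ω ≠ 0 → |(X ω : ℝ)| ≤ c * 2 ^ n) {P : ℝ}
    (hP : prE p (fun ω => |(X ω : ℝ)| < r * 2 ^ n) ≤ P) :
    H p X - H p (fun ω => sq a n (X ω)) ≤
      Real.logb 2 (2 * (2 * (1 / (|a| * r)) + 1)) + P * Real.logb 2 (2 * (c * 2 ^ n) + 1) := by
  classical
  have hapos : 0 < |a| := abs_pos.mpr ha
  have h2n : (0:ℝ) < 2 ^ n := by positivity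
  set M := 2 * (2 * (1 / (|a| * r)) + 1) with hM
  set M' := 2 * (c * 2 ^ n) + 1 with hM'
  have hd0 : 0 ≤ 1 / (|a| * r) := by positivity
  have lM : 0 ≤ Real.logb 2 M := Real.logb_nonneg (by norm_num) (by linarith)
  have lM' : 0 ≤ Real.logb 2 M' := Real.logb_nonneg (by norm_num) (by
    have : 0 ≤ c * 2 ^ n := by positivity
    linarith)
  let G : ℤ → Prop := fun v => ∃ ω, p ω ≠ 0 ∧ r * 2 ^ n ≤ |(X ω : ℝ)| ∧ sq a n (X ω) = v
  have key := fiber_refined hp X (fun ω => sq a n (X ω)) (fun v => if G v then M else M') (by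
    intro ω hω
    split_ifs with hG
    · obtain ⟨ω0, h0, hr0, he0⟩ := hG
      have hsub : ((univ.filter (fun ω' => p ω' ≠ 0 ∧ sq a n (X ω') = sq a n (X ω))).image X) ⊆
          zball (X ω0) (1 / (|a| * r)) ∪ zball (-X ω0) (1 / (|a| * r)) := by
        intro y hy
        simp only [Finset.mem_image, Finset.mem_filter, Finset.mem_univ, true_and] at hy
        obtain ⟨ω', ⟨_, h2⟩, rfl⟩ := hy
        exact sq_fiber ha hr hr0 (h2.trans he0.symm)
      have h1 := (Finset.card_le_card hsub).trans (Finset.card_union_le _ _)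
      have h2 : (((univ.filter (fun ω' => p ω' ≠ 0 ∧ sq a n (X ω') = sq a n (X ω))).image X).card : ℝ) ≤
        (zball (X ω0) (1 / (|a| * r))).card + (zball (-X ω0) (1 / (|a| * r))).card := by exact_mod_cast h1
      have h3 := card_zball (X ω0) hd0
      have h4 := card_zball (-X ω0) hd0
      have h5 : (((univ.filter (fun ω' => p ω' ≠ 0 ∧ sq a n (X ω') = sq a n (X ω))).image X).card : ℝ) ≤ M := by
        linarith
      convert h5
    · have hsub : ((univ.filter (fun ω' => p ω' ≠ 0 ∧ sq a n (X ω') = sq a n (X ω))).image X) ⊆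
          zball 0 (c * 2 ^ n) := by
        intro y hy
        simp only [Finset.mem_image, Finset.mem_filter, Finset.mem_univ, true_and] at hy
        obtain ⟨ω', ⟨h1, h2⟩, rfl⟩ := hy
        apply mem_zball
        simpa using hX ω' h1
      have h1 : (((univ.filter (fun ω' => p ω' ≠ 0 ∧ sq a n (X ω') = sq a n (X ω))).image X).card : ℝ) ≤
        (zball 0 (c * 2 ^ n)).card := by exact_mod_cast Finset.card_le_card hsub
      have h5 : (((univ.filter (fun ω' => p ω' ≠ 0 ∧ sq a n (X ω') = sq a n (X ω))).image X).card : ℝ) ≤ M' :=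
        h1.trans (card_zball 0 (by positivity))
      convert h5)
  have h1 := H_fst_le hp X (fun ω => sq a n (X ω))
  have h2 : ∑ ω, p ω * Real.logb 2 (if G (sq a n (X ω)) then M else M') ≤
      Real.logb 2 M + P * Real.logb 2 M' := by
    calc _ ≤ ∑ ω, (p ω * Real.logb 2 M + (if |(X ω : ℝ)| < r * 2 ^ n then p ω else 0) * Real.logb 2 M') := by
          apply Finset.sum_le_sum
          intro ω _
          by_cases h0 : p ω = 0
          · simp [h0]
          have hpn := hp.nonneg ω
          split_ifs with hG hlt hlt
          · nlinarith [mul_nonneg hpn lM']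
          · linarith
          · nlinarith [mul_nonneg hpn lM]
          · exact absurd ⟨ω, h0, not_lt.mp hlt, rfl⟩ hG
      _ = Real.logb 2 M + prE p (fun ω => |(X ω : ℝ)| < r * 2 ^ n) * Real.logb 2 M' := by
          rw [Finset.sum_add_distrib, ← Finset.sum_mul, ← Finset.sum_mul, hp.sum_one, prE_eq, one_mul]
      _ ≤ _ := by gcongr
  linarith

/-- uniform version -/
lemma sq_loss' (a c K σ δ : ℝ) (ha : a ≠ 0) (hc : 1 ≤ c) (hK : 1 ≤ K) (hσ : 0 < σ) (hδ : 0 < δ) :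
    ∃ M : ℝ, 0 ≤ M ∧ ∃ N : ℕ, ∀ n : ℕ, N ≤ n → ∀ (Ω : Type) (_ : Fintype Ω) (p : Ω → ℝ) (X : Ω → ℤ) (s1 : ℝ),
      IsPr p → (∀ ω, p ω ≠ 0 → |(X ω : ℝ)| ≤ c * 2 ^ n) → σ ≤ s1 → Fr p X n K s1 →
      H p X - H p (fun ω => sq a n (X ω)) ≤ δ * n + M := by
  set r := (δ / (K * (1 + δ))) ^ (1 / σ) with hr
  have hb0 : 0 < δ / (K * (1 + δ)) := by positivity
  have hb1 : δ / (K * (1 + δ)) ≤ 1 := by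
    rw [div_le_one (by positivity)]; nlinarith
  have hr0 : 0 < r := by positivity
  have hr1 : r ≤ 1 := Real.rpow_le_one hb0.le hb1 (by positivity)
  have hrs : K * r ^ σ ≤ δ := by
    rw [hr, ← Real.rpow_mul hb0.le, one_div, inv_mul_cancel₀ hσ.ne', Real.rpow_one]
    have : K * (δ / (K * (1 + δ))) = δ / (1 + δ) := by field_simp
    rw [this, div_le_iff₀ (by positivity)]; nlinarith
  obtain ⟨N, hN⟩ := pow_unbounded_of_one_lt (1 / r) (by norm_num : (1:ℝ) < 2)
  have hl3 : 0 ≤ Real.logb 2 (3 * c) := Real.logb_nonneg (by norm_num) (by linarith)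
  refine ⟨|Real.logb 2 (2 * (2 * (1 / (|a| * r)) + 1))| + δ * Real.logb 2 (3 * c), by positivity, N, ?_⟩
  intro n hn Ω _ p X s1 hp hX hs hF
  have h2n : (1:ℝ) ≤ 2 ^ n := one_le_pow₀ (by norm_num)
  have h1 : 1 ≤ r * 2 ^ n := by
    have : (2:ℝ) ^ N ≤ 2 ^ n := pow_le_pow_right₀ (by norm_num) hn
    have h3 : 1 / r ≤ 2 ^ n := by linarith
    rw [div_le_iff₀ hr0] at h3
    linarith
  have hP : prE p (fun ω => |(X ω : ℝ)| < r * 2 ^ n) ≤ δ := by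
    refine (prE_mono hp ?_).trans ((hF 0 (r * 2 ^ n) h1).trans ?_)
    · intro ω _ h; rw [sub_zero]; exact h.le
    · rw [mul_div_cancel_right₀ _ (by positivity)]
      have : r ^ s1 ≤ r ^ σ := Real.rpow_le_rpow_of_exponent_ge hr0 hr1 hs
      nlinarith
  have h3 := sq_loss hp ha hc hr0 hX hP
  have h4 := le_abs_self (Real.logb 2 (2 * (2 * (1 / (|a| * r)) + 1)))
  have h5 : Real.logb 2 (2 * (c * 2 ^ n) + 1) ≤ n + Real.logb 2 (3 * c) := by
    have : Real.logb 2 (3 * c * 2 ^ n) = n + Real.logb 2 (3 * c) := by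
      rw [Real.logb_mul (by positivity) (by positivity), Real.logb_pow, Real.logb_self_eq_one (by norm_num)]
      ring
    rw [← this]
    apply Real.logb_le_logb_of_le (by norm_num) (by positivity)
    nlinarith
  have h6 := mul_le_mul_of_nonneg_left h5 hδ.le
  linarith
end sqr
end EntT

namespace EntT
open Finset

section st
variable {Ω : Type} [Fintype Ω] {p : Ω → ℝ} {X Y : Ω → ℤ} {n : ℕ} {C c s s1 s2 E : ℝ}

lemma prelim (hp : IsPr p) (hc : 1 ≤ c) (hC : 1 ≤ C) (hX : ∀ ω, p ω ≠ 0 → |(X ω : ℝ)| ≤ c * 2 ^ n)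
    (hY : ∀ ω, p ω ≠ 0 → |(Y ω : ℝ)| ≤ c * 2 ^ n)
    (hJF : JF p X Y n C s1 s2) (h10 : 0 ≤ s1) (h11 : s1 ≤ 1) (h20 : 0 ≤ s2) (h21 : s2 ≤ 1)
    (h12 : 2 * s ≤ s1 + s2) (hG : Real.logb 2 (C * c) ≤ E)
    (hXY : H p X + H p Y ≤ 2 * (s * n + E)) (hS : H p (fun ω => X ω + Y ω) ≤ s * n + E) :
    s * n - 5 * E ≤ s1 * n ∧ s * n - 5 * E ≤ s2 * n := by
  have hn : (0:ℝ) ≤ n := by positivity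
  have G0 : 0 ≤ Real.logb 2 C := Real.logb_nonneg (by norm_num) hC
  have GG : Real.logb 2 C ≤ Real.logb 2 (C * c) :=
    Real.logb_le_logb_of_le (by norm_num) (by linarith) (by nlinarith)
  set G := Real.logb 2 C with hGd
  set G' := Real.logb 2 (C * c) with hGd'
  have hE : 0 ≤ E := by linarith
  have hJ1 := hJF.H_ge hp hC
  have frX := hJF.fr hp hC hc h20 h21 hY
  have frY := (hJF.symm hp).fr hp hC hc h10 h11 hX
  have hJ2 : 2 * s * n ≤ (s1 + s2) * n := mul_le_mul_of_nonneg_right h12 hn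
  have hCc : 0 < C * c := by nlinarith
  have lX := H_ge_fr hp frX hCc X 1 le_rfl (by intro ω ω' _ _ h; rw [h]; simp)
  have lY := H_ge_fr hp frY hCc Y 1 le_rfl (by intro ω ω' _ _ h; rw [h]; simp)
  simp only [Real.logb_one, sub_zero] at lX lY
  have u1 : H p (fun ω => (X ω, Y ω)) ≤ H p (fun ω => X ω + Y ω) + H p Y :=
    (H_mono hp (fun ω => (X ω + Y ω, Y ω)) _ (by
      intro ω ω' _ _ h
      simp only [Prod.mk.injEq] at h ⊢
      exact ⟨by linarith [h.1, h.2], h.2⟩)).trans (H_pair_le hp _ _)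
  have u2 : H p (fun ω => (X ω, Y ω)) ≤ H p (fun ω => X ω + Y ω) + H p X :=
    (H_mono hp (fun ω => (X ω + Y ω, X ω)) _ (by
      intro ω ω' _ _ h
      simp only [Prod.mk.injEq] at h ⊢
      exact ⟨h.2, by linarith [h.1, h.2]⟩)).trans (H_pair_le hp _ _)
  constructor <;> linarith
end st

set_option maxHeartbeats 1000000 in
lemma finMain (s : ℝ) (hs : 0 < s) (hs1 : s < 1) : ∃ ε : ℝ, 0 < ε ∧ ∀ a b C c K : ℝ, a ≠ 0 → b ≠ 0 →
    1 ≤ C → 1 ≤ c → ∃ N : ℕ, ∀ n : ℕ, N ≤ n → ∀ (Ω : Type) (_ : Fintype Ω) (p : Ω → ℝ) (X Y : Ω → ℤ)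
    (s1 s2 : ℝ), IsPr p → (∀ t t', p t ≠ 0 → p t' ≠ 0 → X t = X t' → Y t = Y t' → t = t') →
    (∀ ω, p ω ≠ 0 → |(X ω : ℝ)| ≤ c * 2 ^ n) → (∀ ω, p ω ≠ 0 → |(Y ω : ℝ)| ≤ c * 2 ^ n) →
    JF p X Y n C s1 s2 → 0 ≤ s1 → s1 ≤ 1 → 0 ≤ s2 → s2 ≤ 1 → 2 * s ≤ s1 + s2 →
    H p X + H p Y ≤ 2 * (s * n + ε * n) → H p (fun ω => X ω + Y ω) ≤ s * n + ε * n + K →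
    H p (fun ω => sq a n (X ω) + sq b n (Y ω)) ≤ s * n + ε * n + K → False := by
  obtain ⟨η, hη, hmain⟩ := propA s hs hs1
  set ε := min (η / 800) (s / 40) with hε
  have hε0 : 0 < ε := lt_min (by positivity) (by positivity)
  have hε1 : ε ≤ η / 800 := min_le_left _ _
  have hε2 : ε ≤ s / 40 := min_le_right _ _
  refine ⟨ε, hε0, fun a b C c K ha hb hC hc => ?_⟩
  obtain ⟨N1, hN1⟩ := hmain a c ha hc
  have hCc : 1 ≤ C * c := by nlinarith
  obtain ⟨M2, hM2, N2, hN2⟩ := sq_loss' a c (C * c) (s / 2) ε ha hc hCc (by positivity) hε0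
  obtain ⟨M3, hM3, N3, hN3⟩ := sq_loss' b c (C * c) (s / 2) ε hb hc hCc (by positivity) hε0
  obtain ⟨N4, hN4⟩ := exists_thr (|K| + M2 + M3 + Real.logb 2 (C * c)) ε hε0
  have hG0 : 0 ≤ Real.logb 2 (C * c) := Real.logb_nonneg (by norm_num) hCc
  refine ⟨max (max N1 N2) (max N3 N4), fun n hn Ω _ p X Y s1 s2 hp hinj hX hY hJF h10 h11 h20 h21 h12
    hXY hS hQ => ?_⟩
  have n1 : N1 ≤ n := le_trans (by simp) hn
  have n2 : N2 ≤ n := le_trans (by simp) hn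
  have n3 : N3 ≤ n := le_trans (by simp) hn
  have n4 : N4 ≤ n := le_trans (by simp) hn
  have hbig := hN4 n n4
  have hK := le_abs_self K
  have hK0 := abs_nonneg K
  have hn0 : (0:ℝ) ≤ n := by positivity
  have hnpos : (0:ℝ) < n := by
    rcases hn0.lt_or_eq with h | h
    · exact h
    · rw [← h] at hbig; linarith
  have e1 : ε * n ≤ η / 800 * n := mul_le_mul_of_nonneg_right hε1 hn0
  have e2 : ε * n ≤ s / 40 * n := mul_le_mul_of_nonneg_right hε2 hn0
  have hG : Real.logb 2 (C * c) ≤ 2 * ε * n := by linarith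
  obtain ⟨q1, q2⟩ := prelim (s := s) (E := 2 * ε * n) hp hc hC hX hY hJF h10 h11 h20 h21 h12 hG (by linarith)
    (by linarith)
  have q1' : s / 2 ≤ s1 := by
    apply le_of_mul_le_mul_right _ hnpos
    linarith
  have q2' : s / 2 ≤ s2 := by
    apply le_of_mul_le_mul_right _ hnpos
    linarith
  have lA := hN2 n n2 Ω _ p X s1 hp hX q1' (hJF.fr hp hC hc h20 h21 hY)
  have lB := hN3 n n3 Ω _ p Y s2 hp hY q2' ((hJF.symm hp).fr hp hC hc h10 h11 hX)
  obtain ⟨μ, hμ, hμX, hF, t1, t2, t3, t4⟩ := stage1 (E := 2 * ε * n) hp hinj hs hc hC hX hY hJF h10 h11 h20 h21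
    h12 hG (sq a n) (sq b n) (by linarith) (by linarith) (by linarith) (by linarith) (by linarith)
  refine hN1 n n1 Ω _ μ X hμ hμX ?_ (by linarith) (by linarith) ?_ (by linarith)
  · intro x R hR
    refine (hF x R hR).trans ?_
    apply mul_le_mul_of_nonneg_right _ (by positivity)
    apply Real.rpow_le_rpow_of_exponent_le (by norm_num)
    linarith
  · unfold WW
    linarith
end EntT


namespace EntT
open Finset

section meas
variable {Ω : Type} [MeasurableSpace Ω] {P : Measure Ω} {S R : Type}

/-- finite law of `F` -/
noncomputable def lawF (P : Measure Ω) (F : Ω → S) (T : Finset S) : T → ℝ :=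
  fun t => (P (F ⁻¹' {t.1})).toReal

lemma lawF_sum [IsProbabilityMeasure P] {F : Ω → S} {T : Finset S} (hF : ∀ v, MeasurableSet (F ⁻¹' {v}))
    (hT : ∀ ω, F ω ∈ T) (Q : S → Prop) [DecidablePred Q] :
    ∑ t : T, (if Q t.1 then lawF P F T t else 0) = (P {ω | Q (F ω)}).toReal := by
  classical
  have h1 : {ω | Q (F ω)} = ⋃ t ∈ T.filter Q, F ⁻¹' {t} := by
    ext ω
    simp only [Set.mem_setOf_eq, Finset.mem_filter, Set.mem_iUnion, Set.mem_preimage, Set.mem_singleton_iff,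
      exists_prop]
    constructor
    · intro h; exact ⟨F ω, ⟨hT ω, h⟩, rfl⟩
    · rintro ⟨t, ⟨_, h⟩, rfl⟩; exact h
  rw [h1, measure_biUnion_finset, ENNReal.toReal_sum (fun _ _ => measure_ne_top _ _), Finset.sum_filter]
  · rw [← Finset.sum_coe_sort T (fun t => if Q t then (P (F ⁻¹' {t})).toReal else 0)]
    rfl
  · intro x _ y _ hxy
    exact Disjoint.preimage _ (by simpa using hxy)
  · intro t _; exact hF t

lemma lawF_pr [IsProbabilityMeasure P] {F : Ω → S} {T : Finset S} (hF : ∀ v, MeasurableSet (F ⁻¹' {v}))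
    (hT : ∀ ω, F ω ∈ T) : IsPr (lawF P F T) := by
  constructor
  · intro t; exact ENNReal.toReal_nonneg
  · have := lawF_sum (P := P) hF hT (fun _ => True)
    simpa using this

lemma lawF_pr_eq [IsProbabilityMeasure P] {F : Ω → S} {T : Finset S} (hF : ∀ v, MeasurableSet (F ⁻¹' {v}))
    (hT : ∀ ω, F ω ∈ T) (G : S → R) (v : R) :
    pr (lawF P F T) (fun t => G t.1) v = (P {ω | G (F ω) = v}).toReal := by
  classical
  have := lawF_sum (P := P) hF hT (fun u => G u = v)
  rw [← this]
  unfold pr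
  apply Finset.sum_congr rfl
  intro t _
  congr 1

lemma lawF_prE [IsProbabilityMeasure P] {F : Ω → S} {T : Finset S} (hF : ∀ v, MeasurableSet (F ⁻¹' {v}))
    (hT : ∀ ω, F ω ∈ T) (G : S → Prop) :
    prE (lawF P F T) (fun t => G t.1) = (P {ω | G (F ω)}).toReal := by
  unfold prE
  rw [lawF_pr_eq hF hT]
  simp

lemma lawF_ne {F : Ω → S} {T : Finset S} {t : T} (h : lawF P F T t ≠ 0) : ∃ ω, F ω = t.1 := by
  by_contra hcon
  push Not at hcon
  apply h
  unfold lawF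
  have : F ⁻¹' {t.1} = ∅ := by
    ext ω; simp [hcon ω]
  rw [this]; simp

lemma entOf_eq [IsProbabilityMeasure P] {F : Ω → S} {T : Finset S} (hF : ∀ v, MeasurableSet (F ⁻¹' {v}))
    (hT : ∀ ω, F ω ∈ T) (G : S → R) :
    entOf P (fun ω => G (F ω)) = H (lawF P F T) (fun t => G t.1) := by
  classical
  unfold entOf H
  have h1 := sum_comp (p := lawF P F T) (fun t : T => G t.1) (T.image G)
    (fun t _ => Finset.mem_image_of_mem _ t.2) (fun v => -Real.logb 2 (pr (lawF P F T) (fun t => G t.1) v))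
  rw [h1, tsum_eq_sum (s := T.image G)]
  · apply Finset.sum_congr rfl
    intro v _
    rw [lawF_pr_eq hF hT G v]
    have : (fun ω => G (F ω)) ⁻¹' {v} = {ω | G (F ω) = v} := rfl
    rw [this]; ring
  · intro v hv
    have : (fun ω => G (F ω)) ⁻¹' {v} = ∅ := by
      ext ω
      simp only [Set.mem_preimage, Set.mem_singleton_iff, Set.mem_empty_iff_false, iff_false]
      rintro rfl
      exact hv (Finset.mem_image_of_mem _ (hT ω))
    rw [this]; simp

/-- integer part at scale `n` -/
noncomputable def fl (n : ℕ) (Z : Ω → ℝ) : Ω → ℤ := fun ω => ⌊(2:ℝ) ^ n * Z ω⌋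

lemma fl_meas (n : ℕ) {Z : Ω → ℝ} (hZ : Measurable Z) : Measurable (fl n Z) :=
  Int.measurable_floor.comp (measurable_const.mul hZ)

lemma fin_range_of_bdd {U : Ω → ℤ} {B : ℝ} (h : ∀ ω, |(U ω : ℝ)| ≤ B) : ∃ T : Finset ℤ, ∀ ω, U ω ∈ T :=
  ⟨zball 0 B, fun ω => mem_zball (by simpa using h ω)⟩

lemma fl_close (n : ℕ) (Z : Ω → ℝ) (ω : Ω) : (fl n Z ω : ℝ) ≤ 2 ^ n * Z ω ∧ 2 ^ n * Z ω < fl n Z ω + 1 :=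
  ⟨Int.floor_le _, Int.lt_floor_add_one _⟩

lemma fl_bdd (n : ℕ) {Z : Ω → ℝ} {B : ℝ} (h : ∀ ω, |Z ω| ≤ B) (ω : Ω) : |(fl n Z ω : ℝ)| ≤ (B + 1) * 2 ^ n := by
  obtain ⟨h1, h2⟩ := fl_close n Z ω
  have h2n : (1:ℝ) ≤ 2 ^ n := one_le_pow₀ (by norm_num)
  have h3 := abs_le.mp (h ω)
  have h4 : 2 ^ n * Z ω ≤ 2 ^ n * B := mul_le_mul_of_nonneg_left h3.2 (by positivity)
  have h5 : 2 ^ n * (-B) ≤ 2 ^ n * Z ω := mul_le_mul_of_nonneg_left h3.1 (by positivity)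
  rw [abs_le]
  constructor <;> nlinarith

lemma Hn_eq [IsProbabilityMeasure P] (n : ℕ) {Z : Ω → ℝ} (hZ : Measurable Z) {B : ℝ} (h : ∀ ω, |Z ω| ≤ B) :
    Hn P n Z = entOf P (fl n Z) := by
  obtain ⟨T, hT⟩ := fin_range_of_bdd (fl_bdd n h)
  have hF : ∀ v, MeasurableSet (fl n Z ⁻¹' {v}) := fun v => fl_meas n hZ (measurableSet_singleton v)
  have h1 := entOf_eq (P := P) hF hT (fun z : ℤ => (z : ℝ) / (2:ℝ) ^ n)
  have h2 := entOf_eq (P := P) hF hT (fun z : ℤ => z)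
  have h3 : Hn P n Z = entOf P (fun ω => (fl n Z ω : ℝ) / (2:ℝ) ^ n) := rfl
  rw [h3, h1]
  have h4 : entOf P (fl n Z) = H (lawF P (fl n Z) T) (fun t => t.1) := h2
  rw [h4]
  apply H_congr (lawF_pr hF hT)
  intro t t'
  have : ((2:ℝ) ^ n) ≠ 0 := by positivity
  simp only [div_left_inj' this, Int.cast_inj]

lemma entOf_close [IsProbabilityMeasure P] {U V : Ω → ℤ} (hU : Measurable U) (hV : Measurable V) {B B' D : ℝ}
    (bU : ∀ ω, |(U ω : ℝ)| ≤ B) (bV : ∀ ω, |(V ω : ℝ)| ≤ B') (hD : 0 ≤ D)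
    (h : ∀ ω, |(U ω : ℝ) - V ω| ≤ D) : entOf P U ≤ entOf P V + Real.logb 2 (2 * (2 * D) + 1) := by
  obtain ⟨T1, hT1⟩ := fin_range_of_bdd bU
  obtain ⟨T2, hT2⟩ := fin_range_of_bdd bV
  let F : Ω → ℤ × ℤ := fun ω => (U ω, V ω)
  have hF : ∀ v, MeasurableSet (F ⁻¹' {v}) := fun v => (hU.prodMk hV) (measurableSet_singleton v)
  have hT : ∀ ω, F ω ∈ T1 ×ˢ T2 := fun ω => Finset.mem_product.mpr ⟨hT1 ω, hT2 ω⟩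
  have h1 : entOf P U = _ := entOf_eq (P := P) hF hT (fun z => z.1)
  have h2 : entOf P V = _ := entOf_eq (P := P) hF hT (fun z => z.2)
  rw [h1, h2]
  apply H_int_le (lawF_pr hF hT) _ _ _ (by linarith)
  intro t t' ht ht' heq
  obtain ⟨ω, hω⟩ := lawF_ne ht
  obtain ⟨ω', hω'⟩ := lawF_ne ht'
  rw [← hω, ← hω'] at heq ⊢
  have e1 := abs_le.mp (h ω)
  have e2 := abs_le.mp (h ω')
  simp only [F] at heq ⊢
  rw [heq] at e1
  rw [abs_le]
  constructor <;> linarith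
end meas
end EntT

namespace EntT
open Finset

lemma sq_near {a c N u : ℝ} {I : ℤ} (hN : 1 ≤ N) (hc : 0 ≤ c) (h1 : (I:ℝ) ≤ u) (h2 : u < I + 1) (hu : |u| ≤ c * N) :
    |a * (I:ℝ) ^ 2 / N - a * u ^ 2 / N| ≤ |a| * (2 * c + 1) := by
  have e : a * (I:ℝ) ^ 2 / N - a * u ^ 2 / N = a * (((I:ℝ) - u) * (I + u) / N) := by field_simp; ring
  rw [e, abs_mul]
  apply mul_le_mul_of_nonneg_left _ (abs_nonneg _)
  rw [abs_div, abs_mul, abs_of_pos (by linarith : 0 < N), div_le_iff₀ (by linarith)]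
  have h3 : |(I:ℝ) - u| ≤ 1 := abs_le.mpr ⟨by linarith, by linarith⟩
  have h4 := abs_le.mp hu
  have h5 : |(I:ℝ) + u| ≤ (2 * c + 1) * N := abs_le.mpr ⟨by nlinarith, by nlinarith⟩
  calc |(I:ℝ) - u| * |(I:ℝ) + u| ≤ 1 * ((2 * c + 1) * N) := by gcongr
    _ = _ := by ring

lemma three_pow {x t : ℝ} (hx : 0 ≤ x) (ht0 : 0 ≤ t) (ht : t ≤ 1) : (3 * x) ^ t ≤ 3 * x ^ t := by
  rw [Real.mul_rpow (by norm_num) hx]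
  have : (3:ℝ) ^ t ≤ 3 ^ (1:ℝ) := Real.rpow_le_rpow_of_exponent_le (by norm_num) ht
  rw [Real.rpow_one] at this
  exact mul_le_mul_of_nonneg_right this (by positivity)

lemma ball_of_fl {n : ℕ} {I : ℤ} {z x R : ℝ} (h1 : (I:ℝ) ≤ 2 ^ n * z) (h2 : 2 ^ n * z < I + 1) (hR : 1 ≤ R)
    (h : |(I:ℝ) - x| ≤ R) : z ∈ Metric.ball (x / 2 ^ n) (3 * (R / 2 ^ n)) := by
  have hp : (0:ℝ) < 2 ^ n := by positivity
  rw [Metric.mem_ball, Real.dist_eq]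
  have e : z - x / 2 ^ n = (2 ^ n * z - x) / 2 ^ n := by field_simp
  rw [e, abs_div, abs_of_pos hp, ← mul_div_assoc, div_lt_div_iff_of_pos_right hp]
  have := abs_le.mp h
  rw [abs_lt]; constructor <;> linarith

lemma fin_reduce (s ε : ℝ)
    (hfin : ∀ a b C c K : ℝ, a ≠ 0 → b ≠ 0 → 1 ≤ C → 1 ≤ c → ∃ N : ℕ, ∀ n, N ≤ n →
      ∀ (Ω : Type) (_ : Fintype Ω) (p : Ω → ℝ) (X Y : Ω → ℤ) (s1 s2 : ℝ), IsPr p →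
      (∀ t t', p t ≠ 0 → p t' ≠ 0 → X t = X t' → Y t = Y t' → t = t') →
      (∀ ω, p ω ≠ 0 → |(X ω : ℝ)| ≤ c * 2 ^ n) → (∀ ω, p ω ≠ 0 → |(Y ω : ℝ)| ≤ c * 2 ^ n) →
      JF p X Y n C s1 s2 → 0 ≤ s1 → s1 ≤ 1 → 0 ≤ s2 → s2 ≤ 1 → 2 * s ≤ s1 + s2 →
      H p X + H p Y ≤ 2 * (s * n + ε * n) → H p (fun ω => X ω + Y ω) ≤ s * n + ε * n + K →
      H p (fun ω => sq a n (X ω) + sq b n (Y ω)) ≤ s * n + ε * n + K → False)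
    (a b : ℝ) (ha : a ≠ 0) (hb : b ≠ 0) (C : ℝ) (hC : 1 ≤ C) (c : ℝ) (hc : 0 < c) :
    ∃ N : ℕ, ∀ (Ω : Type) (mΩ : MeasurableSpace Ω) (P : Measure Ω), IsProbabilityMeasure P →
            ∀ (X Y : Ω → ℝ), Measurable X → Measurable Y →
              ∀ (s₁ s₂ : ℝ), 0 ≤ s₁ → s₁ ≤ 1 → 0 ≤ s₂ → s₂ ≤ 1 → 2 * s ≤ s₁ + s₂ →
                JointlyFrostman P X Y s₁ s₂ C →
                (∀ ω, X ω ∈ Set.Icc (-c) c ∧ Y ω ∈ Set.Icc (-c) c) →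
                ∀ n : ℕ, N < n →
                  (n : ℝ) * (s + ε) ≤
                    max (max ((Hn P n X + Hn P n Y) / 2) (Hn P n (fun ω => X ω + Y ω)))
                      (Hn P n (fun ω => a * X ω ^ 2 + b * Y ω ^ 2)) := by
  set D : ℝ := (|a| + |b|) * (2 * c + 1) + 3 with hD
  have hD0 : 0 ≤ D := by positivity
  have hK : 0 ≤ Real.logb 2 (2 * (2 * D) + 1) := Real.logb_nonneg (by norm_num) (by linarith)
  obtain ⟨N, hN⟩ := hfin a b (9 * C) (c + 1) (Real.logb 2 (2 * (2 * D) + 1)) ha hb (by linarith) (by linarith)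
  refine ⟨N, ?_⟩
  intro Ω mΩ P hP X Y hX hY s1 s2 h10 h11 h20 h21 hss hJ hXY n hn
  by_contra hcon
  rw [not_le, max_lt_iff, max_lt_iff] at hcon
  obtain ⟨⟨hc1, hc2⟩, hc3⟩ := hcon
  have bX : ∀ ω, |X ω| ≤ c := fun ω => abs_le.mpr (hXY ω).1
  have bY : ∀ ω, |Y ω| ≤ c := fun ω => abs_le.mpr (hXY ω).2
  have bS : ∀ ω, |X ω + Y ω| ≤ c + c := fun ω => (abs_add_le _ _).trans (add_le_add (bX ω) (bY ω))
  have bQ : ∀ ω, |a * X ω ^ 2 + b * Y ω ^ 2| ≤ |a| * c ^ 2 + |b| * c ^ 2 := by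
    intro ω
    refine (abs_add_le _ _).trans ?_
    rw [abs_mul, abs_mul, abs_pow, abs_pow]
    have := bX ω; have := bY ω
    gcongr
  have mS : Measurable (fun ω => X ω + Y ω) := hX.add hY
  have mQ : Measurable (fun ω => a * X ω ^ 2 + b * Y ω ^ 2) :=
    ((hX.pow_const 2).const_mul a).add ((hY.pow_const 2).const_mul b)
  rw [Hn_eq n hX bX, Hn_eq n hY bY] at hc1
  rw [Hn_eq n mS bS] at hc2
  rw [Hn_eq n mQ bQ] at hc3
  have hp : (1:ℝ) ≤ 2 ^ n := one_le_pow₀ (by norm_num)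
  have gX := fl_bdd n bX
  have gY := fl_bdd n bY
  have kX := fl_close n X
  have kY := fl_close n Y
  -- comparisons
  have cS : ∀ ω, |((fl n X ω + fl n Y ω : ℤ) : ℝ) - fl n (fun ω => X ω + Y ω) ω| ≤ D := by
    intro ω
    obtain ⟨x1, x2⟩ := kX ω
    obtain ⟨y1, y2⟩ := kY ω
    obtain ⟨z1, z2⟩ := fl_close n (fun ω => X ω + Y ω) ω
    have hD3 : 3 ≤ D := by rw [hD]; have : 0 ≤ (|a| + |b|) * (2 * c + 1) := by positivity
                           linarith
    push_cast
    simp only [mul_add] at z1 z2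
    rw [abs_le]; constructor <;> linarith
  have cQ : ∀ ω, |((sq a n (fl n X ω) + sq b n (fl n Y ω) : ℤ) : ℝ)
      - fl n (fun ω => a * X ω ^ 2 + b * Y ω ^ 2) ω| ≤ D := by
    intro ω
    obtain ⟨x1, x2⟩ := kX ω
    obtain ⟨y1, y2⟩ := kY ω
    obtain ⟨z1, z2⟩ := fl_close n (fun ω => a * X ω ^ 2 + b * Y ω ^ 2) ω
    have ux : |2 ^ n * X ω| ≤ c * 2 ^ n := by
      rw [abs_mul, abs_of_pos (by positivity : (0:ℝ) < 2 ^ n), mul_comm]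
      exact mul_le_mul_of_nonneg_right (bX ω) (by positivity)
    have uy : |2 ^ n * Y ω| ≤ c * 2 ^ n := by
      rw [abs_mul, abs_of_pos (by positivity : (0:ℝ) < 2 ^ n), mul_comm]
      exact mul_le_mul_of_nonneg_right (bY ω) (by positivity)
    have nx := abs_le.mp (sq_near (a := a) hp hc.le x1 x2 ux)
    have ny := abs_le.mp (sq_near (a := b) hp hc.le y1 y2 uy)
    obtain ⟨p1, p2⟩ := sq_close a n (fl n X ω)
    obtain ⟨q1, q2⟩ := sq_close b n (fl n Y ω)
    have e : 2 ^ n * (a * X ω ^ 2 + b * Y ω ^ 2) = a * (2 ^ n * X ω) ^ 2 / 2 ^ n + b * (2 ^ n * Y ω) ^ 2 / 2 ^ n := by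
      field_simp
    simp only [e] at z1 z2
    push_cast
    have hD' : D = |a| * (2 * c + 1) + |b| * (2 * c + 1) + 3 := by rw [hD]; ring
    rw [abs_le, hD']; constructor <;> linarith [nx.1, nx.2, ny.1, ny.2]
  have mX := fl_meas n hX
  have mY := fl_meas n hY
  have mU : Measurable (fun ω => fl n X ω + fl n Y ω) := mX.add mY
  have mV : Measurable (fun ω => sq a n (fl n X ω) + sq b n (fl n Y ω)) :=
    ((measurable_of_countable (sq a n)).comp mX).add ((measurable_of_countable (sq b n)).comp mY)
  have near_bdd : ∀ (U V : Ω → ℤ) (B : ℝ), (∀ ω, |(U ω : ℝ) - V ω| ≤ D) → (∀ ω, |(V ω : ℝ)| ≤ B) →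
      ∀ ω, |(U ω : ℝ)| ≤ D + B := by
    intro U V B h1 h2 ω
    have := abs_add_le ((U ω : ℝ) - V ω) (V ω)
    rw [sub_add_cancel] at this
    linarith [h1 ω, h2 ω]
  have hS := entOf_close (P := P) mU (fl_meas n mS) (near_bdd _ _ _ cS (fl_bdd n bS)) (fl_bdd n bS) hD0 cS
  have hQ := entOf_close (P := P) mV (fl_meas n mQ) (near_bdd _ _ _ cQ (fl_bdd n bQ)) (fl_bdd n bQ) hD0 cQ
  -- finite model
  obtain ⟨T1, hT1⟩ := fin_range_of_bdd gX
  obtain ⟨T2, hT2⟩ := fin_range_of_bdd gY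
  let F : Ω → ℤ × ℤ := fun ω => (fl n X ω, fl n Y ω)
  have hF : ∀ v, MeasurableSet (F ⁻¹' {v}) := fun v => (mX.prodMk mY) (measurableSet_singleton v)
  have hT : ∀ ω, F ω ∈ T1 ×ˢ T2 := fun ω => Finset.mem_product.mpr ⟨hT1 ω, hT2 ω⟩
  have e1 : entOf P (fl n X) = _ := entOf_eq (P := P) hF hT (fun z => z.1)
  have e2 : entOf P (fl n Y) = _ := entOf_eq (P := P) hF hT (fun z => z.2)
  have e3 : entOf P (fun ω => fl n X ω + fl n Y ω) = _ := entOf_eq (P := P) hF hT (fun z => z.1 + z.2)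
  have e4 : entOf P (fun ω => sq a n (fl n X ω) + sq b n (fl n Y ω)) = _ :=
    entOf_eq (P := P) hF hT (fun z => sq a n z.1 + sq b n z.2)
  refine hN n hn.le _ inferInstance (lawF P F (T1 ×ˢ T2)) (fun t => t.1.1) (fun t => t.1.2) s1 s2
    (lawF_pr hF hT) ?_ ?_ ?_ ?_ h10 h11 h20 h21 hss ?_ ?_ ?_
  · intro t t' _ _ h h'
    exact Subtype.ext (Prod.ext h h')
  · intro t ht
    obtain ⟨ω, hω⟩ := lawF_ne ht
    rw [← hω]; exact gX ω
  · intro t ht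
    obtain ⟨ω, hω⟩ := lawF_ne ht
    rw [← hω]; exact gY ω
  · intro x y R R' hR hR'
    have := lawF_prE (P := P) hF hT (fun z : ℤ × ℤ => |(z.1:ℝ) - x| ≤ R ∧ |(z.2:ℝ) - y| ≤ R')
    refine this.le.trans ?_
    have hsub : {ω | |((F ω).1:ℝ) - x| ≤ R ∧ |((F ω).2:ℝ) - y| ≤ R'} ⊆
        X ⁻¹' Metric.ball (x / 2 ^ n) (3 * (R / 2 ^ n)) ∩ Y ⁻¹' Metric.ball (y / 2 ^ n) (3 * (R' / 2 ^ n)) := by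
      rintro ω ⟨w1, w2⟩
      exact ⟨ball_of_fl (kX ω).1 (kX ω).2 hR w1, ball_of_fl (kY ω).1 (kY ω).2 hR' w2⟩
    have hm := ENNReal.toReal_mono (measure_ne_top P _) (measure_mono (μ := P) hsub)
    have hj := hJ (x / 2 ^ n) (y / 2 ^ n) (3 * (R / 2 ^ n)) (3 * (R' / 2 ^ n)) (by positivity) (by positivity)
    refine hm.trans (hj.trans ?_)
    have t1 := three_pow (x := R / 2 ^ n) (by positivity) h10 h11
    have t2 := three_pow (x := R' / 2 ^ n) (by positivity) h20 h21
    calc C * (3 * (R / 2 ^ n)) ^ s1 * (3 * (R' / 2 ^ n)) ^ s2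
        ≤ C * (3 * (R / 2 ^ n) ^ s1) * (3 * (R' / 2 ^ n) ^ s2) := by gcongr
      _ = _ := by ring
  · rw [← e1, ← e2]; linarith
  · rw [← e3]; linarith
  · rw [← e4]; linarith
end EntT

theorem jointly_frostman_entropy (s : ℝ) (hs0 : 0 < s) (hs1 : s < 1) :
    ∃ ε : ℝ, 0 < ε ∧
      ∀ (a b : ℝ), a ≠ 0 → b ≠ 0 → ∀ C : ℝ, 1 ≤ C → ∀ c : ℝ, 0 < c →
        ∃ N : ℕ,
          ∀ (Ω : Type) (mΩ : MeasurableSpace Ω) (P : Measure Ω),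
            IsProbabilityMeasure P →
            ∀ (X Y : Ω → ℝ), Measurable X → Measurable Y →
              ∀ (s₁ s₂ : ℝ), 0 ≤ s₁ → s₁ ≤ 1 → 0 ≤ s₂ → s₂ ≤ 1 → 2 * s ≤ s₁ + s₂ →
                JointlyFrostman P X Y s₁ s₂ C →
                (∀ ω, X ω ∈ Set.Icc (-c) c ∧ Y ω ∈ Set.Icc (-c) c) →
                ∀ n : ℕ, N < n →
                  (n : ℝ) * (s + ε) ≤
                    max (max ((Hn P n X + Hn P n Y) / 2) (Hn P n (fun ω => X ω + Y ω)))
                      (Hn P n (fun ω => a * X ω ^ 2 + b * Y ω ^ 2)) := by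
  obtain ⟨ε, hε, h⟩ := EntT.finMain s hs0 hs1
  exact ⟨ε, hε, fun a b ha hb C hC c hc => EntT.fin_reduce s ε h a b ha hb C hC c hc⟩
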